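/- arXiv:1905.06459 — 3 statements merged into one kernel-verified Lean document; each statement's English description precedes it below -/
import Mathlib

section
/- Let H be a triple system TS(n, λ) with n ≥ 3 and λ ≥ 1. Then H is eulerian if and only if H is not a TS(3, 1) (equivalently, if and only if (n, λ) ≠ (3, 1)). -/
/-- A closed walk of length `k` in a hypergraph on vertex type `V` whose edges are
finite sets of vertices: an alternating sequence of vertices and edges such that
consecutive vertices are distinct and both lie in the interposed edge, and the
first vertex equals the last. -/
def IsClosedWalk {V : Type} (k : ℕ) (v : Fin (k + 1) → V) (e : Fin k → Finset V) : Prop :=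
  v 0 = v (Fin.last k) ∧
    ∀ i : Fin k, v i.castSucc ≠ v i.succ ∧ v i.castSucc ∈ e i ∧ v i.succ ∈ e i

/-- The multiset of edges traversed by a walk (with multiplicity). -/
def walkEdges {V : Type} {k : ℕ} (e : Fin k → Finset V) : Multiset (Finset V) :=
  Multiset.ofList (List.ofFn e)

/-- A hypergraph, given by its edge multiset `E` over vertex type `V`, is eulerian if it
admits a closed walk whose multiset of traversed edges is exactly `E`, i.e. a closed
strict trail traversing every edge exactly once (a trivial walk works iff `E = 0`,
matching the convention that a trivial walk is an Euler tour of an edgeless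
hypergraph). -/
def IsEulerian {V : Type} (E : Multiset (Finset V)) : Prop :=
  ∃ (k : ℕ) (v : Fin (k + 1) → V) (e : Fin k → Finset V),
    IsClosedWalk k v e ∧ walkEdges e = E

/-- A triple system `TS(n, λ)` on vertex type `V` (of order `n = |V|`): a nonempty
3-uniform edge multiset in which every pair of distinct vertices lies together in
exactly `lam` edges (counted with multiplicity). -/
def IsTripleSystem {V : Type} [DecidableEq V] (E : Multiset (Finset V)) (lam : ℕ) : Prop :=
  E ≠ 0 ∧ (∀ f ∈ E, f.card = 3) ∧
    ∀ u w : V, u ≠ w → Multiset.card (E.filter fun f => u ∈ f ∧ w ∈ f) = lam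

set_option linter.unusedSectionVars false

namespace TSE
open Classical

variable {V ι : Type} [Fintype V] [Fintype ι]

/-- selected vertex -/
def S (T : ι → Finset V) (d : ι → V) (i : ι) (v : V) : Prop := v ∈ T i ∧ v ≠ d i

/-- edge does not cross Z -/
def ok (T : ι → Finset V) (d : ι → V) (i : ι) (Z : Set V) : Prop :=
  ∀ x y, S T d i x → S T d i y → x ∈ Z → y ∈ Z

noncomputable def dg (T : ι → Finset V) (d : ι → V) (v : V) : ZMod 2 :=
  ∑ i, if S T d i v then 1 else 0

structure Ev (T : ι → Finset V) (d : ι → V) : Prop where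
  val : ∀ i, d i ∈ T i
  even : ∀ v, dg T d v = 0

lemma tri {T : ι → Finset V} (hT : ∀ i, (T i).card = 3) {i : ι} {u w : V} (hu : u ∈ T i)
    (hw : w ∈ T i) (h : u ≠ w) : ∃ t, t ≠ u ∧ t ≠ w ∧ ∀ v, v ∈ T i ↔ v = u ∨ v = w ∨ v = t := by
  obtain ⟨x, y, z, h1, h2, h3, h4⟩ := Finset.card_eq_three.1 (hT i)
  rw [h4] at hu hw ⊢
  simp only [Finset.mem_insert, Finset.mem_singleton] at hu hw ⊢
  rcases hu with rfl | rfl | rfl <;> rcases hw with rfl | rfl | rfl <;> first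
    | exact absurd rfl h
    | exact ⟨x, by grind⟩
    | exact ⟨y, by grind⟩
    | exact ⟨z, by grind⟩

lemma sel2 {T : ι → Finset V} (hT : ∀ i, (T i).card = 3) {d : ι → V} {i : ι} (hd : d i ∈ T i) :
    ∃ p q, p ≠ q ∧ p ≠ d i ∧ q ≠ d i ∧ (∀ v, v ∈ T i ↔ v = d i ∨ v = p ∨ v = q) ∧
      ∀ v, S T d i v ↔ v = p ∨ v = q := by
  have : 1 < (T i).card := by rw [hT]; norm_num
  obtain ⟨p, hp, hpd⟩ := Finset.exists_mem_ne this (d i)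
  obtain ⟨q, h1, h2, h3⟩ := tri hT hd hp hpd.symm
  refine ⟨p, q, h2.symm, hpd, h1, h3, fun v => ?_⟩
  unfold S; grind

/-- other endpoint -/
lemma other {T : ι → Finset V} (hT : ∀ i, (T i).card = 3) {d : ι → V} {i : ι} (hd : d i ∈ T i)
    {x : V} (hx : S T d i x) : ∃ y, y ≠ x ∧ S T d i y ∧ ∀ v, S T d i v ↔ v = x ∨ v = y := by
  obtain ⟨p, q, h1, h2, h3, h4, h5⟩ := sel2 hT hd
  rcases (h5 x).1 hx with rfl | rfl
  · exact ⟨q, by grind⟩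
  · exact ⟨p, by grind⟩

lemma single {T : ι → Finset V} (hT : ∀ i, (T i).card = 3) {d : ι → V} (hd : Ev T d) (W : Set V)
    (i : ι) (h : ∀ j, j ≠ i → ok T d j W) : ok T d i W := by
  have key : ∀ j, ∑ v, (if v ∈ W then (if S T d j v then (1 : ZMod 2) else 0) else 0) =
      if ok T d j W then 0 else 1 := by
    intro j
    obtain ⟨p, q, h1, h2, h3, h4, h5⟩ := sel2 hT (hd.val j)
    have e : ∀ v, (if v ∈ W then (if S T d j v then (1 : ZMod 2) else 0) else 0) =
      (if v = p then (if p ∈ W then 1 else 0) else 0) +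
      (if v = q then (if q ∈ W then 1 else 0) else 0) := by
      intro v
      rw [h5]
      by_cases a : v = p <;> by_cases b : v = q <;> by_cases c : v ∈ W <;> simp_all
    simp only [e, Finset.sum_add_distrib, Finset.sum_ite_eq', Finset.mem_univ, if_true]
    have : ok T d j W ↔ (p ∈ W ↔ q ∈ W) := by
      unfold ok; simp only [h5]; grind
    rw [this]
    by_cases c : p ∈ W <;> by_cases c' : q ∈ W <;> simp [c, c']
    decide
  have tot : ∑ j, (if ok T d j W then (0 : ZMod 2) else 1) = 0 := by
    simp only [← key]
    rw [Finset.sum_comm]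
    apply Finset.sum_eq_zero
    intro v _
    by_cases c : v ∈ W
    · simp only [c, if_true]; exact hd.even v
    · simp [c]
  rw [Finset.sum_eq_single i] at tot
  · by_contra c; simp [c] at tot
  · intro j _ hj; simp [h j hj]
  · simp

lemma deg2 {T : ι → Finset V} (hT : ∀ i, (T i).card = 3) {d : ι → V} (hd : Ev T d) {i : ι} {u : V}
    (h : S T d i u) : ∃ j, j ≠ i ∧ S T d j u := by
  by_contra c
  push Not at c
  have := single hT hd {u} i (by
    intro j hj x y hx hy hxu
    rw [Set.mem_singleton_iff] at hxu; subst hxu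
    exact absurd hx (c j hj))
  obtain ⟨y, h1, h2, _⟩ := other hT (hd.val i) h
  exact h1 (this u y h h2 rfl)

/-- flip -/
noncomputable def fl (d : ι → V) (i : ι) (p q : V) : ι → V :=
  Function.update d i (if d i = p then q else p)

lemma dg_update {T : ι → Finset V} {d : ι → V} {i : ι} {x : V} (hd : d i ∈ T i) (hx : x ∈ T i)
    (v : V) : dg T (Function.update d i x) v =
      dg T d v + (if v = d i then 1 else 0) + (if v = x then 1 else 0) := by
  unfold dg
  rw [← Finset.add_sum_erase _ _ (Finset.mem_univ i), ← Finset.add_sum_erase _ _ (Finset.mem_univ i)]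
  have : ∑ j ∈ Finset.univ.erase i, (if S T (Function.update d i x) j v then (1 : ZMod 2) else 0) =
      ∑ j ∈ Finset.univ.erase i, (if S T d j v then (1 : ZMod 2) else 0) := by
    apply Finset.sum_congr rfl
    intro j hj
    have : j ≠ i := by simpa using hj
    have e : S T (Function.update d i x) j v ↔ S T d j v := by simp [S, this]
    simp only [e]
  rw [this]
  have : (if S T (Function.update d i x) i v then (1 : ZMod 2) else 0) =
      (if S T d i v then (1 : ZMod 2) else 0) + (if v = d i then 1 else 0) + (if v = x then 1 else 0) := by
    have h2 : (1 : ZMod 2) + 1 = 0 := by decide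
    by_cases a : v = d i <;> by_cases b : v = x <;> by_cases c : v ∈ T i <;> simp [S, a, b, c] <;> simp_all
  rw [this]; ring

lemma dg_fl {T : ι → Finset V} {d : ι → V} {i : ι} {p q : V} (hp : p ∈ T i) (hq : q ∈ T i)
    (h : d i = p ∨ d i = q) (v : V) : dg T (fl d i p q) v =
      dg T d v + (if v = p then 1 else 0) + (if v = q then 1 else 0) := by
  unfold fl
  by_cases c : d i = p
  · rw [if_pos c, dg_update (c ▸ hp) hq, c]
  · have c' : d i = q := by tauto
    rw [if_neg c, dg_update (c' ▸ hq) hp, c']; ring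

lemma val_fl {T : ι → Finset V} {d : ι → V} {i : ι} {p q : V} (hp : p ∈ T i) (hq : q ∈ T i)
    (hd : ∀ i, d i ∈ T i) : ∀ j, fl d i p q j ∈ T j := by
  intro j
  unfold fl
  by_cases c : j = i
  · subst c; simp; split_ifs <;> assumption
  · simp [c, hd j]

lemma fl_ne {d : ι → V} {i j : ι} {p q : V} (h : j ≠ i) : fl d i p q j = d j := by
  simp [fl, h]

lemma fl_same {d : ι → V} {i : ι} {p q : V}  : fl d i p q i = if d i = p then q else p := by
  simp [fl]

/-- triangle of flips -/
lemma tri_flip {T : ι → Finset V} {d : ι → V} (hd : Ev T d) {i j k : ι} {p q r : V}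
    (hij : i ≠ j) (hjk : j ≠ k) (hik : i ≠ k)
    (hi : p ∈ T i ∧ q ∈ T i ∧ (d i = p ∨ d i = q))
    (hj : q ∈ T j ∧ r ∈ T j ∧ (d j = q ∨ d j = r))
    (hk : r ∈ T k ∧ p ∈ T k ∧ (d k = r ∨ d k = p)) :
    Ev T (fl (fl (fl d i p q) j q r) k r p) := by
  refine ⟨val_fl hk.1 hk.2.1 (val_fl hj.1 hj.2.1 (val_fl hi.1 hi.2.1 hd.val)), fun v => ?_⟩
  rw [dg_fl hk.1 hk.2.1 (by rw [fl_ne hjk.symm, fl_ne hik.symm]; exact hk.2.2),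
    dg_fl hj.1 hj.2.1 (by rw [fl_ne hij.symm]; exact hj.2.2), dg_fl hi.1 hi.2.1 hi.2.2, hd.even]
  have h2 : ∀ x : ZMod 2, x + x = 0 := by decide
  generalize (if v = p then (1 : ZMod 2) else 0) = a
  generalize (if v = q then (1 : ZMod 2) else 0) = b
  generalize (if v = r then (1 : ZMod 2) else 0) = c
  linear_combination h2 a + h2 b + h2 c

lemma two_flip {T : ι → Finset V} {d : ι → V} (hd : Ev T d) {i j : ι} {p q : V}
    (hij : i ≠ j)
    (hi : p ∈ T i ∧ q ∈ T i ∧ (d i = p ∨ d i = q))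
    (hj : p ∈ T j ∧ q ∈ T j ∧ (d j = p ∨ d j = q)) :
    Ev T (fl (fl d i p q) j p q) := by
  refine ⟨(val_fl hj.1 hj.2.1 (val_fl hi.1 hi.2.1 hd.val)), fun v => ?_⟩
  rw [dg_fl hj.1 hj.2.1 (by rw [fl_ne hij.symm]; exact hj.2.2), dg_fl hi.1 hi.2.1 hi.2.2, hd.even]
  have h2 : ∀ x : ZMod 2, x + x = 0 := by decide
  generalize (if v = p then (1 : ZMod 2) else 0) = a
  generalize (if v = q then (1 : ZMod 2) else 0) = b
  linear_combination h2 a + h2 b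

end TSE

set_option linter.unusedSectionVars false
namespace TSE
open Classical
variable {V ι : Type} [Fintype V] [Fintype ι]

/-- trail -/
def Tr (T : ι → Finset V) (d : ι → V) : V → List ι → V → Prop
  | x, [], y => x = y
  | x, i :: l, y => ∃ z, z ≠ x ∧ S T d i x ∧ S T d i z ∧ Tr T d z l y

lemma Tr.append {T : ι → Finset V} {d : ι → V} : ∀ {l l' : List ι} {x y z : V},
    Tr T d x l y → Tr T d y l' z → Tr T d x (l ++ l') z
  | [], _, _, _, _, h, h' => by cases h; exact h'
  | _ :: _, _, _, _, _, ⟨w, h1, h2, h3, h4⟩, h' => ⟨w, h1, h2, h3, Tr.append h4 h'⟩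

lemma Tr.split {T : ι → Finset V} {d : ι → V} : ∀ {l l' : List ι} {x z : V},
    Tr T d x (l ++ l') z → ∃ y, Tr T d x l y ∧ Tr T d y l' z
  | [], _, x, _, h => ⟨x, rfl, h⟩
  | _ :: _, _, _, _, ⟨w, h1, h2, h3, h4⟩ => by
      obtain ⟨y, h5, h6⟩ := Tr.split h4
      exact ⟨y, ⟨w, h1, h2, h3, h5⟩, h6⟩

lemma Tr.one {T : ι → Finset V} {d : ι → V} {i : ι} {x y : V} (h : y ≠ x) (hx : S T d i x)
    (hy : S T d i y) : Tr T d x [i] y := ⟨y, h, hx, hy, rfl⟩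

lemma Tr.parity {T : ι → Finset V} (hT : ∀ i, (T i).card = 3) {d : ι → V} (hd : ∀ i, d i ∈ T i)
    (v : V) : ∀ {l : List ι} {x y : V}, Tr T d x l y →
    (l.map fun i => if S T d i v then (1 : ZMod 2) else 0).sum =
      (if v = x then 1 else 0) + (if v = y then 1 else 0)
  | [], x, y, h => by
      cases h
      by_cases c : v = x <;> simp [c]
      decide
  | i :: l, x, y, ⟨z, h1, h2, h3, h4⟩ => by
      rw [List.map_cons, List.sum_cons, Tr.parity hT hd v h4]
      obtain ⟨w, h5, h6, h7⟩ := other hT (hd i) h2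
      have : z = w := by grind
      subst this
      have hv := h7 v
      have e2 : (1 : ZMod 2) + 1 = 0 := by decide
      have : (if S T d i v then (1 : ZMod 2) else 0) + (if v = z then 1 else 0) = if v = x then 1 else 0 := by
        by_cases a : v = x <;> by_cases b : v = z <;> simp_all
      rw [← this]; ring

lemma Tr.rotate {T : ι → Finset V} (hT : ∀ i, (T i).card = 3) {d : ι → V} (hd : ∀ i, d i ∈ T i)
    {l : List ι} {x v : V} (h : Tr T d x l x) {k : ι} (hk : k ∈ l) (hv : S T d k v) :
    ∃ l', l'.Perm l ∧ Tr T d v l' v := by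
  obtain ⟨l1, l2, rfl⟩ := List.append_of_mem hk
  obtain ⟨p, h1, z, h2, h3, h4, h5⟩ := Tr.split h
  obtain ⟨w, h5', h6, h7⟩ := other hT (hd k) h3
  have : z = w := by grind
  subst this
  rcases (h7 v).1 hv with rfl | rfl
  · exact ⟨k :: l2 ++ l1, List.perm_append_comm, Tr.append (l := k :: l2) ⟨z, h2, h3, h4, h5⟩ h1⟩
  · refine ⟨(l2 ++ l1) ++ [k], ?_, (h5.append h1).append (Tr.one h2 h3 h4)⟩
    refine (List.perm_append_comm (l₁ := l2 ++ l1) (l₂ := [k])).trans ?_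
    exact List.perm_append_comm (l₁ := k :: l2) (l₂ := l1)

/-- All edges of `J` in the same component. -/
def Conn (T : ι → Finset V) (d : ι → V) (J : Finset ι) : Prop :=
  ∀ Z : Set V, (∀ i, ok T d i Z) → ∀ j ∈ J, ∀ k ∈ J, (∀ v, S T d j v → v ∈ Z) →
    ∀ v, S T d k v → v ∈ Z

theorem euler [Nonempty ι] {T : ι → Finset V} (hT : ∀ i, (T i).card = 3) {d : ι → V} (hd : Ev T d)
    (hc : Conn T d Finset.univ) : ∃ x l, Tr T d x l x ∧ l.Nodup ∧ ∀ i : ι, i ∈ l := by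
  -- longest trail
  have bd : ∀ l : List ι, l.Nodup → l.length ≤ Fintype.card ι := fun l h => h.length_le_card
  let P : ℕ → Prop := fun m => ∃ x l y, Tr T d x l y ∧ l.Nodup ∧ l.length = m
  have hP : ∃ m, P m ∧ ∀ m', P m' → m' ≤ m := by
    have h1 : P 1 := by
      obtain ⟨i⟩ := ‹Nonempty ι›
      obtain ⟨p, q, h1, h2, h3, h4, h5⟩ := sel2 hT (hd.val i)
      exact ⟨p, [i], q, Tr.one h1.symm (by simp [h5]) (by simp [h5]), by simp, rfl⟩
    refine ⟨Nat.findGreatest P (Fintype.card ι), Nat.findGreatest_spec (P := P) ?_ h1, ?_⟩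
    · exact Fintype.card_pos
    · rintro m ⟨x, l, y, a, b, rfl⟩
      exact Nat.le_findGreatest (bd l b) ⟨x, l, y, a, b, rfl⟩
  obtain ⟨m, ⟨x, l, y, htr, hnd, rfl⟩, hmax⟩ := hP
  have hne : l ≠ [] := by
    rintro rfl
    obtain ⟨i⟩ := ‹Nonempty ι›
    obtain ⟨p, q, h1, h2, h3, h4, h5⟩ := sel2 hT (hd.val i)
    have := hmax 1 ⟨p, [i], q, Tr.one h1.symm (by simp [h5]) (by simp [h5]), by simp, rfl⟩
    simp at this
  -- no extension
  have noext : ∀ x' l' y' i, l'.Perm l → Tr T d x' l' y' → i ∉ l → ¬ S T d i y' := by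
    intro x' l' y' i hp ht hi hs
    obtain ⟨w, h5', h6, h7⟩ := other hT (hd.val i) hs
    have := hmax (l' ++ [i]).length ⟨x', l' ++ [i], w, ht.append (Tr.one h5' hs h6), by
      rw [List.nodup_append_comm]; simp
      exact ⟨fun h => hi (hp.mem_iff.1 h), hp.nodup_iff.2 hnd⟩, rfl⟩
    simp [hp.length_eq] at this
  have hxy : x = y := by
    by_contra c
    have h1 := Tr.parity hT hd.val y htr
    have h2 := hd.even y
    unfold dg at h2
    rw [← List.sum_toFinset _ hnd] at h1
    have h3 : ∑ i ∈ l.toFinset, (if S T d i y then (1 : ZMod 2) else 0) =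
      ∑ i, (if S T d i y then (1 : ZMod 2) else 0) := by
      apply Finset.sum_subset (Finset.subset_univ _)
      intro i _ hi
      rw [if_neg]
      exact noext x l y i (List.Perm.refl _) htr (by simpa using hi)
    rw [h3, h2, if_neg (Ne.symm c)] at h1
    simp at h1
  subst hxy
  refine ⟨x, l, htr, hnd, ?_⟩
  by_contra! c
  obtain ⟨i, hi⟩ := c
  obtain ⟨k, hk⟩ := List.exists_mem_of_ne_nil l hne
  let Z : Set V := {v | ∃ k ∈ l, S T d k v}
  have hout : ∀ j, j ∉ l → ∀ v, S T d j v → v ∉ Z := by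
    rintro j hj v hv ⟨k, hk, hkv⟩
    obtain ⟨l', hp, ht⟩ := htr.rotate hT hd.val hk hkv
    exact noext v l' v j hp ht hj hv
  have hZ : ∀ j, ok T d j Z := by
    intro j a b ha hb haZ
    by_cases hj : j ∈ l
    · exact ⟨j, hj, hb⟩
    · exact absurd haZ (hout j hj a ha)
  obtain ⟨p, q, h1, h2, h3, h4, h5⟩ := sel2 hT (hd.val i)
  have hp : S T d i p := by simp [h5]
  exact hout i hi p hp (hc Z hZ k (Finset.mem_univ _) i (Finset.mem_univ _) (fun v hv => ⟨k, hk, hv⟩) p hp)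

lemma Tr.walk {T : ι → Finset V} {d : ι → V} : ∀ {l : List ι} {x y : V}, Tr T d x l y →
    ∃ v : Fin (l.length + 1) → V, v 0 = x ∧ v (Fin.last _) = y ∧
      ∀ i : Fin l.length, v i.castSucc ≠ v i.succ ∧ v i.castSucc ∈ T (l.get i) ∧ v i.succ ∈ T (l.get i)
  | [], x, y, h => ⟨fun _ => x, rfl, h, fun i => i.elim0⟩
  | i :: l, x, y, ⟨z, h1, h2, h3, h4⟩ => by
      obtain ⟨v, hv0, hv1, hv⟩ := Tr.walk h4
      refine ⟨Fin.cons x v, rfl, ?_, ?_⟩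
      · exact hv1
      · intro j
        refine Fin.cases ?_ (fun j => ?_) j
        · refine ⟨?_, h2.1, ?_⟩
          · change x ≠ v 0
            rw [hv0]; exact h1.symm
          · change v 0 ∈ T i
            rw [hv0]; exact h3.1
        · exact hv j

end TSE

set_option linter.unusedSectionVars false
namespace TSE
open Classical
variable {V ι : Type} [Fintype V] [Fintype ι]

lemma three_sets {A B C : Finset ι} {lam : ℕ} (hA : A.card ≤ lam) (hB : B.card ≤ lam)
    (hC : C.card ≤ lam) (hAB : ∀ i ∈ A, ∀ j ∈ B, i = j) (hBC : ∀ i ∈ B, ∀ j ∈ C, i = j)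
    (hAC : ∀ i ∈ A, ∀ j ∈ C, i = j) (h3 : ∀ i, i ∈ A → i ∈ B → i ∈ C → False)
    (h2 : ∀ i, (i ∈ A ∧ i ∈ B) ∨ (i ∈ B ∧ i ∈ C) ∨ (i ∈ A ∧ i ∈ C) → 2 ≤ lam) :
    A.card + B.card + C.card ≤ lam := by
  have aux : ∀ {X Y : Finset ι} {i}, (∀ i ∈ X, ∀ j ∈ Y, i = j) → i ∈ Y → X.card ≤ 1 := by
    intro X Y i h hi
    apply Finset.card_le_one.2
    intro a ha b hb
    rw [h a ha i hi, h b hb i hi]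
  have sy : ∀ {X Y : Finset ι}, (∀ i ∈ X, ∀ j ∈ Y, i = j) → (∀ i ∈ Y, ∀ j ∈ X, i = j) :=
    fun h i hi j hj => (h j hj i hi).symm
  rcases A.eq_empty_or_nonempty with rfl | ⟨a, ha⟩ <;>
  rcases B.eq_empty_or_nonempty with rfl | ⟨b, hb⟩ <;>
  rcases C.eq_empty_or_nonempty with rfl | ⟨c, hc⟩
  · simp
  · simpa using hC
  · simpa using hB
  · have := aux hBC hc; have := aux (sy hBC) hb
    have := h2 b (by have := hBC b hb c hc; subst this; tauto)
    simp; omega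
  · simpa using hA
  · have := aux hAC hc; have := aux (sy hAC) ha
    have := h2 a (by have := hAC a ha c hc; subst this; tauto)
    simp; omega
  · have := aux hAB hb; have := aux (sy hAB) ha
    have := h2 a (by have := hAB a ha b hb; subst this; tauto)
    simp; omega
  · have e := hAB a ha b hb; have e' := hAC a ha c hc
    subst e; subst e'
    exact (h3 a ha hb hc).elim

lemma sum_dg {T : ι → Finset V} (hT : ∀ i, (T i).card = 3) {d : ι → V} (hd : ∀ i, d i ∈ T i) :
    ∑ v, dg T d v = 0 := by
  unfold dg
  rw [Finset.sum_comm]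
  apply Finset.sum_eq_zero
  intro i _
  obtain ⟨p, q, h1, h2, h3, h4, h5⟩ := sel2 hT (hd i)
  have e : ∀ v, (if S T d i v then (1 : ZMod 2) else 0) =
      (if v = p then 1 else 0) + (if v = q then 1 else 0) := by
    intro v
    have := h5 v
    by_cases a : v = p <;> by_cases b : v = q <;> simp_all
  simp only [e, Finset.sum_add_distrib, Finset.sum_ite_eq', Finset.mem_univ, if_true]
  decide

theorem exists_even {T : ι → Finset V} (hT : ∀ i, (T i).card = 3) {lam : ℕ} (hlam : 1 ≤ lam)
    (hL : ∀ u w, u ≠ w → (Finset.univ.filter (fun i => u ∈ T i ∧ w ∈ T i)).card = lam)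
    (hbig : 4 ≤ Fintype.card V ∨ 2 ≤ lam) : ∃ d, Ev T d := by
  have ex0 : ∃ d : ι → V, ∀ i, d i ∈ T i := by
    have : ∀ i, ∃ x, x ∈ T i := fun i => Finset.card_pos.1 (by rw [hT]; norm_num)
    choose d hd using this
    exact ⟨d, hd⟩
  let O : {d : ι → V // ∀ i, d i ∈ T i} → ℕ := fun d => (Finset.univ.filter (fun v => dg T d.1 v ≠ 0)).card
  have : Nonempty {d : ι → V // ∀ i, d i ∈ T i} := ⟨⟨_, ex0.choose_spec⟩⟩
  obtain ⟨⟨d, hd⟩, hmin⟩ : ∃ d, ∀ d', O d ≤ O d' := by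
    have := Function.argmin_le O
    exact ⟨Function.argmin O, fun d' => Function.argmin_le O d'⟩
  refine ⟨d, hd, ?_⟩
  by_contra! c
  obtain ⟨u, hu⟩ := c
  have one : ∀ x : ZMod 2, x ≠ 0 → x = 1 := by decide
  have two : ∀ x : ZMod 2, x + x = 0 := by decide
  obtain ⟨w, hwu, hw⟩ : ∃ w, w ≠ u ∧ dg T d w ≠ 0 := by
    by_contra! c
    have := sum_dg hT hd
    rw [Finset.sum_eq_single u (fun b _ hb => c b hb) (by simp)] at this
    exact hu this
  have star : ∀ d', (∀ i, d' i ∈ T i) → (∀ v, dg T d' v = dg T d v + (if v = u then 1 else 0) +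
      (if v = w then 1 else 0)) → False := by
    intro d' hd' h
    have := hmin ⟨d', hd'⟩
    apply absurd this
    push Not
    apply Finset.card_lt_card
    rw [Finset.ssubset_iff_of_subset]
    · refine ⟨u, by simpa using hu, ?_⟩
      simp [h, one _ hu, hwu.symm, two]
    · intro v hv
      simp only [Finset.mem_filter, Finset.mem_univ, true_and] at hv ⊢
      intro hv0
      rw [h, hv0] at hv
      have a : v ≠ u := by rintro rfl; exact hu hv0
      have b : v ≠ w := by rintro rfl; exact hw hv0
      simp [a, b] at hv
  obtain ⟨i0, hi0⟩ : ∃ i, u ∈ T i ∧ w ∈ T i := by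
    have := hL u w hwu.symm
    have : 0 < (Finset.univ.filter (fun i => u ∈ T i ∧ w ∈ T i)).card := by omega
    obtain ⟨i, hi⟩ := Finset.card_pos.1 this
    exact ⟨i, by simpa using hi⟩
  obtain ⟨x, hxu, hxw, hTx⟩ := tri hT hi0.1 hi0.2 hwu.symm
  have C0 : ∀ i, u ∈ T i → w ∈ T i → d i ≠ u ∧ d i ≠ w := by
    intro i h1 h2
    by_contra c
    exact star (fl d i u w) (val_fl h1 h2 hd) (dg_fl h1 h2 (by tauto))
  have hdx : d i0 = x := by
    have := C0 i0 hi0.1 hi0.2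
    have h := (hTx (d i0)).1 (hd i0)
    tauto
  have mv : ∀ h h', h ∈ T i0 → h' ∈ T i0 → h ≠ h' → ∃ d' : ι → V, (∀ i, d' i ∈ T i) ∧
      (∀ i, i ≠ i0 → d' i = d i) ∧ ∀ v, dg T d' v + (if v = h then 1 else 0) +
        (if v = h' then 1 else 0) = dg T d v + (if v = u then 1 else 0) +
        (if v = w then 1 else 0) := by
    have hx0 : x ∈ T i0 := hdx ▸ hd i0
    have m1 : ∃ d' : ι → V, (∀ i, d' i ∈ T i) ∧
      (∀ i, i ≠ i0 → d' i = d i) ∧ ∀ v, dg T d' v + (if v = u then 1 else 0) +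
        (if v = x then 1 else 0) = dg T d v + (if v = u then 1 else 0) +
        (if v = w then 1 else 0) := by
      refine ⟨fl d i0 x w, val_fl hx0 hi0.2 hd, fun i hi => fl_ne hi, fun v => ?_⟩
      rw [dg_fl hx0 hi0.2 (Or.inl hdx)]
      generalize (if v = x then (1 : ZMod 2) else 0) = a
      linear_combination two a
    have m2 : ∃ d' : ι → V, (∀ i, d' i ∈ T i) ∧
      (∀ i, i ≠ i0 → d' i = d i) ∧ ∀ v, dg T d' v + (if v = w then 1 else 0) +
        (if v = x then 1 else 0) = dg T d v + (if v = u then 1 else 0) +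
        (if v = w then 1 else 0) := by
      refine ⟨fl d i0 x u, val_fl hx0 hi0.1 hd, fun i hi => fl_ne hi, fun v => ?_⟩
      rw [dg_fl hx0 hi0.1 (Or.inl hdx)]
      generalize (if v = x then (1 : ZMod 2) else 0) = a
      linear_combination two a
    have m3 : ∃ d' : ι → V, (∀ i, d' i ∈ T i) ∧
      (∀ i, i ≠ i0 → d' i = d i) ∧ ∀ v, dg T d' v + (if v = u then 1 else 0) +
        (if v = w then 1 else 0) = dg T d v + (if v = u then 1 else 0) +
        (if v = w then 1 else 0) := ⟨d, hd, fun i hi => rfl, fun v => rfl⟩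
    intro h h' h1 h2 hne
    rw [hTx] at h1 h2
    rcases h1 with rfl | rfl | rfl <;> rcases h2 with rfl | rfl | rfl <;> first
      | exact absurd rfl hne
      | exact m1
      | exact m2
      | exact m3
      | (obtain ⟨d', a, b, c⟩ := m1; exact ⟨d', a, b, fun v => by rw [← c v]; ring1⟩)
      | (obtain ⟨d', a, b, c⟩ := m2; exact ⟨d', a, b, fun v => by rw [← c v]; ring1⟩)
      | (obtain ⟨d', a, b, c⟩ := m3; exact ⟨d', a, b, fun v => by rw [← c v]; ring1⟩)
  have C1 : ∀ h h', h ∈ T i0 → h' ∈ T i0 → h ≠ h' → ∀ i, i ≠ i0 → h ∈ T i → h' ∈ T i →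
      d i ≠ h ∧ d i ≠ h' := by
    intro h h' a b hne i hi h1 h2
    obtain ⟨d', e1, e2, e3⟩ := mv h h' a b hne
    by_contra c
    refine star (fl d' i h h') (val_fl h1 h2 e1) fun v => ?_
    rw [dg_fl h1 h2 (by rw [e2 i hi]; tauto), e3]
  have C2 : ∀ h h', h ∈ T i0 → h' ∈ T i0 → h ≠ h' → ∀ y, y ∉ T i0 → ∀ i i', 
      h ∈ T i → y ∈ T i → (d i = h ∨ d i = y) → h' ∈ T i' → y ∈ T i' → (d i' = h' ∨ d i' = y) →
      i = i' := by
    intro h h' a b hne y hy i i' h1 h2 h3 h4 h5 h6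
    by_contra c
    obtain ⟨d', e1, e2, e3⟩ := mv h h' a b hne
    have hi : i ≠ i0 := by rintro rfl; exact hy h2
    have hi' : i' ≠ i0 := by rintro rfl; exact hy h5
    refine star (fl (fl d' i h y) i' h' y) (val_fl h4 h5 (val_fl h1 h2 e1)) fun v => ?_
    rw [dg_fl h4 h5 (by rw [fl_ne (Ne.symm c), e2 i' hi']; tauto),
      dg_fl h1 h2 (by rw [e2 i hi]; tauto), ← e3]
    generalize (if v = y then (1 : ZMod 2) else 0) = a
    linear_combination two a
  have mem2 : ∀ i j p q, i ≠ j → p ≠ q → p ∈ T i → q ∈ T i → p ∈ T j → q ∈ T j → 2 ≤ lam := by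
    intro i j p q hij hpq h1 h2 h3 h4
    rw [← hL p q hpq]
    apply Finset.one_lt_card.2
    exact ⟨i, by simp [h1, h2], j, by simp [h3, h4], hij⟩
  by_cases hn : 4 ≤ Fintype.card V
  swap
  · have hl2 : 2 ≤ lam := by tauto
    have h1 := hL u w hwu.symm
    have : 1 < (Finset.univ.filter (fun i => u ∈ T i ∧ w ∈ T i)).card := by omega
    obtain ⟨i, hi, hne⟩ := Finset.exists_mem_ne this i0
    simp only [Finset.mem_filter, Finset.mem_univ, true_and] at hi
    have hall : ∀ j, T j = Finset.univ := by
      intro j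
      apply Finset.eq_univ_of_card
      have := Finset.card_le_univ (T j)
      have := hT j
      omega
    have a1 := C1 u w hi0.1 hi0.2 hwu.symm i hne hi.1 hi.2
    have a2 := C1 u x hi0.1 (by simp [hall]) hxu.symm i hne hi.1 (by simp [hall])
    have : d i ∈ T i0 := by simp [hall]
    rw [hTx] at this
    tauto
  -- counting
  let Y : Finset V := (T i0)ᶜ
  have hY : 0 < Y.card := by
    have : Y.card = Fintype.card V - (T i0).card := Finset.card_compl _
    rw [hT] at this; omega
  let N : V → V → Finset ι := fun h y =>
    Finset.univ.filter (fun i => (h ∈ T i ∧ y ∈ T i) ∧ (d i = h ∨ d i = y))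
  let H : V → V → Finset ι := fun h y =>
    Finset.univ.filter (fun i => (h ∈ T i ∧ y ∈ T i) ∧ ¬ (d i = h ∨ d i = y))
  have NH : ∀ h y, h ≠ y → (N h y).card + (H h y).card = lam := by
    intro h y hne
    rw [← hL h y hne]
    have := Finset.card_filter_add_card_filter_not (s := Finset.univ.filter (fun i => h ∈ T i ∧ y ∈ T i))
      (fun i => d i = h ∨ d i = y)
    simpa only [Finset.filter_filter] using this
  have I : ∀ h ∈ T i0, ∑ y ∈ Y, (H h y).card ≤ ∑ y ∈ Y, (N h y).card := by
    intro h hh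
    simp only [H, N, Finset.card_filter]
    rw [Finset.sum_comm, Finset.sum_comm (s := Y)]
    apply Finset.sum_le_sum
    intro i _
    rw [← Finset.card_filter, ← Finset.card_filter]
    rcases (Finset.filter (fun y => (h ∈ T i ∧ y ∈ T i) ∧ ¬ (d i = h ∨ d i = y)) Y).eq_empty_or_nonempty with e | ⟨y, hy⟩
    · rw [e]; simp
    · simp only [Finset.mem_filter, Y, Finset.mem_compl] at hy
      obtain ⟨hy0, ⟨hy1, hy2⟩, hy3⟩ := hy
      have hhy : h ≠ y := by rintro rfl; exact hy0 hh
      obtain ⟨t, ht1, ht2, ht3⟩ := tri hT hy1 hy2 hhy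
      have hdt : d i = t := by
        have := (ht3 _).1 (hd i); tauto
      have hii : i ≠ i0 := by rintro rfl; exact hy0 hy2
      have htY : t ∉ T i0 := by
        intro c
        exact (C1 h t hh c ht1.symm i hii hy1 ((ht3 t).2 (by simp))).2 hdt
      calc _ ≤ ({y} : Finset V).card := by
              apply Finset.card_le_card
              intro z hz
              simp only [Finset.mem_filter, Y, Finset.mem_compl] at hz
              have := (ht3 z).1 hz.2.1.2 |> fun h => h
              simp only [Finset.mem_singleton]
              grind
        _ = ({t} : Finset V).card := by simp
        _ ≤ _ := by
              apply Finset.card_le_card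
              intro z hz
              simp only [Finset.mem_singleton] at hz
              subst hz
              simp only [Finset.mem_filter, Y, Finset.mem_compl]
              exact ⟨htY, ⟨hy1, (ht3 z).2 (by simp)⟩, Or.inr hdt⟩
  have hxT : x ∈ T i0 := hdx ▸ hd i0
  have II : ∀ y ∈ Y, (N u y).card + (N w y).card + (N x y).card ≤ lam := by
    intro y hy
    have hy' : y ∉ T i0 := by simpa [Y] using hy
    have le : ∀ h ∈ T i0, (N h y).card ≤ lam := by
      intro h hh
      have : h ≠ y := by rintro rfl; exact hy' hh
      have := NH h y this; omega
    have cc : ∀ h h', h ∈ T i0 → h' ∈ T i0 → h ≠ h' → ∀ i ∈ N h y, ∀ j ∈ N h' y, i = j := by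
      intro h h' a b hne i hi j hj
      simp only [N, Finset.mem_filter, Finset.mem_univ, true_and] at hi hj
      exact C2 h h' a b hne y hy' i j hi.1.1 hi.1.2 hi.2 hj.1.1 hj.1.2 hj.2
    have nn : ∀ i h, i ∈ N h y → h ∈ T i ∧ y ∈ T i ∧ i ≠ i0 := by
      intro i h hi
      simp only [N, Finset.mem_filter, Finset.mem_univ, true_and] at hi
      exact ⟨hi.1.1, hi.1.2, by rintro rfl; exact hy' hi.1.2⟩
    refine three_sets (le u hi0.1) (le w hi0.2) (le x hxT) (cc u w hi0.1 hi0.2 hwu.symm)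
      (cc w x hi0.2 hxT hxw.symm) (cc u x hi0.1 hxT hxu.symm) ?_ ?_
    · intro i h1 h2 h3
      obtain ⟨t, _, _, ht⟩ := tri hT (nn i u h1).1 (nn i w h2).1 hwu.symm
      have a := (ht x).1 (nn i x h3).1
      have b := (ht y).1 (nn i x h3).2.1
      have c : y ≠ u ∧ y ≠ w ∧ y ≠ x := by
        refine ⟨?_, ?_, ?_⟩ <;> rintro rfl <;> tauto
      grind
    · rintro i (⟨h1, h2⟩ | ⟨h1, h2⟩ | ⟨h1, h2⟩)
      · exact mem2 i i0 u w (nn i _ h1).2.2 hwu.symm (nn i _ h1).1 (nn i _ h2).1 hi0.1 hi0.2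
      · exact mem2 i i0 w x (nn i _ h1).2.2 hxw.symm (nn i _ h1).1 (nn i _ h2).1 hi0.2 hxT
      · exact mem2 i i0 u x (nn i _ h1).2.2 hxu.symm (nn i _ h1).1 (nn i _ h2).1 hi0.1 hxT
  have tot : ∀ h ∈ T i0, ∑ y ∈ Y, (N h y).card + ∑ y ∈ Y, (H h y).card = Y.card * lam := by
    intro h hh
    rw [← Finset.sum_add_distrib, ← smul_eq_mul, ← Finset.sum_const]
    apply Finset.sum_congr rfl
    intro y hy
    apply NH
    rintro rfl; simp [Y] at hy; exact hy hh
  have sII := Finset.sum_le_sum II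
  rw [Finset.sum_add_distrib, Finset.sum_add_distrib, Finset.sum_const, smul_eq_mul] at sII
  have := tot u hi0.1; have := tot w hi0.2; have := tot x hxT
  have := I u hi0.1; have := I w hi0.2; have := I x hxT
  have : 0 < Y.card * lam := Nat.mul_pos hY hlam
  omega

end TSE

set_option linter.unusedSectionVars false
namespace TSE
open Classical
variable {V ι : Type} [Fintype V] [Fintype ι]

/-- edge inside a set -/
def In (T : ι → Finset V) (d : ι → V) (A : Set V) (i : ι) : Prop := ∀ v, S T d i v → v ∈ A

structure Atom (T : ι → Finset V) (d : ι → V) (A : Set V) : Prop where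
  closed : ∀ i, ok T d i A
  ne : ∃ i, In T d A i
  conn : ∀ Z : Set V, (∀ i, In T d A i → ok T d i Z) → (∃ x ∈ A, x ∈ Z) → A ⊆ Z

def NC (T : ι → Finset V) (d : ι → V) (A : Set V) (u : V) : Prop :=
  ∀ Z : Set V, (∀ i, In T d A i → ¬ S T d i u → ok T d i Z) → (∃ x ∈ A, x ≠ u ∧ x ∈ Z) →
    ∀ y ∈ A, y ≠ u → y ∈ Z

lemma ok_compl {T : ι → Finset V} {d : ι → V} {i : ι} {Z : Set V} (h : ok T d i Z) :
    ok T d i Zᶜ := by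
  intro x y hx hy hxZ hyZ
  exact hxZ (h y x hy hx hyZ)

lemma Atom.in_of {T : ι → Finset V} {d : ι → V} {A : Set V} (hA : Atom T d A) {i : ι} {x : V}
    (hx : S T d i x) (hxA : x ∈ A) : In T d A i := fun y hy => hA.closed i x y hx hy hxA

lemma exists_atom {T : ι → Finset V} (hT : ∀ i, (T i).card = 3) {d : ι → V}
    (hd : ∀ i, d i ∈ T i) (i0 : ι) : ∃ A, Atom T d A ∧ In T d A i0 := by
  let A : Set V := {v | ∀ Z : Set V, (∀ i, ok T d i Z) → In T d Z i0 → v ∈ Z}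
  have h0 : In T d A i0 := fun v hv Z _ h2 => h2 v hv
  have hcl : ∀ i, ok T d i A := by
    intro i x y hx hy hxA Z h1 h2
    exact h1 i x y hx hy (hxA Z h1 h2)
  have main : ∀ Z : Set V, (∀ i, In T d A i → ok T d i Z) → (∃ x, S T d i0 x ∧ x ∈ Z) → A ⊆ Z := by
    intro Z hZ hx
    obtain ⟨x, hx, hxZ⟩ := hx
    have h1 : ∀ i, ok T d i (Z ∩ A) := by
      intro i a b ha hb hab
      have : In T d A i := fun v hv => hcl i a v ha hv hab.2
      exact ⟨hZ i this a b ha hb hab.1, this b hb⟩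
    have h2 : In T d (Z ∩ A) i0 := fun v hv => ⟨hZ i0 h0 x v hx hv hxZ, h0 v hv⟩
    intro v hv
    exact (hv _ h1 h2).1
  refine ⟨A, ⟨hcl, ⟨i0, h0⟩, ?_⟩, h0⟩
  intro Z hZ hx
  obtain ⟨x, hxA, hxZ⟩ := hx
  by_cases c : ∃ x, S T d i0 x ∧ x ∈ Z
  · exact main Z hZ c
  · exfalso
    obtain ⟨p, q, h1, h2, h3, h4, h5⟩ := sel2 hT (hd i0)
    have := main Zᶜ (fun i hi => ok_compl (hZ i hi)) ⟨p, (h5 p).2 (Or.inl rfl), fun h =>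
      c ⟨p, (h5 p).2 (Or.inl rfl), h⟩⟩
    exact this hxA hxZ

/-- distance function -/
lemma exists_dist {T : ι → Finset V} {d : ι → V} {A : Set V} (hA : Atom T d A) {r : V}
    (hr : r ∈ A) : ∃ D : V → ℕ, D r = 0 ∧
      (∀ x ∈ A, x ≠ r → ∃ y ∈ A, (∃ i, S T d i x ∧ S T d i y) ∧ D y < D x) ∧
      (∀ x ∈ A, ∀ i y, S T d i x → S T d i y → D y ≤ D x + 1) := by
  let G : SimpleGraph V := 
    { Adj := fun x y => x ≠ y ∧ ∃ i, S T d i x ∧ S T d i y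
      symm := ⟨fun x y h => ⟨h.1.symm, h.2.choose, h.2.choose_spec.2, h.2.choose_spec.1⟩⟩
      loopless := ⟨fun x h => h.1 rfl⟩ }
  have reach : ∀ x ∈ A, G.Reachable r x := by
    refine hA.conn {x | G.Reachable r x} ?_ ⟨r, hr, SimpleGraph.Reachable.refl r⟩
    intro i hi x y hx hy hxr
    by_cases c : x = y
    · exact c ▸ hxr
    · exact SimpleGraph.Reachable.trans hxr (SimpleGraph.Adj.reachable ⟨c, i, hx, hy⟩)
  refine ⟨G.dist r, SimpleGraph.dist_self, ?_, ?_⟩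
  · intro x hx hne
    obtain ⟨p, hp⟩ := (reach x hx).symm.exists_walk_length_eq_dist
    cases p with
    | nil => exact absurd rfl hne
    | @cons _ y _ h q =>
      obtain ⟨h1, i, h2, h3⟩ := h
      refine ⟨y, hA.closed i x y h2 h3 hx, ⟨i, h2, h3⟩, ?_⟩
      have := SimpleGraph.dist_le q
      rw [SimpleGraph.Walk.length_cons] at hp
      rw [SimpleGraph.dist_comm (u := r), SimpleGraph.dist_comm (u := r)]
      omega
  · intro x hx i y h2 h3
    by_cases c : x = y
    · subst c; omega
    · obtain ⟨p, hp⟩ := (reach x hx).exists_walk_length_eq_dist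
      have adj : G.Adj x y := ⟨c, i, h2, h3⟩
      have := SimpleGraph.dist_le (p.append (SimpleGraph.Walk.cons adj SimpleGraph.Walk.nil))
      rw [SimpleGraph.Walk.length_append] at this
      simp at this
      omega

lemma nc_crit {T : ι → Finset V} (hT : ∀ i, (T i).card = 3) {d : ι → V} (hd : Ev T d)
    {A : Set V} (hA : Atom T d A) {r q : V} (hr : r ∈ A) (hqr : q ≠ r) (D : V → ℕ)
    (h : ∀ x ∈ A, x ≠ q → x ≠ r → ∃ y ∈ A, y ≠ q ∧ (∃ i, S T d i x ∧ S T d i y) ∧ D y < D x) :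
    NC T d A q := by
  intro Z hZ hx y hy hyq
  have key : ∀ n, ∀ x ∈ A, x ≠ q → D x = n → (x ∈ Z ↔ r ∈ Z) := by
    intro n
    induction n using Nat.strong_induction_on with
    | _ n ih =>
      intro x hx hxq hn
      by_cases c : x = r
      · rw [c]
      · obtain ⟨y, hy, hyq, ⟨i, h1, h2⟩, h3⟩ := h x hx hxq c
        rw [← ih (D y) (by omega) y hy hyq rfl]
        have hxy : x ≠ y := by rintro rfl; omega
        have nq : ¬ S T d i q := by
          intro hq
          obtain ⟨z, _, _, hz⟩ := other hT (hd.val i) h1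
          have a := (hz y).1 h2
          have b := (hz q).1 hq
          grind
        have := hZ i (hA.in_of h1 hx) nq
        exact ⟨this x y h1 h2, this y x h2 h1⟩
  obtain ⟨x, hxA, hxq, hxZ⟩ := hx
  rw [key _ y hy hyq rfl, ← key _ x hxA hxq rfl]
  exact hxZ

lemma exists_far {T : ι → Finset V} (hT : ∀ i, (T i).card = 3) {d : ι → V} (hd : Ev T d)
    {A : Set V} (hA : Atom T d A) {r : V} (hr : r ∈ A) (D : V → ℕ) (h0 : D r = 0)
    (h : ∀ x ∈ A, x ≠ r → ∃ y ∈ A, (∃ i, S T d i x ∧ S T d i y) ∧ D y < D x) :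
    ∃ q ∈ A, q ≠ r ∧ ∀ x ∈ A, D x ≤ D q := by
  obtain ⟨i, hi⟩ := hA.ne
  obtain ⟨a, b, hab, _, _, _, h5⟩ := sel2 hT (hd.val i)
  obtain ⟨q, hq, hqm⟩ := Finset.exists_max_image (Finset.univ.filter (fun x => x ∈ A)) D
    ⟨r, by simpa using hr⟩
  simp only [Finset.mem_filter, Finset.mem_univ, true_and] at hq hqm
  refine ⟨q, hq, ?_, hqm⟩
  rintro rfl
  obtain ⟨x, hx, hxq⟩ : ∃ x ∈ A, x ≠ q := by
    by_cases c : a = q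
    · exact ⟨b, hi b ((h5 b).2 (by simp)), by rw [← c]; exact hab.symm⟩
    · exact ⟨a, hi a ((h5 a).2 (by simp)), c⟩
  obtain ⟨y, _, _, h3⟩ := h x hx hxq
  have := hqm x hx
  omega

lemma Atom.nonempty {T : ι → Finset V} (hT : ∀ i, (T i).card = 3) {d : ι → V} (hd : Ev T d)
    {A : Set V} (hA : Atom T d A) : ∃ r, r ∈ A := by
  obtain ⟨i, hi⟩ := hA.ne
  obtain ⟨a, b, hab, _, _, _, h5⟩ := sel2 hT (hd.val i)
  exact ⟨a, hi a ((h5 a).2 (by simp))⟩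

lemma one_nc {T : ι → Finset V} (hT : ∀ i, (T i).card = 3) {d : ι → V} (hd : Ev T d)
    {A : Set V} (hA : Atom T d A) : ∃ q ∈ A, NC T d A q := by
  obtain ⟨r, hr⟩ := hA.nonempty hT hd
  obtain ⟨D, h0, h1, h2⟩ := exists_dist hA hr
  obtain ⟨q, hq, hqr, hqm⟩ := exists_far hT hd hA hr D h0 h1
  refine ⟨q, hq, nc_crit hT hd hA hr hqr D ?_⟩
  intro x hx hxq hxr
  obtain ⟨y, hy, e, hlt⟩ := h1 x hx hxr
  refine ⟨y, hy, ?_, e, hlt⟩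
  rintro rfl
  have := hqm x hx; omega

lemma three_nc {T : ι → Finset V} (hT : ∀ i, (T i).card = 3) {d : ι → V} (hd : Ev T d)
    (hU : ∀ u w i j, u ≠ w → u ∈ T i → w ∈ T i → u ∈ T j → w ∈ T j → i = j)
    {A : Set V} (hA : Atom T d A) : ∃ x ∈ A, ∃ y ∈ A, ∃ z ∈ A, x ≠ y ∧ x ≠ z ∧ y ≠ z ∧
      NC T d A x ∧ NC T d A y ∧ NC T d A z := by
  obtain ⟨r, hr, hrN⟩ := one_nc hT hd hA
  obtain ⟨D, h0, h1, h2⟩ := exists_dist hA hr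
  obtain ⟨q, hq, hqr, hqm⟩ := exists_far hT hd hA hr D h0 h1
  have hfar : ∀ q ∈ A, q ≠ r → (∀ x ∈ A, D x ≤ D q) → NC T d A q := by
    intro q hq hqr hqm
    refine nc_crit hT hd hA hr hqr D ?_
    intro x hx hxq hxr
    obtain ⟨y, hy, e, hlt⟩ := h1 x hx hxr
    refine ⟨y, hy, ?_, e, hlt⟩
    rintro rfl
    have := hqm x hx; omega
  have hDq : 0 < D q := by
    obtain ⟨y, _, _, h⟩ := h1 q hq hqr
    omega
  by_cases c : ∃ z ∈ A, z ≠ q ∧ D z = D q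
  · obtain ⟨z, hz, hzq, e⟩ := c
    have hzr : z ≠ r := by rintro rfl; omega
    exact ⟨r, hr, q, hq, z, hz, hqr.symm, hzr.symm, hzq.symm, hrN, hfar q hq hqr hqm,
      hfar z hz hzr (by rw [e]; exact hqm)⟩
  · push Not at c
    have hlt : ∀ z ∈ A, z ≠ q → D z < D q := fun z hz hne =>
      lt_of_le_of_ne (hqm z hz) (c z hz hne)
    obtain ⟨p0, hp0, ⟨i, hi, hip⟩, hl⟩ := h1 q hq hqr
    have hp0q : p0 ≠ q := by rintro rfl; omega
    obtain ⟨j, hji, hj⟩ := deg2 hT hd hi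
    obtain ⟨p1, hp1, hjp, _⟩ := other hT (hd.val j) hj
    have hp1A : p1 ∈ A := hA.closed j _ _ hj hjp hq
    have hne : p0 ≠ p1 := by
      rintro rfl
      exact hji (hU q p0 j i hp0q.symm hj.1 hjp.1 hi.1 hip.1)
    have fin : ∀ p p', p ∈ A → p' ∈ A → p ≠ p' → p ≠ q → p' ≠ q → p ≠ r → (∃ i, S T d i q ∧ S T d i p) →
        (∃ i, S T d i q ∧ S T d i p') → NC T d A p := by
      intro p p' hp hp' hpp hpq hpq' hpr ⟨k, hk1, hk2⟩ hk'
      refine nc_crit hT hd hA hr hpr D ?_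
      intro x hx hxp hxr
      by_cases cx : x = q
      · subst cx
        exact ⟨p', hp', hpp.symm, hk', hlt p' hp' hpq'⟩
      · obtain ⟨y, hy, e, hyx⟩ := h1 x hx hxr
        refine ⟨y, hy, ?_, e, hyx⟩
        rintro rfl
        have a := hlt x hx cx
        have b := h2 y hp k q hk2 hk1
        omega
    by_cases cr : p0 = r
    · have hr1 : p1 ≠ r := fun h => hne (cr.trans h.symm)
      exact ⟨r, hr, q, hq, p1, hp1A, hqr.symm, hr1.symm, hp1.symm, hrN, hfar q hq hqr hqm,
        fin p1 p0 hp1A hp0 hne.symm hp1 hp0q hr1 ⟨j, hj, hjp⟩ ⟨i, hi, hip⟩⟩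
    · exact ⟨r, hr, q, hq, p0, hp0, hqr.symm, Ne.symm cr, hp0q.symm, hrN, hfar q hq hqr hqm,
        fin p0 p1 hp0 hp1A hne hp0q hp1 cr ⟨i, hi, hip⟩ ⟨j, hj, hjp⟩⟩

end TSE

set_option linter.unusedSectionVars false
namespace TSE
open Classical
variable {V ι : Type} [Fintype V] [Fintype ι]

lemma S_congr {T : ι → Finset V} {d d' : ι → V} {j : ι} (h : d' j = d j) (v : V) :
    S T d' j v ↔ S T d j v := by unfold S; rw [h]

lemma ok_congr {T : ι → Finset V} {d d' : ι → V} {j : ι} (h : d' j = d j) (Z : Set V) :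
    ok T d' j Z ↔ ok T d j Z := by unfold ok; simp only [S_congr h]

lemma Atom.edge {T : ι → Finset V} (hT : ∀ i, (T i).card = 3) {d : ι → V} (hd : Ev T d)
    {A : Set V} (hA : Atom T d A) {u : V} (hu : u ∈ A) : ∃ i, S T d i u := by
  by_contra! c
  obtain ⟨i, hi⟩ := hA.ne
  obtain ⟨a, b, hab, _, _, _, h5⟩ := sel2 hT (hd.val i)
  have := hA.conn {u} (fun i _ x y hx hy hxu => by
    rw [Set.mem_singleton_iff] at hxu; subst hxu
    exact absurd hx (c i)) ⟨u, hu, rfl⟩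
  have h1 := this (hi a ((h5 a).2 (by simp)))
  have h2 := this (hi b ((h5 b).2 (by simp)))
  rw [Set.mem_singleton_iff] at h1 h2
  exact hab (h1.trans h2.symm)

lemma wit {T : ι → Finset V} (hT : ∀ i, (T i).card = 3) {d d' : ι → V} (hd : Ev T d) {A : Set V}
    {u : V} (h : ∀ j, In T d A j → d' j = d j ∨ (S T d j u ∧ d' j = u)) :
    ∀ j, In T d A j → ∃ t ∈ A, t ≠ u ∧ S T d' j t := by
  intro j hj
  rcases h j hj with h1 | ⟨h1, h2⟩
  · obtain ⟨a, b, hab, _, _, _, h5⟩ := sel2 hT (hd.val j)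
    by_cases c : a = u
    · exact ⟨b, hj b ((h5 b).2 (by simp)), by rw [← c]; exact hab.symm, by
        rw [S_congr h1]; exact (h5 b).2 (by simp)⟩
    · exact ⟨a, hj a ((h5 a).2 (by simp)), c, by
        rw [S_congr h1]; exact (h5 a).2 (by simp)⟩
  · obtain ⟨t, h3, h4, _⟩ := other hT (hd.val j) h1
    exact ⟨t, hj t h4, h3, h4.1, by rw [h2]; exact h3⟩

lemma nc_use {T : ι → Finset V} {d d' : ι → V} {A : Set V} {u : V} (hN : NC T d A u)
    (h : ∀ j, In T d A j → d' j = d j ∨ (S T d j u ∧ d' j = u)) {Z : Set V}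
    (hZ : ∀ i, ok T d' i Z) : ∀ x y, x ∈ A → x ≠ u → y ∈ A → y ≠ u → x ∈ Z → y ∈ Z := by
  intro x y h1 h2 h3 h4 h5
  refine hN Z ?_ ⟨x, h1, h2, h5⟩ y h3 h4
  intro i hi hiu
  rcases h i hi with h | h
  · rw [← ok_congr h]; exact hZ i
  · exact absurd h.1 hiu

lemma merge0 {T : ι → Finset V} (hT : ∀ i, (T i).card = 3) {d d' : ι → V} (hd : Ev T d)
    {A B : Set V} (hB : Atom T d B) {u w : V} (hw : w ∈ B)
    (hAu : NC T d A u) (hBw : NC T d B w) (huw : u ≠ w)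
    (h1 : ∀ j, In T d A j → d' j = d j ∨ (S T d j u ∧ d' j = u))
    (h2 : ∀ j, In T d B j → d' j = d j ∨ (S T d j w ∧ d' j = w))
    {e f : ι} (heu : u ∈ T e) (hew : w ∈ T e) (he : In T d A e) (hde : d e = w) (hde' : d' e = u)
    (hf : ∀ j, S T d j w → d' j ≠ d j → j = f) (J : Finset ι)
    (hJ : ∀ j ∈ J, In T d A j ∨ In T d B j) : Conn T d' J := by
  intro Z hZ j hj k hk hjZ v hv
  have nA := nc_use hAu h1 hZ
  have nB := nc_use hBw h2 hZ
  have wA := wit hT hd h1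
  have wB := wit hT hd h2
  obtain ⟨t, htu, ht, _⟩ := other hT (hd.val e) (x := u) ⟨heu, by rw [hde]; exact huw⟩
  have htA : t ∈ A := he t ht
  have lA : t ∈ Z ↔ w ∈ Z := by
    have a : S T d' e t := ⟨ht.1, by rw [hde']; exact htu⟩
    have b : S T d' e w := ⟨hew, by rw [hde']; exact huw.symm⟩
    exact ⟨hZ e _ _ a b, hZ e _ _ b a⟩
  obtain ⟨g, hg, hgd⟩ : ∃ g, S T d g w ∧ d' g = d g := by
    obtain ⟨g, hg⟩ := hB.edge hT hd hw
    obtain ⟨g', hg', hg2⟩ := deg2 hT hd hg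
    by_contra! c
    have a := hf g hg (c g hg)
    have b := hf g' hg2 (c g' hg2)
    exact hg' (b.trans a.symm)
  obtain ⟨s, hsw, hs, _⟩ := other hT (hd.val g) hg
  have hsB : s ∈ B := hB.closed g _ _ hg hs hw
  have lB : s ∈ Z ↔ w ∈ Z := by
    have a : S T d' g s := by rw [S_congr hgd]; exact hs
    have b : S T d' g w := by rw [S_congr hgd]; exact hg
    exact ⟨hZ g _ _ a b, hZ g _ _ b a⟩
  have hwZ : w ∈ Z := by
    rcases hJ j hj with h | h
    · obtain ⟨x, hx1, hx2, hx3⟩ := wA j h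
      exact lA.1 (nA x t hx1 hx2 htA htu (hjZ x hx3))
    · obtain ⟨x, hx1, hx2, hx3⟩ := wB j h
      exact lB.1 (nB x s hx1 hx2 hsB hsw (hjZ x hx3))
  rcases hJ k hk with h | h
  · obtain ⟨x, hx1, hx2, hx3⟩ := wA k h
    exact hZ k x v hx3 hv (nA t x htA htu hx1 hx2 (lA.2 hwZ))
  · obtain ⟨x, hx1, hx2, hx3⟩ := wB k h
    exact hZ k x v hx3 hv (nB s x hsB hsw hx1 hx2 (lB.2 hwZ))

lemma merge {T : ι → Finset V} (hT : ∀ i, (T i).card = 3) {d d' : ι → V} (hd : Ev T d)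
    {A B : Set V} (hA : Atom T d A) (hB : Atom T d B) {u w : V} (hu : u ∈ A) (hw : w ∈ B)
    (hAu : NC T d A u) (hBw : NC T d B w) (huw : u ≠ w)
    (h1 : ∀ j, In T d A j → d' j = d j ∨ (S T d j u ∧ d' j = u))
    (h2 : ∀ j, In T d B j → d' j = d j ∨ (S T d j w ∧ d' j = w))
    {e f g : ι} (heu : u ∈ T e) (hew : w ∈ T e) 
    (he : (In T d A e ∧ d e = w ∧ d' e = u) ∨ (In T d B e ∧ d e = u ∧ d' e = w))
    (hf : In T d A e → ∀ j, S T d j w → d' j ≠ d j → j = f)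
    (hg : In T d B e → ∀ j, S T d j u → d' j ≠ d j → j = g) (J : Finset ι)
    (hJ : ∀ j ∈ J, In T d A j ∨ In T d B j) : Conn T d' J := by
  rcases he with ⟨a, b, c⟩ | ⟨a, b, c⟩
  · exact merge0 hT hd hB hw hAu hBw huw h1 h2 heu hew a b c (hf a) J hJ
  · exact merge0 hT hd hA hu hBw hAu huw.symm h2 h1 hew heu a b c (hg a) J
      (fun j hj => (hJ j hj).symm)

lemma lab {T : ι → Finset V} {d : ι → V} 
    {A B : Set V} (hA : Atom T d A) (hB : Atom T d B) (hAB : ∀ v, v ∈ A → v ∈ B → False)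
    {u w : V} (hu : u ∈ A) (hw : w ∈ B) {j : ι} (hju : u ∈ T j) (hjw : w ∈ T j) :
    (In T d A j ∧ ¬ In T d B j ∧ d j = w ∧ S T d j u) ∨
    (In T d B j ∧ ¬ In T d A j ∧ d j = u ∧ S T d j w) := by
  have huw : u ≠ w := by rintro rfl; exact hAB _ hu hw
  by_cases c : d j = w
  · have s : S T d j u := ⟨hju, by rw [c]; exact huw⟩
    exact Or.inl ⟨hA.in_of s hu, fun h => hAB u hu (h u s), c, s⟩
  · have s : S T d j w := ⟨hjw, Ne.symm c⟩
    have hb := hB.in_of s hw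
    refine Or.inr ⟨hb, fun h => hAB w (h w s) hw, ?_, s⟩
    by_contra c'
    exact hAB u hu (hb u ⟨hju, Ne.symm c'⟩)

lemma merge_two {T : ι → Finset V} (hT : ∀ i, (T i).card = 3) {d : ι → V} (hd : Ev T d)
    {A B : Set V} (hA : Atom T d A) (hB : Atom T d B) (hAB : ∀ v, v ∈ A → v ∈ B → False)
    (hL : ∀ u w, u ≠ w → ∃ e f, e ≠ f ∧ u ∈ T e ∧ w ∈ T e ∧ u ∈ T f ∧ w ∈ T f) :
    ∃ d', Ev T d' ∧ ∀ J : Finset ι, (∀ j ∈ J, In T d A j ∨ In T d B j) → Conn T d' J := by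
  obtain ⟨u, hu, hAu⟩ := one_nc hT hd hA
  obtain ⟨w, hw, hBw⟩ := one_nc hT hd hB
  have huw : u ≠ w := by rintro rfl; exact hAB _ hu hw
  obtain ⟨e, f, hef, heu, hew, hfu, hfw⟩ := hL u w huw
  have le := lab hA hB hAB hu hw heu hew
  have lf := lab hA hB hAB hu hw hfu hfw
  have ve : fl (fl d e u w) f u w e = if d e = u then w else u := by
    rw [fl_ne hef, fl_same]
  have vf : fl (fl d e u w) f u w f = if d f = u then w else u := by
    rw [fl_same, fl_ne hef.symm]
  have vo : ∀ j, j ≠ e → j ≠ f → fl (fl d e u w) f u w j = d j := by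
    intro j h1 h2
    rw [fl_ne h2, fl_ne h1]
  have ev : Ev T (fl (fl d e u w) f u w) := two_flip hd hef ⟨heu, hew, by tauto⟩ ⟨hfu, hfw, by tauto⟩
  refine ⟨_, ev, ?_⟩
  generalize fl (fl d e u w) f u w = d' at *
  refine merge hT hd hA hB hu hw hAu hBw huw ?_ ?_ heu hew ?_ (f := f) ?_ (g := f) ?_
  · intro j hj
    by_cases c1 : j = e
    · subst c1; right; rw [ve]; grind
    by_cases c2 : j = f
    · subst c2; right; rw [vf]; grind
    exact Or.inl (vo j c1 c2)
  · intro j hj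
    by_cases c1 : j = e
    · subst c1; right; rw [ve]; grind
    by_cases c2 : j = f
    · subst c2; right; rw [vf]; grind
    exact Or.inl (vo j c1 c2)
  · rw [ve]; grind
  · intro h j hj hne
    have : j ≠ e := by rintro rfl; exact hj.2 (by tauto)
    by_contra c
    exact hne (vo j this c)
  · intro h j hj hne
    have : j ≠ e := by rintro rfl; exact hj.2 (by tauto)
    by_contra c
    exact hne (vo j this c)

lemma merge_three {T : ι → Finset V} (hT : ∀ i, (T i).card = 3) {d : ι → V} (hd : Ev T d)
    {A B : Set V} (hA : Atom T d A) (hB : Atom T d B) (hAB : ∀ v, v ∈ A → v ∈ B → False)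
    {z : V} (hzA : z ∉ A) (hzB : z ∉ B)
    (hL : ∀ u w, u ≠ w → ∃ e, u ∈ T e ∧ w ∈ T e) :
    ∃ d', Ev T d' ∧ ∀ J : Finset ι, (∀ j ∈ J, In T d A j ∨ In T d B j) → Conn T d' J := by
  obtain ⟨u, hu, hAu⟩ := one_nc hT hd hA
  obtain ⟨w, hw, hBw⟩ := one_nc hT hd hB
  have huw : u ≠ w := by rintro rfl; exact hAB _ hu hw
  have hzu : z ≠ u := by rintro rfl; exact hzA hu
  have hzw : z ≠ w := by rintro rfl; exact hzB hw
  obtain ⟨e, heu, hew⟩ := hL u w huw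
  obtain ⟨f, hfw, hfz⟩ := hL w z hzw.symm
  obtain ⟨k, hkz, hku⟩ := hL z u hzu
  have noz : ∀ j, u ∈ T j → w ∈ T j → z ∉ T j := by
    intro j h1 h2 h3
    rcases lab hA hB hAB hu hw h1 h2 with ⟨a, _, b, _⟩ | ⟨a, _, b, _⟩
    · exact hzA (a z ⟨h3, by rw [b]; exact hzw⟩)
    · exact hzB (a z ⟨h3, by rw [b]; exact hzu⟩)
  have le := lab hA hB hAB hu hw heu hew
  have hef : e ≠ f := by rintro rfl; exact noz e heu hew hfz
  have hek : e ≠ k := by rintro rfl; exact noz e heu hew hkz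
  have hfk : f ≠ k := by rintro rfl; exact noz f hku hfw hkz
  have df : d f = w ∨ d f = z := by
    by_contra! c
    exact hzB (hB.closed f w z ⟨hfw, c.1.symm⟩ ⟨hfz, c.2.symm⟩ hw)
  have dk : d k = z ∨ d k = u := by
    by_contra! c
    exact hzA (hA.closed k u z ⟨hku, c.2.symm⟩ ⟨hkz, c.1.symm⟩ hu)
  have ev : Ev T (fl (fl (fl d e u w) f w z) k z u) := tri_flip hd hef hfk hek
    ⟨heu, hew, by tauto⟩ ⟨hfw, hfz, df⟩ ⟨hkz, hku, dk⟩
  have ve : fl (fl (fl d e u w) f w z) k z u e = if d e = u then w else u := by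
    rw [fl_ne hek, fl_ne hef, fl_same]
  have vf : fl (fl (fl d e u w) f w z) k z u f = if d f = w then z else w := by
    rw [fl_ne hfk, fl_same, fl_ne hef.symm]
  have vk : fl (fl (fl d e u w) f w z) k z u k = if d k = z then u else z := by
    rw [fl_same, fl_ne hfk.symm, fl_ne hek.symm]
  have vo : ∀ j, j ≠ e → j ≠ f → j ≠ k → fl (fl (fl d e u w) f w z) k z u j = d j := by
    intro j h1 h2 h3
    rw [fl_ne h3, fl_ne h2, fl_ne h1]
  refine ⟨_, ev, ?_⟩
  generalize fl (fl (fl d e u w) f w z) k z u = d' at *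
  have kA : In T d A k → d k = z ∧ S T d k u := by
    intro h
    have : d k = z := by
      by_contra c
      exact hzA (h z ⟨hkz, Ne.symm c⟩)
    exact ⟨this, hku, by rw [this]; exact hzu.symm⟩
  have kB : ¬ In T d B k := by
    intro h
    rcases dk with c | c
    · exact hAB u hu (h u ⟨hku, by rw [c]; exact hzu.symm⟩)
    · exact hzB (h z ⟨hkz, by rw [c]; exact hzu⟩)
  have fB : In T d B f → d f = z ∧ S T d f w := by
    intro h
    have : d f = z := by
      by_contra c
      exact hzB (h z ⟨hfz, Ne.symm c⟩)
    exact ⟨this, hfw, by rw [this]; exact hzw.symm⟩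
  have fA : ¬ In T d A f := by
    intro h
    rcases df with c | c
    · exact hzA (h z ⟨hfz, by rw [c]; exact hzw⟩)
    · exact hAB w (h w ⟨hfw, by rw [c]; exact hzw.symm⟩) hw
  refine merge hT hd hA hB hu hw hAu hBw huw ?_ ?_ heu hew ?_ (f := f) ?_ (g := k) ?_
  · intro j hj
    by_cases c1 : j = e
    · subst c1; right; rw [ve]; grind
    by_cases c2 : j = f
    · subst c2; exact absurd hj fA
    by_cases c3 : j = k
    · subst c3; right; rw [vk, if_pos (kA hj).1]; exact ⟨(kA hj).2, rfl⟩
    exact Or.inl (vo j c1 c2 c3)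
  · intro j hj
    by_cases c1 : j = e
    · subst c1; right; rw [ve]; grind
    by_cases c2 : j = f
    · subst c2; right; rw [vf, if_neg (by rw [(fB hj).1]; exact hzw)]; exact ⟨(fB hj).2, rfl⟩
    by_cases c3 : j = k
    · subst c3; exact absurd hj kB
    exact Or.inl (vo j c1 c2 c3)
  · rw [ve]; grind
  · intro h j hj hne
    have h1 : j ≠ e := by rintro rfl; exact hj.2 (by tauto)
    have h2 : j ≠ k := by rintro rfl; exact noz j hku hj.1 hkz
    by_contra c
    exact hne (vo j h1 c h2)
  · intro h j hj hne
    have h1 : j ≠ e := by rintro rfl; exact hj.2 (by tauto)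
    have h2 : j ≠ f := by rintro rfl; exact noz j hj.1 hfw hfz
    by_contra c
    exact hne (vo j h1 h2 c)

end TSE

set_option linter.unusedSectionVars false
namespace TSE
open Classical
variable {V ι : Type} [Fintype V] [Fintype ι]

def Bad (T : ι → Finset V) (d : ι → V) (B : Set V) (e0 : ι) (a b : V) (i : ι) : Prop :=
  In T d B i ∧ ∃ Z : Set V, a ∉ Z ∧ b ∈ Z ∧ (∀ t, S T d i t → t ≠ a → t ∈ Z) ∧
    ∀ j, In T d B j → j ≠ e0 → j ≠ i → ok T d j Z

lemma bad_unique {T : ι → Finset V} (hT : ∀ i, (T i).card = 3) {d : ι → V} (hd : Ev T d)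
    {B : Set V} (hB : Atom T d B) {e0 : ι} {a b : V} (ha : S T d e0 a) (hb : S T d e0 b)
    (hbB : b ∈ B) {i i' : ι} (hi : S T d i a) (hi' : S T d i' a) (hne : i ≠ i')
    (he : i ≠ e0) (he' : i' ≠ e0)
    (h : Bad T d B e0 a b i) (h' : Bad T d B e0 a b i') : False := by
  obtain ⟨h1, Z, h2, h3, h4, h5⟩ := h
  obtain ⟨h1', Z', h2', h3', h4', h5'⟩ := h'
  have := single hT hd (Z ∩ Z' ∩ B) e0 ?_ b a hb ha ⟨⟨h3, h3'⟩, hbB⟩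
  · exact h2 this.1.1
  intro j hj x y hx hy hxW
  have hjB := hB.in_of hx hxW.2
  refine ⟨⟨?_, ?_⟩, hjB y hy⟩
  · by_cases c : j = i
    · subst c
      exact absurd (h5' j hjB hj hne x a hx hi hxW.1.2) h2'
    · exact h5 j hjB hj c x y hx hy hxW.1.1
  · by_cases c : j = i'
    · subst c
      exact absurd (h5 j hjB hj hne.symm x a hx hi' hxW.1.1) h2
    · exact h5' j hjB hj c x y hx hy hxW.1.2

lemma labA {T : ι → Finset V} {d : ι → V} 
    {A B : Set V} (hA : Atom T d A) (hB : Atom T d B) (hAB : ∀ v, v ∈ A → v ∈ B → False)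
    {u w : V} (hu : u ∈ A) (hw : w ∈ B) {j : ι} (hju : u ∈ T j) (hjw : w ∈ T j)
    (h : In T d A j) : ¬ In T d B j ∧ d j = w ∧ S T d j u := by
  rcases lab hA hB hAB hu hw hju hjw with l | l
  · exact l.2
  · exact absurd h l.2.1

lemma labB {T : ι → Finset V} {d : ι → V} 
    {A B : Set V} (hA : Atom T d A) (hB : Atom T d B) (hAB : ∀ v, v ∈ A → v ∈ B → False)
    {u w : V} (hu : u ∈ A) (hw : w ∈ B) {j : ι} (hju : u ∈ T j) (hjw : w ∈ T j)
    (h : In T d B j) : ¬ In T d A j ∧ d j = u ∧ S T d j w := by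
  rcases lab hA hB hAB hu hw hju hjw with l | l
  · exact absurd h l.2.1
  · exact l.2

set_option maxHeartbeats 1000000 in
lemma option {T : ι → Finset V} (hT : ∀ i, (T i).card = 3) {d : ι → V} (hd : Ev T d)
    {A B : Set V} (hA : Atom T d A) (hB : Atom T d B) (hAB : ∀ v, v ∈ A → v ∈ B → False)
    (hcov : ∀ v, v ∈ A ∨ v ∈ B)
    {e0 : ι} {a b c : V} (hab : a ≠ b) (hS : ∀ v, S T d e0 v ↔ v = a ∨ v = b)
    (hTe : ∀ v, v ∈ T e0 ↔ v = c ∨ v = a ∨ v = b)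
    (hc : d e0 = c) (hac : a ≠ c) (hbc : b ≠ c) (haB : a ∈ B) (hbB : b ∈ B) (hcB : c ∈ B)
    {u : V} (hu : u ∈ A) (hN : NC T d A u) {ia ic : ι} (hia : u ∈ T ia) (hia' : a ∈ T ia)
    (hic : u ∈ T ic) (hic' : c ∈ T ic) (hne : ia ≠ ic) (hnb : ¬ Bad T d B e0 a b ia) :
    (∃ d', Ev T d' ∧ Conn T d' Finset.univ) ∨ (In T d B ic ∧ S T d ic c ∧
      ∃ Z : Set V, b ∉ Z ∧ c ∉ Z ∧
      (∀ t, S T d ic t → t ≠ c → t ∈ Z) ∧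
      ∀ j, In T d B j → j ≠ e0 → j ≠ ia → j ≠ ic → ok T d j Z) := by
  have hua : u ≠ a := by rintro rfl; exact hAB _ hu haB
  have huc : u ≠ c := by rintro rfl; exact hAB _ hu hcB
  have hub : u ≠ b := by rintro rfl; exact hAB _ hu hbB
  have hue : u ∉ T e0 := by rw [hTe]; push Not; exact ⟨huc, hua, hub⟩
  have hia0 : ia ≠ e0 := by rintro rfl; exact hue hia
  have hic0 : ic ≠ e0 := by rintro rfl; exact hue hic
  have lc := lab hA hB hAB hu hcB hic hic'
  have laA := labA hA hB hAB hu haB hia hia'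
  have laB := labB hA hB hAB hu haB hia hia'
  have lcA := labA hA hB hAB hu hcB hic hic'
  have lcB := labB hA hB hAB hu hcB hic hic'
  have laN : ¬ In T d B ia → In T d A ia := by
    intro h
    rcases lab hA hB hAB hu haB hia hia' with l | l
    · exact l.1
    · exact absurd l.1 h
  have ma : d ia = u ∨ d ia = a := by
    rcases lab hA hB hAB hu haB hia hia' with l | l
    · exact Or.inr l.2.2.1
    · exact Or.inl l.2.2.1
  have mc : d ic = c ∨ d ic = u := by
    rcases lc with l | l
    · exact Or.inl l.2.2.1
    · exact Or.inr l.2.2.1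
  have ev : Ev T (fl (fl (fl d ia u a) e0 a c) ic c u) := tri_flip hd hia0 hic0.symm hne
    ⟨hia, hia', ma⟩ ⟨(hTe a).2 (by simp), (hTe c).2 (by simp), Or.inr hc⟩
    ⟨hic', hic, mc⟩
  have va : fl (fl (fl d ia u a) e0 a c) ic c u ia = if d ia = u then a else u := by
    rw [fl_ne hne, fl_ne hia0, fl_same]
  have vc : fl (fl (fl d ia u a) e0 a c) ic c u ic = if d ic = c then u else c := by
    rw [fl_same, fl_ne hic0, fl_ne hne.symm]
  have v0 : fl (fl (fl d ia u a) e0 a c) ic c u e0 = a := by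
    rw [fl_ne hic0.symm, fl_same, fl_ne hia0.symm, hc, if_neg hac.symm]
  have vo : ∀ j, j ≠ e0 → j ≠ ia → j ≠ ic → fl (fl (fl d ia u a) e0 a c) ic c u j = d j := by
    intro j h1 h2 h3
    rw [fl_ne h3, fl_ne h1, fl_ne h2]
  generalize fl (fl (fl d ia u a) e0 a c) ic c u = d' at *
  by_cases hconn : Conn T d' Finset.univ
  · exact Or.inl ⟨d', ev, hconn⟩
  right
  have h1 : ∀ j, In T d A j → d' j = d j ∨ (S T d j u ∧ d' j = u) := by
    intro j hj
    by_cases c0 : j = e0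
    · subst c0
      exact (hAB a (hj a ((hS a).2 (by simp))) haB).elim
    by_cases c1 : j = ia
    · subst c1; right; exact ⟨(laA hj).2.2, by rw [va, (laA hj).2.1, if_neg hua.symm]⟩
    by_cases c2 : j = ic
    · subst c2; right; exact ⟨(lcA hj).2.2, by rw [vc, (lcA hj).2.1, if_pos rfl]⟩
    exact Or.inl (vo j c0 c1 c2)
  have exZ : ∃ Z : Set V, (∀ i, ok T d' i Z) ∧ (∀ x ∈ A, x ≠ u → x ∈ Z) ∧
      ∃ k, ∀ v, S T d' k v → v ∉ Z := by
    unfold Conn at hconn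
    push Not at hconn
    obtain ⟨Z, hZ, j, _, k, _, hj, v, hv, hvZ⟩ := hconn
    have nA := nc_use hN h1 hZ
    by_cases cc : ∃ x ∈ A, x ≠ u ∧ x ∈ Z
    · obtain ⟨x, hx1, hx2, hx3⟩ := cc
      exact ⟨Z, hZ, fun y hy1 hy2 => nA x y hx1 hx2 hy1 hy2 hx3, k, fun y hy hyZ =>
        hvZ (hZ k y v hy hv hyZ)⟩
    · push Not at cc
      exact ⟨Zᶜ, fun i => ok_compl (hZ i), cc, j, fun y hy hyZ => hyZ (hj y hy)⟩
  obtain ⟨Z, hZ, hAZ, k, hk⟩ := exZ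
  have hnB : ¬ B ⊆ Z := by
    intro hBZ
    obtain ⟨p, q, hpq, _, _, _, h5⟩ := sel2 hT (ev.val k)
    have : ∀ v, v ≠ u → v ∈ Z := by
      intro v hv
      rcases hcov v with h | h
      · exact hAZ v h hv
      · exact hBZ h
    by_cases cp : p = u
    · exact hk q ((h5 q).2 (by simp)) (this q (by rw [← cp]; exact hpq.symm))
    · exact hk p ((h5 p).2 (by simp)) (this p cp)
  have bc : c ∈ Z → b ∈ Z := by
    refine hZ e0 c b ⟨(hTe c).2 (by simp), ?_⟩ ⟨(hTe b).2 (by simp), ?_⟩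
    · rw [v0]; exact hac.symm
    · rw [v0]; exact hab.symm
  have cb : b ∈ Z → c ∈ Z := by
    refine hZ e0 b c ⟨(hTe b).2 (by simp), ?_⟩ ⟨(hTe c).2 (by simp), ?_⟩
    · rw [v0]; exact hab.symm
    · rw [v0]; exact hac.symm
  -- label A
  have LA : ∀ i x, In T d A i → x ∈ T i → x ≠ u → S T d i u → d' i = u → x ∈ Z := by
    intro i x hi hx hxu hiu hdi
    obtain ⟨t, ht1, ht2, _⟩ := other hT (hd.val i) hiu
    exact hZ i t x ⟨ht2.1, by rw [hdi]; exact ht1⟩ ⟨hx, by rw [hdi]; exact hxu⟩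
      (hAZ t (hi t ht2) ht1)
  have aZ : In T d A ia → a ∈ Z := by
    intro h
    exact LA ia a h hia' hua.symm (laA h).2.2 (by rw [va, (laA h).2.1, if_neg hua.symm])
  have cZ : In T d A ic → c ∈ Z := by
    intro h
    exact LA ic c h hic' huc.symm (lcA h).2.2 (by rw [vc, (lcA h).2.1, if_pos rfl])
  have uZ : ¬ (In T d A ia ∧ In T d A ic) → u ∈ Z := by
    intro h
    obtain ⟨g, hg, hgd⟩ : ∃ g, S T d g u ∧ d' g = d g := by
      obtain ⟨g, hg⟩ := hA.edge hT hd hu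
      obtain ⟨g', hg', hg2⟩ := deg2 hT hd hg
      by_contra! cc
      have a1 := cc g hg
      have a2 := cc g' hg2
      have in1 := hA.in_of hg hu
      have in2 := hA.in_of hg2 hu
      have key : ∀ j, S T d j u → d' j ≠ d j → j = ia ∨ j = ic := by
        intro j hj hjd
        have : j ≠ e0 := by rintro rfl; exact hue hj.1
        by_contra! c3
        exact hjd (vo j this c3.1 c3.2)
      rcases key g hg a1 with rfl | rfl <;> rcases key g' hg2 a2 with rfl | rfl
      · exact hg' rfl
      · exact h ⟨in1, in2⟩
      · exact h ⟨in2, in1⟩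
      · exact hg' rfl
    obtain ⟨s, hs1, hs2, _⟩ := other hT (hd.val g) hg
    exact hZ g s u ((S_congr hgd _).2 hs2) ((S_congr hgd _).2 hg)
      (hAZ s (hA.closed g _ _ hg hs2 hu) hs1)
  -- label B
  have LB : ∀ i x t, u ∈ T i → u ∈ Z → x ≠ u → d' i = x → S T d i t → t ≠ x → t ∈ Z := by
    intro i x t hi hu' hxu hdi ht htx
    exact hZ i u t ⟨hi, by rw [hdi]; exact hxu.symm⟩ ⟨ht.1, by rw [hdi]; exact htx⟩ hu'
  have ta : In T d B ia → ∀ t, S T d ia t → t ≠ a → t ∈ Z := by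
    intro h t ht hta
    exact LB ia a t hia (uZ (fun e => (laB h).1 e.1)) hua.symm (by rw [va, (laB h).2.1, if_pos rfl]) ht hta
  have tc : In T d B ic → ∀ t, S T d ic t → t ≠ c → t ∈ Z := by
    intro h t ht htc
    exact LB ic c t hic (uZ (fun e => (lcB h).1 e.2)) huc.symm (by rw [vc, (lcB h).2.1, if_neg huc]) ht htc
  have oB : ∀ j, In T d B j → j ≠ e0 → j ≠ ia → j ≠ ic → ok T d j Z := by
    intro j _ h1 h2 h3
    rw [← ok_congr (vo j h1 h2 h3)]; exact hZ j
  have hcZ : c ∉ Z := by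
    intro hcZ
    have hbZ := bc hcZ
    have okc : In T d B ic → ok T d ic Z := by
      intro h x y hx hy _
      by_cases e : y = c
      · rw [e]; exact hcZ
      · exact tc h y hy e
    by_cases haZ : a ∈ Z
    · apply hnB
      refine hB.conn Z ?_ ⟨a, haB, haZ⟩
      intro i hi
      by_cases c0 : i = e0
      · subst c0
        intro x y _ hy _
        rcases (hS y).1 hy with rfl | rfl <;> assumption
      by_cases c1 : i = ia
      · subst c1
        intro x y _ hy _
        by_cases e : y = a
        · rw [e]; exact haZ
        · exact ta hi y hy e
      by_cases c2 : i = ic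
      · subst c2; exact okc hi
      exact oB i hi c0 c1 c2
    · have hB' : In T d B ia := by
        by_contra h
        exact haZ (aZ (laN h))
      refine hnb ⟨hB', Z, haZ, hbZ, ta hB', ?_⟩
      intro j hj h0 h1
      by_cases c2 : j = ic
      · subst c2; exact okc hj
      exact oB j hj h0 h1 c2
  have hcB' : In T d B ic ∧ S T d ic c := by
    rcases lc with h | h
    · exact absurd (cZ h.1) hcZ
    · exact ⟨h.1, h.2.2.2⟩
  exact ⟨hcB'.1, hcB'.2, Z, fun h => hcZ (cb h), hcZ, tc hcB'.1, oB⟩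

lemma final0 {T : ι → Finset V} (hT : ∀ i, (T i).card = 3) {d : ι → V} (hd : Ev T d)
    (hL : ∀ u w, u ≠ w → ∃ e, u ∈ T e ∧ w ∈ T e)
    (hU : ∀ u w i j, u ≠ w → u ∈ T i → w ∈ T i → u ∈ T j → w ∈ T j → i = j)
    {A B : Set V} (hA : Atom T d A) (hB : Atom T d B) (hAB : ∀ v, v ∈ A → v ∈ B → False)
    (hcov : ∀ v, v ∈ A ∨ v ∈ B) {e0 : ι} (he0 : ∀ v, v ∈ T e0 → v ∈ B) :
    ∃ d', Ev T d' ∧ Conn T d' Finset.univ := by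
  obtain ⟨a, b, hab, hac, hbc, hTe, hS⟩ := sel2 hT (hd.val e0)
  obtain ⟨c, hc⟩ : ∃ c, d e0 = c := ⟨_, rfl⟩
  rw [hc] at hac hbc hTe
  have haB : a ∈ B := he0 a ((hTe a).2 (by simp))
  have hbB : b ∈ B := he0 b ((hTe b).2 (by simp))
  have hcB : c ∈ B := he0 c ((hTe c).2 (by simp))
  have ha0 : a ∈ T e0 := (hTe a).2 (by simp)
  have hb0 : b ∈ T e0 := (hTe b).2 (by simp)
  have hc0 : c ∈ T e0 := (hTe c).2 (by simp)
  have hg : ∀ u v, ∃ i, u ≠ v → u ∈ T i ∧ v ∈ T i := by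
    intro u v
    by_cases h : u = v
    · exact ⟨e0, fun h' => absurd h h'⟩
    · obtain ⟨i, hi⟩ := hL u v h
      exact ⟨i, fun _ => hi⟩
  choose g hg using hg
  have nAB : ∀ x y, x ∈ A → y ∈ B → x ≠ y := by rintro x y h1 h2 rfl; exact hAB _ h1 h2
  have bu : ∀ p q, (∀ v, S T d e0 v ↔ v = p ∨ v = q) → p ∈ B → q ∈ B → ∀ x y, x ∈ A → y ∈ A →
      x ≠ y → Bad T d B e0 p q (g x p) → Bad T d B e0 p q (g y p) → False := by
    intro p q hS hp hq x y hx hy hxy h1 h2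
    have gx := hg x p (nAB x p hx hp)
    have gy := hg y p (nAB y p hy hp)
    have i1 := h1.1
    have i2 := h2.1
    have l1 := labB hA hB hAB hx hp gx.1 gx.2 i1
    have l2 := labB hA hB hAB hy hp gy.1 gy.2 i2
    refine bad_unique hT hd hB ((hS p).2 (by simp)) ((hS q).2 (by simp)) hq (i := g x p)
      (i' := g y p) l1.2.2 l2.2.2 ?_ ?_ ?_ h1 h2
    · intro e
      rw [← e] at gy
      have : d (g x p) = x := l1.2.1
      exact hAB y hy (i1 y ⟨gy.1, by rw [this]; exact hxy.symm⟩)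
    · intro e; rw [e] at gx; exact hAB x hx (he0 x gx.1)
    · intro e; rw [e] at gy; exact hAB y hy (he0 y gy.1)
  have hS' : ∀ v, S T d e0 v ↔ v = b ∨ v = a := fun v => by rw [hS]; tauto
  obtain ⟨u, hu, hN, n1, n2⟩ : ∃ u ∈ A, NC T d A u ∧ ¬ Bad T d B e0 a b (g u a) ∧
      ¬ Bad T d B e0 b a (g u b) := by
    obtain ⟨x, hx, y, hy, z, hz, hxy, hxz, hyz, Nx, Ny, Nz⟩ := three_nc hT hd hU hA
    by_contra cc
    have ex : ∀ x ∈ A, NC T d A x → Bad T d B e0 a b (g x a) ∨ Bad T d B e0 b a (g x b) := by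
      intro x hx Nx
      by_contra h
      rw [not_or] at h
      exact cc ⟨x, hx, Nx, h⟩
    have cx := ex x hx Nx
    have cy := ex y hy Ny
    have cz := ex z hz Nz
    clear ex cc
    have a1 := bu a b hS haB hbB x y hx hy hxy
    have a2 := bu a b hS haB hbB x z hx hz hxz
    have a3 := bu a b hS haB hbB y z hy hz hyz
    have b1 := bu b a hS' hbB haB x y hx hy hxy
    have b2 := bu b a hS' hbB haB x z hx hz hxz
    have b3 := bu b a hS' hbB haB y z hy hz hyz
    rcases cx with cx | cx <;> rcases cy with cy | cy <;> rcases cz with cz | cz <;> first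
      | exact a1 cx cy
      | exact a2 cx cz
      | exact a3 cy cz
      | exact b1 cx cy
      | exact b2 cx cz
      | exact b3 cy cz
  have ga := hg u a (nAB u a hu haB)
  have gb := hg u b (nAB u b hu hbB)
  have gc := hg u c (nAB u c hu hcB)
  have hu0 : u ∉ T e0 := fun h => hAB u hu (he0 u h)
  have dist : ∀ p q i j, p ∈ T e0 → q ∈ T e0 → p ≠ q → u ∈ T i → p ∈ T i → u ∈ T j → q ∈ T j →
      i ≠ j := by
    rintro p q i j hp hq hpq h1 h2 h3 h4 rfl
    have := hU p q i e0 hpq h2 h4 hp hq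
    rw [this] at h1; exact hu0 h1
  have dac := dist a c _ _ ha0 hc0 hac ga.1 ga.2 gc.1 gc.2
  have dbc := dist b c _ _ hb0 hc0 hbc gb.1 gb.2 gc.1 gc.2
  have dab := dist a b _ _ ha0 hb0 hab ga.1 ga.2 gb.1 gb.2
  rcases option hT hd hA hB hAB hcov hab hS hTe hc hac hbc haB hbB hcB hu hN ga.1 ga.2 gc.1 gc.2
    dac n1 with h | ⟨hcB', hcS, Z1, b1, c1, t1, o1⟩
  · exact h
  rcases option hT hd hA hB hAB hcov hab.symm hS' (fun v => by rw [hTe]; tauto) hc hbc hac hbB haB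
    hcB hu hN gb.1 gb.2 gc.1 gc.2 dbc n2 with h | ⟨_, _, Z2, a2, c2, t2, o2⟩
  · exact h
  exfalso
  obtain ⟨t, htc, ht, _⟩ := other hT (hd.val _) hcS
  have := single hT hd (Z1 ∩ Z2 ∩ B) (g u c) ?_ t c ht hcS ⟨⟨t1 t ht htc, t2 t ht htc⟩, hcB' t ht⟩
  · exact c1 this.1.1
  intro j hj x y hx hy hxW
  have hjB := hB.in_of hx hxW.2
  have e0a : g u a ≠ e0 := by intro h; rw [h] at ga; exact hu0 ga.1
  have e0b : g u b ≠ e0 := by intro h; rw [h] at gb; exact hu0 gb.1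
  have h0 : j ≠ e0 := by
    rintro rfl
    rcases (hS x).1 hx with rfl | rfl
    · exact a2 hxW.1.2
    · exact b1 hxW.1.1
  have ha : j ≠ g u a := by
    rintro rfl
    have l := labB hA hB hAB hu haB ga.1 ga.2 hjB
    exact a2 (o2 _ hjB h0 dab hj x a hx l.2.2 hxW.1.2)
  have hb : j ≠ g u b := by
    rintro rfl
    have l := labB hA hB hAB hu hbB gb.1 gb.2 hjB
    exact b1 (o1 _ hjB h0 dab.symm hj x b hx l.2.2 hxW.1.1)
  exact ⟨⟨o1 j hjB h0 ha hj x y hx hy hxW.1.1, o2 j hjB h0 hb hj x y hx hy hxW.1.2⟩, hjB y hy⟩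

lemma count_pairs (Q : ι → Finset V) (X : Finset V) (u : V) 
    (h1 : ∀ v ∈ X, v ≠ u → ∃ i, u ∈ Q i ∧ v ∈ Q i)
    (h2 : ∀ v i j, v ≠ u → u ∈ Q i → v ∈ Q i → u ∈ Q j → v ∈ Q j → i = j)
    (h3 : ∀ i, u ∈ Q i → Q i ⊆ X) :
    (X.erase u).card = ∑ i, if u ∈ Q i then (Q i).card - 1 else 0 := by
  have : ∀ v ∈ X.erase u, 1 = ∑ i, if u ∈ Q i ∧ v ∈ Q i then 1 else 0 := by
    intro v hv
    rw [Finset.mem_erase] at hv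
    obtain ⟨i, hi⟩ := h1 v hv.2 hv.1
    rw [Finset.sum_eq_single i]
    · simp [hi]
    · intro j _ hj
      rw [if_neg]
      intro h
      exact hj (h2 v j i hv.1 h.1 h.2 hi.1 hi.2)
    · simp
  rw [Finset.card_eq_sum_ones, Finset.sum_congr rfl this, Finset.sum_comm]
  apply Finset.sum_congr rfl
  intro i _
  by_cases c : u ∈ Q i
  · simp only [c, true_and, if_true]
    rw [← Finset.card_filter, ← Finset.card_erase_of_mem c]
    congr 1
    ext v
    simp only [Finset.mem_filter, Finset.mem_erase]
    have := h3 i c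
    constructor
    · rintro ⟨⟨a, b⟩, e⟩; exact ⟨a, e⟩
    · rintro ⟨a, b⟩; exact ⟨⟨a, this b⟩, b⟩
  · simp [c]

lemma odd_atom {T : ι → Finset V} (hT : ∀ i, (T i).card = 3) {d : ι → V} (hd : Ev T d)
    (hL : ∀ u w, u ≠ w → ∃ e, u ∈ T e ∧ w ∈ T e)
    (hU : ∀ u w i j, u ≠ w → u ∈ T i → w ∈ T i → u ∈ T j → w ∈ T j → i = j)
    {A : Set V} (hA : Atom T d A) (h : ∀ i, In T d A i → d i ∉ A) :
    ((Finset.univ.filter (fun v => v ∈ A)).card : ZMod 2) = 1 := by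
  obtain ⟨u, hu⟩ := hA.nonempty hT hd
  have := count_pairs (fun i => (T i).erase (d i)) (Finset.univ.filter (fun v => v ∈ A)) u ?_ ?_ ?_
  · rw [Finset.card_erase_of_mem (by simpa using hu)] at this
    have pos : 0 < (Finset.univ.filter (fun v => v ∈ A)).card :=
      Finset.card_pos.2 ⟨u, by simpa using hu⟩
    obtain ⟨m, hm⟩ : ∃ m, (Finset.univ.filter (fun v => v ∈ A)).card = m + 1 :=
      ⟨_, (Nat.succ_pred_eq_of_pos pos).symm⟩
    rw [hm] at this ⊢
    have e : (m : ZMod 2) = dg T d u := by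
      rw [Nat.add_sub_cancel] at this
      rw [this, dg]
      push_cast
      apply Finset.sum_congr rfl
      intro i _
      rw [Finset.card_erase_of_mem (hd.val i), hT]
      have : u ∈ (T i).erase (d i) ↔ S T d i u := by rw [Finset.mem_erase, S]; tauto
      simp only [this]
      by_cases c : S T d i u <;> simp [c]
    push_cast
    rw [e, hd.even]; simp
  · intro v hv hvu
    simp only [Finset.mem_filter, Finset.mem_univ, true_and] at hv
    obtain ⟨i, h1, h2⟩ := hL u v hvu.symm
    refine ⟨i, ?_⟩
    simp only [Finset.mem_erase]
    have a : u ≠ d i := by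
      intro e
      have s : S T d i v := ⟨h2, by rw [← e]; exact hvu⟩
      exact h i (hA.in_of s hv) (e ▸ hu)
    have b : v ≠ d i := by
      intro e
      have s : S T d i u := ⟨h1, by rw [← e]; exact hvu.symm⟩
      exact h i (hA.in_of s hu) (e ▸ hv)
    exact ⟨⟨a, h1⟩, b, h2⟩
  · intro v i j hvu h1 h2 h3 h4
    simp only [Finset.mem_erase] at h1 h2 h3 h4
    exact hU u v i j hvu.symm h1.2 h2.2 h3.2 h4.2
  · intro i hi v hv
    simp only [Finset.mem_erase] at hi hv
    simp only [Finset.mem_filter, Finset.mem_univ, true_and]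
    exact hA.in_of (i := i) ⟨hi.2, hi.1⟩ hu v ⟨hv.2, hv.1⟩

lemma odd_V {T : ι → Finset V} (hT : ∀ i, (T i).card = 3) (u : V)
    (hL : ∀ u w, u ≠ w → ∃ e, u ∈ T e ∧ w ∈ T e)
    (hU : ∀ u w i j, u ≠ w → u ∈ T i → w ∈ T i → u ∈ T j → w ∈ T j → i = j) :
    (Fintype.card V : ZMod 2) = 1 := by
  have := count_pairs T Finset.univ u (fun v _ h => hL u v h.symm)
    (fun v i j h a b c e => hU u v i j h.symm a b c e) (fun i _ => Finset.subset_univ _)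
  rw [Finset.card_erase_of_mem (Finset.mem_univ u), Finset.card_univ] at this
  have pos : 0 < Fintype.card V := Fintype.card_pos_iff.2 ⟨u⟩
  obtain ⟨m, hm⟩ : ∃ m, Fintype.card V = m + 1 :=
    ⟨_, (Nat.succ_pred_eq_of_pos pos).symm⟩
  rw [hm] at this ⊢
  have e : (m : ZMod 2) = 0 := by
    rw [Nat.add_sub_cancel] at this
    rw [this]
    push_cast
    apply Finset.sum_eq_zero
    intro i _
    rw [hT]
    by_cases c : u ∈ T i
    · simp only [c, if_true]; decide
    · simp [c]
  push_cast
  rw [e]; simp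

lemma final {T : ι → Finset V} (hT : ∀ i, (T i).card = 3) {d : ι → V} (hd : Ev T d)
    (hL : ∀ u w, u ≠ w → ∃ e, u ∈ T e ∧ w ∈ T e)
    (hU : ∀ u w i j, u ≠ w → u ∈ T i → w ∈ T i → u ∈ T j → w ∈ T j → i = j)
    {A B : Set V} (hA : Atom T d A) (hB : Atom T d B) (hAB : ∀ v, v ∈ A → v ∈ B → False)
    (hcov : ∀ v, v ∈ A ∨ v ∈ B) :
    ∃ d', Ev T d' ∧ Conn T d' Finset.univ := by
  have sub : ∀ {C : Set V} {i : ι}, In T d C i → d i ∈ C → ∀ v, v ∈ T i → v ∈ C := by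
    intro C i h1 h2 v hv
    by_cases c : v = d i
    · rw [c]; exact h2
    · exact h1 v ⟨hv, c⟩
  by_cases cB : ∃ i, In T d B i ∧ d i ∈ B
  · obtain ⟨i, h1, h2⟩ := cB
    exact final0 hT hd hL hU hA hB hAB hcov (sub h1 h2)
  by_cases cA : ∃ i, In T d A i ∧ d i ∈ A
  · obtain ⟨i, h1, h2⟩ := cA
    exact final0 hT hd hL hU hB hA (fun v a b => hAB v b a) (fun v => (hcov v).symm) (sub h1 h2)
  push Not at cA cB
  exfalso
  obtain ⟨u, hu⟩ := hA.nonempty hT hd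
  have o1 := odd_atom hT hd hL hU hA cA
  have o2 := odd_atom hT hd hL hU hB cB
  have o3 := odd_V hT u hL hU
  have e := Finset.card_filter_add_card_filter_not (s := (Finset.univ : Finset V)) (fun v => v ∈ A)
  have e' : (Finset.univ.filter (fun v => ¬ v ∈ A)) = Finset.univ.filter (fun v => v ∈ B) := by
    ext v
    simp only [Finset.mem_filter, Finset.mem_univ, true_and]
    have := hAB v; have := hcov v; tauto
  rw [e', Finset.card_univ] at e
  have e2 := congrArg (fun n : ℕ => (n : ZMod 2)) e
  push_cast at e2
  rw [o1, o2, o3] at e2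
  revert e2; decide

/-- main orientation theorem -/
theorem exists_conn {T : ι → Finset V} (hT : ∀ i, (T i).card = 3) {lam : ℕ} (hlam : 1 ≤ lam)
    (hL : ∀ u w, u ≠ w → (Finset.univ.filter (fun i => u ∈ T i ∧ w ∈ T i)).card = lam)
    (hbig : 4 ≤ Fintype.card V ∨ 2 ≤ lam) [Nonempty ι] :
    ∃ d, Ev T d ∧ Conn T d Finset.univ := by
  obtain ⟨d0, hd0⟩ := exists_even hT hlam hL hbig
  obtain ⟨i00⟩ := ‹Nonempty ι›
  have base : ∃ J : Finset ι, J.Nonempty ∧ ∃ d, Ev T d ∧ Conn T d J := by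
    refine ⟨{i00}, by simp, d0, hd0, ?_⟩
    intro Z _ j hj k hk h
    rw [Finset.mem_singleton] at hj hk
    subst hj; subst hk; exact h
  obtain ⟨J0, hJ0⟩ := base
  obtain ⟨J, hJm, hmax⟩ := Finset.exists_max_image
    (Finset.univ.filter (fun J : Finset ι => J.Nonempty ∧ ∃ d, Ev T d ∧ Conn T d J)) Finset.card
    ⟨J0, by simpa using hJ0⟩
  simp only [Finset.mem_filter, Finset.mem_univ, true_and] at hJm hmax
  obtain ⟨⟨i0, hi0⟩, d, hd, hc⟩ := hJm
  by_cases cu : J = Finset.univ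
  · subst cu; exact ⟨d, hd, hc⟩
  obtain ⟨j0, hj0⟩ : ∃ j, j ∉ J := by
    by_contra! h
    exact cu (Finset.eq_univ_of_forall h)
  obtain ⟨A, hA, hiA⟩ := exists_atom hT hd.val i0
  obtain ⟨B, hB, hjB⟩ := exists_atom hT hd.val j0
  have hJA : ∀ j ∈ J, In T d A j := by
    intro j hj v hv
    exact hc A hA.closed i0 hi0 j hj hiA v hv
  have contra : ∀ d', Ev T d' → Conn T d' (insert j0 J) → False := by
    intro d' h1 h2
    have := hmax (insert j0 J) ⟨⟨j0, by simp⟩, d', h1, h2⟩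
    rw [Finset.card_insert_of_notMem hj0] at this
    omega
  have hconnIn : ∀ K : Finset ι, (∀ j ∈ K, In T d A j) → Conn T d K := by
    intro K hK Z hZ j hj k hk hjZ v hv
    obtain ⟨p, q, hpq, _, _, _, h5⟩ := sel2 hT (hd.val j)
    have hp := (h5 p).2 (by simp)
    exact hA.conn Z (fun i _ => hZ i) ⟨p, hK j hj p hp, hjZ p hp⟩ (hK k hk v hv)
  have hAB : ∀ v, v ∈ A → v ∈ B → False := by
    intro v h1 h2
    have : B ⊆ A := hB.conn A (fun i _ => hA.closed i) ⟨v, h2, h1⟩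
    refine contra d hd (hconnIn _ ?_)
    intro j hj
    rcases Finset.mem_insert.1 hj with rfl | hj
    · exact fun v hv => this (hjB v hv)
    · exact hJA j hj
  have hins : ∀ j ∈ insert j0 J, In T d A j ∨ In T d B j := by
    intro j hj
    rcases Finset.mem_insert.1 hj with rfl | hj
    · exact Or.inr hjB
    · exact Or.inl (hJA j hj)
  exfalso
  by_cases h2 : 2 ≤ lam
  · obtain ⟨d', e1, e2⟩ := merge_two hT hd hA hB hAB (by
      intro u w huw
      have : 1 < (Finset.univ.filter (fun i => u ∈ T i ∧ w ∈ T i)).card := by rw [hL u w huw]; omega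
      obtain ⟨e, he, f, hf, hef⟩ := Finset.one_lt_card.1 this
      simp only [Finset.mem_filter, Finset.mem_univ, true_and] at he hf
      exact ⟨e, f, hef, he.1, he.2, hf.1, hf.2⟩)
    exact contra d' e1 (e2 _ hins)
  have l1 : lam = 1 := by omega
  have hL' : ∀ u w, u ≠ w → ∃ e, u ∈ T e ∧ w ∈ T e := by
    intro u w huw
    have : 0 < (Finset.univ.filter (fun i => u ∈ T i ∧ w ∈ T i)).card := by rw [hL u w huw]; omega
    obtain ⟨e, he⟩ := Finset.card_pos.1 this
    exact ⟨e, by simpa using he⟩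
  by_cases hz : ∃ z, z ∉ A ∧ z ∉ B
  · obtain ⟨z, z1, z2⟩ := hz
    obtain ⟨d', e1, e2⟩ := merge_three hT hd hA hB hAB z1 z2 hL'
    exact contra d' e1 (e2 _ hins)
  · have hU : ∀ u w i j, u ≠ w → u ∈ T i → w ∈ T i → u ∈ T j → w ∈ T j → i = j := by
      intro u w i j huw h1 h2 h3 h4
      have : (Finset.univ.filter (fun i => u ∈ T i ∧ w ∈ T i)).card ≤ 1 := by rw [hL u w huw]; omega
      exact Finset.card_le_one.1 this i (by simp [h1, h2]) j (by simp [h3, h4])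
    obtain ⟨d', e1, e2⟩ := final hT hd hL' hU hA hB hAB (by
      intro v
      by_contra! h
      exact hz ⟨v, h⟩)
    exact contra d' e1 (fun Z hZ j _ k _ => e2 Z hZ j (by simp) k (by simp))

end TSE

lemma TSE_forward {V : Type} [Fintype V] [DecidableEq V] (hn : Fintype.card V = 3)
    (E : Multiset (Finset V)) (hH : IsTripleSystem E 1) (h : IsEulerian E) : False := by
  obtain ⟨_, h3, hL⟩ := hH
  have huniv : ∀ f ∈ E, f = Finset.univ := by
    intro f hf
    apply Finset.eq_univ_of_card
    rw [h3 f hf, hn]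
  have : 1 < Fintype.card V := by omega
  obtain ⟨u, w, huw⟩ := Fintype.exists_pair_of_one_lt_card this
  have hc := hL u w huw
  rw [Multiset.filter_eq_self.2 (fun f hf => by rw [huniv f hf]; simp)] at hc
  obtain ⟨k, v, e, ⟨h0, hw⟩, hE⟩ := h
  have hk : k = 1 := by
    rw [← hE] at hc
    simpa [walkEdges] using hc
  subst hk
  exact (hw 0).1 h0

lemma TSE_backward {V : Type} [Fintype V] [DecidableEq V] (lam : ℕ) (hlam : 1 ≤ lam)
    (hbig : 4 ≤ Fintype.card V ∨ 2 ≤ lam)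
    (E : Multiset (Finset V)) (hH : IsTripleSystem E lam) : IsEulerian E := by
  obtain ⟨hne, h3, hL⟩ := hH
  let T : E.ToType → Finset V := fun x => x.1
  have hmap : (Finset.univ : Finset E.ToType).val.map T = E := Multiset.map_univ_coe E
  have hT : ∀ i, (T i).card = 3 := by
    intro i
    apply h3
    rw [← hmap]
    exact Multiset.mem_map_of_mem _ (Finset.mem_univ i)
  have hL' : ∀ u w, u ≠ w →
      (Finset.univ.filter (fun i => u ∈ T i ∧ w ∈ T i)).card = lam := by
    intro u w huw
    rw [← hL u w huw]
    conv_rhs => rw [← hmap]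
    rw [Multiset.filter_map, Multiset.card_map]
    rfl
  have : Nonempty E.ToType := by
    by_contra h
    rw [not_nonempty_iff] at h
    apply hne
    rw [← hmap]
    simp
  obtain ⟨d, hd, hc⟩ := TSE.exists_conn hT hlam (by
    intro u w huw
    rw [← hL' u w huw]
    congr) hbig
  obtain ⟨x, l, hl, hnd, hall⟩ := TSE.euler hT hd hc
  obtain ⟨v, hv0, hv1, hv⟩ := hl.walk
  refine ⟨l.length, v, fun i => T (l.get i), ⟨by rw [hv0, hv1], hv⟩, ?_⟩
  rw [walkEdges]
  have e1 : List.ofFn (fun i => T (l.get i)) = l.map T := by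
    have := List.map_ofFn (f := l.get) (g := T)
    rw [List.ofFn_get] at this
    rw [this]; rfl
  rw [e1]
  have e2 : (l : Multiset E.ToType) = (Finset.univ : Finset E.ToType).val := by
    apply (Multiset.Nodup.ext (Multiset.coe_nodup.2 hnd) Finset.univ.nodup).2
    intro i
    simp [hall i]
  rw [← e2] at hmap
  exact hmap

/-- Let `H` be a triple system `TS(n, λ)` with `n ≥ 3` and `λ ≥ 1`.  Then `H` is
eulerian if and only if `(n, λ) ≠ (3, 1)`, i.e. iff `H` is not a `TS(3, 1)`. -/
theorem tripleSystem_eulerian_iff_not_TS31 {V : Type} [Fintype V] [DecidableEq V]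
    (n lam : ℕ) (hn : Fintype.card V = n) (hn3 : 3 ≤ n) (hlam : 1 ≤ lam)
    (E : Multiset (Finset V)) (hH : IsTripleSystem E lam) :
    IsEulerian E ↔ ¬(n = 3 ∧ lam = 1) := by
  constructor
  · rintro h ⟨rfl, rfl⟩
    exact TSE_forward ‹_› E hH h
  · intro h
    exact TSE_backward lam hlam (by omega) E hH
end

section
/- Let H be a 3-uniform hypergraph of order at least 3 in which every pair of distinct vertices lies together in at least two edges (counted with multiplicity). Then H is eulerian. -/
namespace TU

inductive Trail {V ι : Type} (p : ι → Finset V) : V → V → List ι → Prop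
  | nil (a : V) : Trail p a a []
  | cons {a b c : V} {i : ι} {l : List ι} (hab : a ≠ b) (ha : a ∈ p i) (hb : b ∈ p i)
      (h : Trail p b c l) : Trail p a c (i :: l)

theorem Trail.append {V ι : Type} {p : ι → Finset V} {a b c : V} {l m : List ι}
    (h : Trail p a b l) (h' : Trail p b c m) : Trail p a c (l ++ m) := by
  induction h with
  | nil a => exact h'
  | cons hab ha hb h ih => exact Trail.cons hab ha hb (ih h')

theorem Trail.split {V ι : Type} {p : ι → Finset V} {l m : List ι} {a c : V}
    (h : Trail p a c (l ++ m)) : ∃ b, Trail p a b l ∧ Trail p b c m := by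
  induction l generalizing a with
  | nil => exact ⟨a, Trail.nil a, h⟩
  | cons i l ih =>
    cases h with
    | cons hab ha hb h =>
      obtain ⟨b, h1, h2⟩ := ih h
      exact ⟨b, Trail.cons hab ha hb h1, h2⟩

theorem eq_pair {V : Type} [DecidableEq V] {s : Finset V} (hs : s.card = 2) {a b : V}
    (ha : a ∈ s) (hb : b ∈ s) (hab : a ≠ b) : s = {a, b} := by
  symm
  apply Finset.eq_of_subset_of_card_le
  · intro x hx
    simp at hx
    rcases hx with rfl | rfl <;> assumption
  · rw [hs, Finset.card_pair hab]

theorem Trail.parity {V ι : Type} [DecidableEq V] {p : ι → Finset V}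
    (hp : ∀ i, (p i).card = 2) {a b : V} {l : List ι} (h : Trail p a b l) (v : V) :
    Even (l.countP (fun i => decide (v ∈ p i)) + (if v = a then 1 else 0)
      + (if v = b then 1 else 0)) := by
  induction h with
  | nil a => simp only [List.countP_nil]; split_ifs <;> decide
  | @cons a b c i l hab ha hb h ih =>
    have := eq_pair (hp i) ha hb hab
    simp only [List.countP_cons, this, Finset.mem_insert, Finset.mem_singleton,
      decide_eq_true_eq]
    by_cases h1 : v = a
    · have h2 : v ≠ b := by rw [h1]; exact hab
      simp only [h1, hab, if_true, if_false, true_or] at ih ⊢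
      rw [Nat.even_iff] at ih ⊢
      omega
    · simp only [h1, if_false, false_or] at ih ⊢
      rw [Nat.even_iff] at ih ⊢
      omega

theorem Trail.rotate {V ι : Type} [DecidableEq V] {p : ι → Finset V}
    (hp : ∀ i, (p i).card = 2) {a : V} {l : List ι} (h : Trail p a a l) {j : ι} (hj : j ∈ l)
    {c : V} (hc : c ∈ p j) : ∃ l', l'.Perm l ∧ Trail p c c l' := by
  obtain ⟨l1, l2, rfl⟩ := List.append_of_mem hj
  obtain ⟨x, h1, h2⟩ := h.split
  cases h2 with
  | @cons _ y _ _ _ hab ha hb h2 =>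
    rw [eq_pair (hp j) ha hb hab] at hc
    simp at hc
    rcases hc with rfl | rfl
    · exact ⟨(j :: l2) ++ l1, List.perm_append_comm, (Trail.cons hab ha hb h2).append h1⟩
    · refine ⟨l2 ++ (l1 ++ [j]), ?_, h2.append (h1.append (Trail.cons hab ha hb (Trail.nil _)))⟩
      refine List.perm_append_comm.trans ?_
      simp

theorem euler {V ι : Type} [DecidableEq V] [Fintype ι] [DecidableEq ι] (p : ι → Finset V)
    (hp : ∀ i, (p i).card = 2)
    (hev : ∀ v, Even (Finset.univ.filter (fun i => v ∈ p i)).card)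
    (a0 : V)
    (hconn : ∀ i, ∀ v ∈ p i, Relation.ReflTransGen (fun a b => ∃ i, p i = {a, b}) a0 v) :
    ∃ a l, Trail p a a l ∧ l.Nodup ∧ ∀ i, i ∈ l := by
  classical
  let P : ℕ → Prop := fun n => ∃ a b l, Trail p a b l ∧ l.Nodup ∧ l.length = n
  have hP0 : P 0 := ⟨a0, a0, [], Trail.nil _, List.nodup_nil, rfl⟩
  have hPb : ∀ n, P n → n ≤ Fintype.card ι := by
    rintro n ⟨a, b, l, -, hl, rfl⟩
    exact hl.length_le_card
  have hmax := Nat.findGreatest_spec (P := P) (Nat.zero_le (Fintype.card ι)) hP0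
  set N := Nat.findGreatest P (Fintype.card ι) with hN
  have hno : ¬ P (N + 1) := by
    intro h
    have := Nat.le_findGreatest (hPb _ h) h
    omega
  obtain ⟨a, b, l, ht, hl, hlen⟩ := hmax
  -- extension at the start
  have hext : ∀ a b l, Trail p a b l → l.Nodup → l.length = N → ∀ i, a ∈ p i → i ∈ l := by
    intro a b l ht hl hlen i hi
    by_contra hil
    obtain ⟨c, hc, hca⟩ := Finset.exists_mem_ne (by rw [hp i]; omega) a (s := p i)
    exact hno ⟨c, b, i :: l, Trail.cons hca hc hi ht, by simp [hil, hl], by simp [hlen]⟩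
  have hab : a = b := by
    by_contra hab
    have h1 := ht.parity hp a
    have h2 : l.countP (fun i => decide (a ∈ p i)) =
        (Finset.univ.filter (fun i => a ∈ p i)).card := by
      rw [List.countP_eq_length_filter, ← List.toFinset_card_of_nodup (hl.filter _)]
      congr 1
      ext i
      simp
      exact fun h => hext a b l ht hl hlen i h
    rw [h2] at h1
    have h3 := hev a
    simp [hab] at h1
    rw [Nat.even_iff] at h3
    rw [Nat.even_iff] at h1
    omega
  subst hab
  refine ⟨a, l, ht, hl, ?_⟩
  have htouch : ∀ j ∈ l, ∀ c ∈ p j, ∀ i, c ∈ p i → i ∈ l := by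
    intro j hj c hc i hi
    obtain ⟨l', hperm, ht'⟩ := ht.rotate hp hj hc
    have := hext c c l' ht' (hperm.nodup_iff.2 hl) (by rw [hperm.length_eq, hlen]) i hi
    exact hperm.mem_iff.1 this
  intro i
  by_cases hnil : l = []
  · obtain ⟨c, hc⟩ : (p i).Nonempty := by
      rw [← Finset.card_pos, hp i]; omega
    have := hext c c [] (Trail.nil c) List.nodup_nil (by rw [← hlen, hnil]) i hc
    simp at this
  obtain ⟨j, hj⟩ := List.exists_mem_of_ne_nil l hnil
  have hinv : ∀ v, Relation.ReflTransGen (fun a b => ∃ i, p i = {a, b}) a0 v →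
      ((∃ k ∈ l, a0 ∈ p k) ↔ (∃ k ∈ l, v ∈ p k)) := by
    intro v hv
    induction hv with
    | refl => rfl
    | @tail b c _ h ih =>
      rw [ih]
      obtain ⟨m, hm⟩ := h
      have hbm : b ∈ p m := by simp [hm]
      have hcm : c ∈ p m := by simp [hm]
      constructor
      · rintro ⟨k, hk, hbk⟩
        exact ⟨m, htouch k hk b hbk m hbm, hcm⟩
      · rintro ⟨k, hk, hbk⟩
        exact ⟨m, htouch k hk c hbk m hcm, hbm⟩
  obtain ⟨c, hc⟩ : (p j).Nonempty := by
    rw [← Finset.card_pos, hp j]; omega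
  obtain ⟨d, hd⟩ : (p i).Nonempty := by
    rw [← Finset.card_pos, hp i]; omega
  obtain ⟨k, hk, hdk⟩ := (hinv d (hconn i d hd)).1 ((hinv c (hconn j c hc)).2 ⟨j, hj, hc⟩)
  exact htouch k hk d hdk i hd

inductive ConnSet {V : Type} [DecidableEq V] (adj : V → V → Prop) : Finset V → Prop
  | single (a : V) : ConnSet adj {a}
  | insert {A : Finset V} {a b : V} (h : ConnSet adj A) (ha : a ∈ A) (hb : b ∉ A)
      (hab : adj a b) : ConnSet adj (insert b A)

theorem ConnSet.mono {V : Type} [DecidableEq V] {adj adj' : V → V → Prop} {A : Finset V}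
    (h : ConnSet adj A) (H : ∀ a ∈ A, ∀ b ∈ A, adj a b → adj' a b) : ConnSet adj' A := by
  induction h with
  | single a => exact ConnSet.single a
  | @insert A a b h ha hb hab ih =>
    refine ConnSet.insert (ih fun x hx y hy => H x (by simp [hx]) y (by simp [hy])) ha hb ?_
    exact H a (by simp [ha]) b (by simp) hab

theorem ConnSet.reach {V : Type} [DecidableEq V] {adj : V → V → Prop} {A : Finset V}
    (h : ConnSet adj A) : ∃ a0, ∀ v ∈ A, Relation.ReflTransGen adj a0 v := by
  induction h with
  | single a => exact ⟨a, by simp; exact Relation.ReflTransGen.refl⟩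
  | @insert A a b h ha hb hab ih =>
    obtain ⟨a0, h0⟩ := ih
    refine ⟨a0, ?_⟩
    intro v hv
    rcases Finset.mem_insert.1 hv with rfl | hv
    · exact (h0 a ha).tail hab
    · exact h0 v hv

/-- adjacency when edge `i` omits vertex `f i` -/
def Adj {V ι : Type} [DecidableEq V] (t : ι → Finset V) (f : ι → V) (a b : V) : Prop :=
  ∃ i, (t i).erase (f i) = {a, b}

def Valid {V ι : Type} [DecidableEq V] [Fintype ι] (t : ι → Finset V) (f : ι → V) : Prop :=
  (∀ i, f i ∈ t i) ∧ ∀ v, (∑ i, if v ∈ t i then (1 : ZMod 2) else 0) =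
    ∑ i, if f i = v then (1 : ZMod 2) else 0

theorem Valid.even {V ι : Type} [DecidableEq V] [Fintype ι] {t : ι → Finset V} {f : ι → V}
    (h : Valid t f) (v : V) :
    Even (Finset.univ.filter (fun i => v ∈ (t i).erase (f i))).card := by
  have h2 := h.2 v
  rw [← sub_eq_zero, ← Finset.sum_sub_distrib] at h2
  rw [← ZMod.natCast_eq_zero_iff_even, Finset.card_filter, Nat.cast_sum, ← h2]
  refine Finset.sum_congr rfl fun i _ => ?_
  have := h.1 i
  by_cases h3 : f i = v
  · subst h3; simp [this]
  · have h4 : v ≠ f i := fun h => h3 h.symm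
    simp [h3, h4]

theorem Valid.exchange {V ι : Type} [DecidableEq V] [Fintype ι] [DecidableEq ι]
    {t : ι → Finset V} {f : ι → V} (h : Valid t f) {u w : V} (huw : u ≠ w) {e1 e2 : ι}
    (he : e1 ≠ e2) (hu1 : u ∈ t e1) (hw1 : w ∈ t e1) (hu2 : u ∈ t e2) (hw2 : w ∈ t e2)
    (h1 : f e1 = u ∨ f e1 = w) (h2 : f e2 = u ∨ f e2 = w) :
    Valid t (fun i => if i = e1 ∨ i = e2 then Equiv.swap u w (f i) else f i) := by
  refine ⟨?_, ?_⟩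
  · intro i
    dsimp only
    split_ifs with hi
    · rcases hi with rfl | rfl
      · rcases h1 with h1 | h1 <;> simp [h1, *]
      · rcases h2 with h1 | h1 <;> simp [h1, *]
    · exact h.1 i
  · intro v
    rw [h.2 v, ← sub_eq_zero, ← Finset.sum_sub_distrib]
    rw [Finset.sum_eq_add e1 e2 he]
    · simp only [true_or, or_true, if_true]
      have hwu := huw.symm
      rcases h1 with h1 | h1 <;> rcases h2 with h2 | h2 <;> rw [h1, h2] <;>
        simp only [Equiv.swap_apply_left, Equiv.swap_apply_right] <;>
        by_cases hu : u = v <;> by_cases hw : w = v <;> simp only [hu, hw, if_true, if_false] <;>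
        decide
    · intro c _ hc
      simp [hc.1, hc.2]
    · simp
    · simp

theorem exists_valid {V ι : Type} [DecidableEq V] [Fintype ι] [Fintype V] [DecidableEq ι]
    (t : ι → Finset V) (z : V) (ht : ∀ i, (t i).card = 3)
    (hpair : ∀ u w : V, u ≠ w → 2 ≤ (Finset.univ.filter fun i => u ∈ t i ∧ w ∈ t i).card) :
    ∃ f, Valid t f := by
  classical
  obtain ⟨g, hginj, hg⟩ := (Finset.all_card_le_biUnion_card_iff_exists_injective
    (fun v : {v : V // v ≠ z} => Finset.univ.filter fun i => z ∈ t i ∧ v.1 ∈ t i)).1 (by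
      intro S
      have := Finset.card_mul_le_card_mul (m := 2) (n := 2)
        (fun (v : {v : V // v ≠ z}) i => z ∈ t i ∧ v.1 ∈ t i) (s := S)
        (t := S.biUnion fun v => Finset.univ.filter fun i => z ∈ t i ∧ v.1 ∈ t i) ?_ ?_
      · omega
      · intro v hv
        refine (hpair z v.1 v.2.symm).trans (Finset.card_le_card ?_)
        intro i hi
        simp only [Finset.mem_bipartiteAbove, Finset.mem_biUnion]
        exact ⟨⟨v, hv, hi⟩, by simpa using hi⟩
      · intro i hi
        simp only [Finset.mem_biUnion, Finset.mem_filter] at hi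
        obtain ⟨_, _, _, hz, _⟩ := hi
        have : ((t i).erase z).card = 2 := by rw [Finset.card_erase_of_mem hz, ht i]
        rw [← this]
        refine Finset.card_le_card_of_injOn (fun v => v.1) ?_ ?_
        · intro v hv
          have hv := (Finset.mem_bipartiteBelow _).1 hv
          exact Finset.mem_coe.2 (Finset.mem_erase.2 ⟨v.2, hv.2.2⟩)
        · intro v _ w _ h
          exact Subtype.ext h)
  simp only [Finset.mem_filter, Finset.mem_univ, true_and] at hg
  have hne : ∀ i, (t i).Nonempty := fun i => by rw [← Finset.card_pos, ht i]; omega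
  choose f0 hf0 using hne
  -- parity contribution of free edges
  let d : V → ZMod 2 := fun v => (∑ i, if v ∈ t i then (1 : ZMod 2) else 0) -
    ∑ i ∈ Finset.univ.filter (fun i => ∀ x, g x ≠ i), if f0 i = v then (1 : ZMod 2) else 0
  let f : ι → V := fun i => if h : ∃ x, g x = i then (if d h.choose.1 = 1 then h.choose.1 else z)
    else f0 i
  have hfg : ∀ x, f (g x) = if d x.1 = 1 then x.1 else z := by
    intro x
    have h : ∃ y, g y = g x := ⟨x, rfl⟩
    have : h.choose = x := hginj h.choose_spec
    simp only [f, dif_pos h, this]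
  have hff : ∀ i, (∀ x, g x ≠ i) → f i = f0 i := by
    intro i hi
    have : ¬ ∃ x, g x = i := by push Not; exact hi
    simp only [f, dif_neg this]
  have hmem : ∀ i, f i ∈ t i := by
    intro i
    by_cases h : ∃ x, g x = i
    · obtain ⟨x, rfl⟩ := h
      rw [hfg]
      split_ifs
      · exact (hg x).2
      · exact (hg x).1
    · push Not at h
      rw [hff i h]; exact hf0 i
  have hnz : ∀ v, v ≠ z → (∑ i, if v ∈ t i then (1 : ZMod 2) else 0) =
    ∑ i, if f i = v then (1 : ZMod 2) else 0 := by
    intro v hv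
    rw [← Finset.sum_filter_add_sum_filter_not Finset.univ (fun i => ∀ x, g x ≠ i)
      (fun i => if f i = v then (1 : ZMod 2) else 0)]
    have hs : ∑ i ∈ Finset.univ.filter (fun i => ∀ x, g x ≠ i),
        (if f i = v then (1 : ZMod 2) else 0) =
        ∑ i ∈ Finset.univ.filter (fun i => ∀ x, g x ≠ i),
        (if f0 i = v then (1 : ZMod 2) else 0) :=
      Finset.sum_congr rfl (fun i hi => by rw [hff i (Finset.mem_filter.1 hi).2])
    rw [hs]
    rw [← sub_eq_iff_eq_add']
    change d v = _
    rw [Finset.sum_eq_single_of_mem (g ⟨v, hv⟩)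
      (Finset.mem_filter.2 ⟨Finset.mem_univ _, fun hh => hh ⟨v, hv⟩ rfl⟩)]
    · rw [hfg]
      have : d v = 0 ∨ d v = 1 := by
        generalize d v = q
        revert q; decide
      rcases this with h | h
      · simp [h, hv.symm]
      · simp [h]
    · intro b hb hbv
      simp only [Finset.mem_filter, Finset.mem_univ, true_and] at hb
      push Not at hb
      obtain ⟨x, rfl⟩ := hb
      rw [hfg]
      have hxv : x.1 ≠ v := by
        rintro rfl; exact hbv rfl
      by_cases h1 : d x.1 = 1
      · rw [if_pos h1, if_neg hxv]
      · rw [if_neg h1, if_neg hv.symm]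
  refine ⟨f, hmem, ?_⟩
  intro v
  by_cases hv : v = z
  · subst hv
    have e1 : ∑ v, (∑ i, if v ∈ t i then (1 : ZMod 2) else 0) =
      ∑ v, ∑ i, if f i = v then (1 : ZMod 2) else 0 := by
      rw [Finset.sum_comm, Finset.sum_comm (s := Finset.univ (α := V))]
      refine Finset.sum_congr rfl fun i _ => ?_
      simp [ht i]
      decide
    rw [← Finset.add_sum_erase _ _ (Finset.mem_univ v),
      ← Finset.add_sum_erase (a := v) _ (fun v => ∑ i, if f i = v then (1 : ZMod 2) else 0)
        (Finset.mem_univ v)] at e1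
    rw [Finset.sum_congr rfl (fun x hx => hnz x (by simpa using hx))] at e1
    exact add_right_cancel e1
  · exact hnz v hv

/-- the improvement step when `e1` omits `w` -/
theorem improve {V ι : Type} [DecidableEq V] [Fintype ι] [DecidableEq ι]
    {t : ι → Finset V} (ht : ∀ i, (t i).card = 3) {f : ι → V} (h : Valid t f) {A' : Finset V}
    {u w : V} (hA' : ConnSet (Adj t f) A') (huA : u ∉ A') (hw : w ∉ insert u A')
    (hcl : ∀ i, ∀ a ∈ (t i).erase (f i), a ∈ insert u A' → (t i).erase (f i) ⊆ insert u A')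
    {i0 : ι} (hi0 : w ∈ (t i0).erase (f i0)) {e1 e2 : ι}
    (he : e1 ≠ e2) (hu1 : u ∈ t e1) (hw1 : w ∈ t e1) (hu2 : u ∈ t e2) (hw2 : w ∈ t e2)
    (h1 : f e1 = w) (h2 : f e2 = u ∨ f e2 = w) :
    ∃ f' A'', Valid t f' ∧ ConnSet (Adj t f') A'' ∧ (insert u A').card < A''.card := by
  have huw : u ≠ w := by rintro rfl; simp at hw
  have hwA : w ∉ A' := fun h => hw (by simp [h])
  have hc2 : ∀ i, ((t i).erase (f i)).card = 2 := fun i => by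
    rw [Finset.card_erase_of_mem (h.1 i), ht i]
  have hval := h.exchange huw he hu1 hw1 hu2 hw2 (Or.inr h1) h2
  set f' := (fun i => if i = e1 ∨ i = e2 then Equiv.swap u w (f i) else f i) with hf'
  have hf'e : ∀ i, i ≠ e1 → i ≠ e2 → f' i = f i := by
    intro i h1 h2; simp [hf', h1, h2]
  have hf'1 : f' e1 = u := by simp [hf', h1]
  have hA2 : ConnSet (Adj t f') A' := by
    refine hA'.mono ?_
    rintro a ha b hb ⟨i, hi⟩
    have hsub : ∀ x ∈ (t i).erase (f i), x ∈ A' := by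
      intro x hx; rw [hi] at hx; simp at hx; rcases hx with rfl | rfl <;> assumption
    refine ⟨i, ?_⟩
    rw [hf'e i]
    · exact hi
    · rintro rfl
      exact huA (hsub u (by simp [h1, huw, hu1]))
    · rintro rfl
      rcases h2 with h2 | h2
      · exact hwA (hsub w (by simp [h2, huw.symm, hw2]))
      · exact huA (hsub u (by simp [h2, huw, hu2]))
  -- x
  have hup : u ∈ (t e1).erase (f e1) := by simp [h1, huw, hu1]
  obtain ⟨x, hx, hxu⟩ := Finset.exists_mem_ne (by rw [hc2 e1]; omega) u (s := (t e1).erase (f e1))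
  have hxA : x ∈ A' := by
    have := hcl e1 u hup (by simp) hx
    simpa [hxu] using this
  have hxw : x ≠ w := by rintro rfl; exact hwA hxA
  have hc2' : ∀ i, f' i ∈ t i → ((t i).erase (f' i)).card = 2 := fun i hi => by
    rw [Finset.card_erase_of_mem hi, ht i]
  have hadj1 : Adj t f' x w := by
    refine ⟨e1, eq_pair (hc2' e1 (by rw [hf'1]; exact hu1)) ?_ ?_ hxw⟩
    · rw [hf'1]; simp [hxu]; exact Finset.mem_of_mem_erase hx
    · rw [hf'1]; simp [huw.symm, hw1]
  have hA3 := hA2.insert hxA hwA hadj1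
  -- another edge at w
  obtain ⟨j, hj, hje⟩ : ∃ j ∈ Finset.univ.filter (fun i => w ∈ (t i).erase (f i)), j ≠ e2 := by
    apply Finset.exists_mem_ne
    have hev := h.even w
    have : 0 < (Finset.univ.filter (fun i => w ∈ (t i).erase (f i))).card :=
      Finset.card_pos.2 ⟨i0, by simpa using hi0⟩
    rw [Nat.even_iff] at hev
    omega
  have hj : w ∈ (t j).erase (f j) := (Finset.mem_filter.1 hj).2
  have hje1 : j ≠ e1 := by
    rintro rfl; simp [h1] at hj
  obtain ⟨y, hy, hyw⟩ := Finset.exists_mem_ne (by rw [hc2 j]; omega) w (s := (t j).erase (f j))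
  have hyA : y ∉ insert u A' := fun hh => hw (hcl j y hy hh hj)
  have hyA2 : y ∉ insert w A' := by
    simp at hyA ⊢; exact ⟨hyw, hyA.2⟩
  have hadj2 : Adj t f' w y := by
    refine ⟨j, ?_⟩
    rw [hf'e j hje1 hje]
    exact eq_pair (hc2 j) hj hy hyw.symm
  refine ⟨f', _, hval, hA3.insert (Finset.mem_insert_self w A') hyA2 hadj2, ?_⟩
  rw [Finset.card_insert_of_notMem hyA2, Finset.card_insert_of_notMem hwA,
    Finset.card_insert_of_notMem huA]
  omega

theorem main {V ι : Type} [DecidableEq V] [Fintype ι] [Fintype V] [DecidableEq ι]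
    (t : ι → Finset V) (i1 : ι) (ht : ∀ i, (t i).card = 3)
    (hpair : ∀ u w : V, u ≠ w → 2 ≤ (Finset.univ.filter fun i => u ∈ t i ∧ w ∈ t i).card) :
    ∃ a l, Trail t a a l ∧ l.Nodup ∧ ∀ i, i ∈ l := by
  classical
  obtain ⟨z, hz⟩ : (t i1).Nonempty := by rw [← Finset.card_pos, ht]; omega
  obtain ⟨f0, hf0⟩ := exists_valid t z ht hpair
  let P : ℕ → Prop := fun n => ∃ f A, Valid t f ∧ ConnSet (Adj t f) A ∧ A.card = n
  have hP0 : P 1 := ⟨f0, {z}, hf0, ConnSet.single z, by simp⟩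
  have hPb : ∀ n, P n → n ≤ Fintype.card V := by
    rintro n ⟨f, A, -, -, rfl⟩
    exact Finset.card_le_univ A
  have hmax := Nat.findGreatest_spec (P := P) (hPb 1 hP0) hP0
  set N := Nat.findGreatest P (Fintype.card V) with hN
  have hno : ∀ m, P m → m ≤ N := fun m h => Nat.le_findGreatest (hPb _ h) h
  obtain ⟨f, A, hf, hA, hcard⟩ := hmax
  have hno : ∀ f' A'', Valid t f' → ConnSet (Adj t f') A'' → ¬ A.card < A''.card := by
    intro f' A'' h1 h2 h3
    have := hno _ ⟨f', A'', h1, h2, rfl⟩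
    omega
  have hc2 : ∀ i, ((t i).erase (f i)).card = 2 := fun i => by
    rw [Finset.card_erase_of_mem (hf.1 i), ht i]
  have hcl : ∀ i, ∀ a ∈ (t i).erase (f i), a ∈ A → (t i).erase (f i) ⊆ A := by
    intro i a ha haA b hb
    by_contra hbA
    have hab : a ≠ b := by rintro rfl; exact hbA haA
    refine hno f _ hf (hA.insert haA hbA ⟨i, eq_pair (hc2 i) ha hb hab⟩) ?_
    rw [Finset.card_insert_of_notMem hbA]; omega
  have hall : ∀ i, ∀ w ∈ (t i).erase (f i), w ∈ A := by
    intro i w hw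
    by_contra hwA
    cases hA with
    | single a =>
      obtain ⟨y, hy, hyw⟩ :=
        Finset.exists_mem_ne (by rw [hc2 i]; omega) w (s := (t i).erase (f i))
      have hyn : y ∉ ({w} : Finset V) := by simpa using hyw
      refine hno f _ hf ((ConnSet.single w).insert (Finset.mem_singleton_self w) hyn
        ⟨i, eq_pair (hc2 i) hw hy hyw.symm⟩) ?_
      rw [Finset.card_insert_of_notMem hyn]; simp
    | @insert A' a u hA' ha huA hau =>
      have huw : u ≠ w := by rintro rfl; simp at hwA
      obtain ⟨e1, h1, e2, h2, he⟩ := Finset.one_lt_card.1 (hpair u w huw)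
      simp only [Finset.mem_filter, Finset.mem_univ, true_and] at h1 h2
      have hfe : ∀ e, u ∈ t e → w ∈ t e → f e = u ∨ f e = w := by
        intro e hu hw
        by_contra hcon
        push Not at hcon
        exact hwA (hcl e u (by simp [hu, hcon.1.symm]) (by simp) (by simp [hw, hcon.2.symm]))
      have hf1 := hfe e1 h1.1 h1.2
      have hf2 := hfe e2 h2.1 h2.2
      by_cases hw1 : f e1 = w
      · obtain ⟨f', A'', q1, q2, q3⟩ :=
          improve ht hf hA' huA hwA hcl hw he h1.1 h1.2 h2.1 h2.2 hw1 hf2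
        exact hno f' A'' q1 q2 q3
      by_cases hw2 : f e2 = w
      · obtain ⟨f', A'', q1, q2, q3⟩ :=
          improve ht hf hA' huA hwA hcl hw he.symm h2.1 h2.2 h1.1 h1.2 hw2 hf1
        exact hno f' A'' q1 q2 q3
      have hu1 : f e1 = u := hf1.resolve_right hw1
      have hu2 : f e2 = u := hf2.resolve_right hw2
      have hval := hf.exchange huw he h1.1 h1.2 h2.1 h2.2 hf1 hf2
      have hA := hA'.insert ha huA hau
      set f' := (fun i => if i = e1 ∨ i = e2 then Equiv.swap u w (f i) else f i) with hf'
      have hf'1 : f' e1 = w := by simp [hf', hu1]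
      have hw1p : w ∈ (t e1).erase (f e1) := by simp [hu1, huw.symm, h1.2]
      have hw2p : w ∈ (t e2).erase (f e2) := by simp [hu2, huw.symm, h2.2]
      have hA2 : ConnSet (Adj t f') (insert u A') := by
        refine hA.mono ?_
        rintro a ha b hb ⟨i, hi⟩
        have hsub : ∀ x ∈ (t i).erase (f i), x ∈ insert u A' := by
          intro x hx
          rw [hi, Finset.mem_insert, Finset.mem_singleton] at hx
          rcases hx with rfl | rfl <;> assumption
        refine ⟨i, ?_⟩
        have hi1 : i ≠ e1 := by rintro rfl; exact hwA (hsub w hw1p)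
        have hi2 : i ≠ e2 := by rintro rfl; exact hwA (hsub w hw2p)
        have : f' i = f i := by simp [hf', hi1, hi2]
        rw [this]; exact hi
      obtain ⟨x, hx, hxw⟩ :=
        Finset.exists_mem_ne (by rw [hc2 e1]; omega) w (s := (t e1).erase (f e1))
      have hxA : x ∉ insert u A' := fun hh => hwA (hcl e1 x hx hh hw1p)
      have hux : u ≠ x := by rintro rfl; simp at hxA
      refine hno f' _ hval (hA2.insert (Finset.mem_insert_self u A') hxA ⟨e1, ?_⟩) ?_
      · apply eq_pair _ _ _ hux
        · rw [Finset.card_erase_of_mem (hval.1 e1), ht]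
        · rw [hf'1]; simp [huw, h1.1]
        · rw [hf'1]; simp [hxw]; exact Finset.mem_of_mem_erase hx
      · rw [Finset.card_insert_of_notMem hxA]; omega
  obtain ⟨a0, ha0⟩ := hA.reach
  obtain ⟨a, l, htr, hl, hl2⟩ := euler (fun i => (t i).erase (f i)) hc2 hf.even a0
    (fun i v hv => ha0 v (hall i v hv))
  refine ⟨a, l, ?_, hl, hl2⟩
  clear hl hl2
  suffices ∀ b, Trail (fun i => (t i).erase (f i)) a b l → Trail t a b l from this a htr
  clear htr
  intro b h
  induction h with
  | nil a => exact Trail.nil a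
  | cons hab ha hb h ih =>
    exact Trail.cons hab (Finset.mem_of_mem_erase ha) (Finset.mem_of_mem_erase hb) ih

theorem Trail.toFin {V ι : Type} {t : ι → Finset V} {a b : V} {l : List ι}
    (h : Trail t a b l) : ∃ v : Fin (l.length + 1) → V, v 0 = a ∧ v (Fin.last _) = b ∧
      ∀ i : Fin l.length, v i.castSucc ≠ v i.succ ∧ v i.castSucc ∈ t (l.get i) ∧
        v i.succ ∈ t (l.get i) := by
  induction h with
  | nil a => exact ⟨fun _ => a, rfl, rfl, fun i => i.elim0⟩
  | @cons a b c i l hab ha hb h ih =>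
    obtain ⟨v, h0, h1, h2⟩ := ih
    refine ⟨Fin.cons (α := fun _ => V) a v, rfl, ?_, ?_⟩
    · exact h1
    · intro j
      refine Fin.cases ?_ ?_ j
      · refine ⟨?_, ?_, ?_⟩
        · change a ≠ v 0
          rw [h0]; exact hab
        · exact ha
        · change v 0 ∈ t i
          rw [h0]; exact hb
      · intro j
        exact h2 j

end TU


/-- Let `H` be a 3-uniform hypergraph of order at least 3 in which every pair of
distinct vertices lies together in at least two edges (counted with multiplicity).
Then `H` is eulerian. -/
theorem threeUniform_pairsTwice_eulerian {V : Type} [Fintype V] [DecidableEq V]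
    (hord : 3 ≤ Fintype.card V) (E : Multiset (Finset V))
    (hunif : ∀ f ∈ E, f.card = 3)
    (hpair : ∀ u w : V, u ≠ w →
      2 ≤ Multiset.card (E.filter fun f => u ∈ f ∧ w ∈ f)) :
    IsEulerian E := by


  classical
  obtain ⟨L, rfl⟩ := Quot.exists_rep E
  have hE : (Quot.mk _ L : Multiset (Finset V)) = Multiset.map L.get Finset.univ.val := by
    rw [Fin.univ_val_map, List.ofFn_get]; rfl
  rw [hE] at hunif hpair ⊢
  have hpair' : ∀ u w : V, u ≠ w →
      2 ≤ (Finset.univ.filter fun i => u ∈ L.get i ∧ w ∈ L.get i).card := by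
    intro u w huw
    have := hpair u w huw
    rw [Multiset.filter_map, Multiset.card_map] at this
    exact this
  have ht : ∀ i, (L.get i).card = 3 := fun i =>
    hunif _ (Multiset.mem_map_of_mem _ (Finset.mem_univ i))
  obtain ⟨u, w, huw⟩ := Fintype.exists_pair_of_one_lt_card (show 1 < Fintype.card V by omega)
  obtain ⟨i1, _⟩ := Finset.card_pos.1 (show 0 < _ from lt_of_lt_of_le Nat.zero_lt_two (hpair' u w huw))
  obtain ⟨a, l, htr, hl, hl2⟩ := TU.main L.get i1 ht hpair'
  obtain ⟨v, h0, h1, h2⟩ := htr.toFin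
  refine ⟨l.length, v, fun i => L.get (l.get i), ⟨by rw [h0, h1], h2⟩, ?_⟩
  have hlu : (l : Multiset (Fin L.length)) = Finset.univ.val := by
    rw [Multiset.Nodup.ext (by simpa using hl) Finset.univ.nodup]
    intro i
    simp [hl2 i]
  rw [← hlu, Multiset.map_coe]
  unfold walkEdges
  congr 1
  conv_rhs => rw [← List.ofFn_get l, List.map_ofFn]
  rfl
end

section
/- Every Steiner triple system of order n ≥ 13 is eulerian. -/
theorem exists_euler_tour {V : Type} [Fintype V] [DecidableEq V] (G : SimpleGraph V)
    [DecidableRel G.Adj] (r : V) (hev : ∀ v, Even (G.degree v))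
    (hconn : ∀ x y, G.Adj x y → G.Reachable r x) :
    ∃ (u : V) (p : G.Walk u u), p.IsTrail ∧ ∀ a b, G.Adj a b → s(a, b) ∈ p.edges := by
  classical
  let S : Set ℕ := {k | ∃ (u v : V) (p : G.Walk u v), p.IsTrail ∧ p.length = k}
  have hbdd : ∀ k ∈ S, k ≤ G.edgeFinset.card := by
    rintro k ⟨u, v, p, hp, rfl⟩
    exact hp.length_le_card_edgeFinset
  have hne : S.Nonempty := ⟨0, r, r, SimpleGraph.Walk.nil, by simp, by simp⟩
  have hB : BddAbove S := ⟨_, hbdd⟩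
  obtain ⟨u, v, p, hp, hlen⟩ := Nat.sSup_mem hne hB
  have hmax : ∀ (a b : V) (q : G.Walk a b), q.IsTrail → q.length ≤ p.length := by
    intro a b q hq
    rw [hlen]
    exact le_csSup hB ⟨a, b, q, hq, rfl⟩
  have hext : ∀ (a b : V) (q : G.Walk a b), q.IsTrail → q.length = p.length →
      ∀ x, G.Adj x a → s(x, a) ∈ q.edges := by
    intro a b q hq hl x hx
    by_contra hno
    have := hmax _ _ (SimpleGraph.Walk.cons hx q)
      ((SimpleGraph.Walk.isTrail_cons hx q).2 ⟨hq, hno⟩)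
    simp at this
    omega
  have huv : u = v := by
    by_contra hne
    have h1 := (hp.even_countP_edges_iff u)
    have h2 : p.edges.countP (fun e => u ∈ e) = G.degree u := by
      rw [List.countP_eq_length_filter, ← SimpleGraph.card_incidenceFinset_eq_degree,
        ← List.toFinset_card_of_nodup (hp.edges_nodup.filter _)]
      congr 1
      ext e
      simp only [List.mem_toFinset, List.mem_filter, decide_eq_true_eq,
        SimpleGraph.mem_incidenceFinset, SimpleGraph.incidenceSet, Set.mem_sep_iff]
      constructor
      · rintro ⟨h, h'⟩
        exact ⟨p.edges_subset_edgeSet h, h'⟩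
      · rintro ⟨h, h'⟩
        refine ⟨?_, h'⟩
        obtain ⟨x, rfl⟩ := Sym2.mem_iff_exists.1 h'
        rw [Sym2.eq_swap]
        exact hext _ _ p hp rfl x (by simpa using (SimpleGraph.mem_edgeSet G).1 h |>.symm)
    rw [h2] at h1
    exact ((h1.1 (hev u)) hne).1 rfl
  subst huv
  have hsup : ∀ x y, x ∈ p.support → G.Adj x y → s(x, y) ∈ p.edges := by
    intro x y hx hxy
    have := hext _ _ (p.rotate x hx) (hp.rotate hx) (by simp) y hxy.symm
    rw [Sym2.eq_swap]
    exact (p.rotate_edges x hx).mem_iff.1 this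
  have hstep : ∀ x y, G.Reachable x y → x ∈ p.support → y ∈ p.support := by
    rintro x y ⟨q⟩
    induction q with
    | nil => exact id
    | cons h q ih =>
      intro hx
      exact ih (p.snd_mem_support_of_mem_edges (hsup _ _ hx h))
  refine ⟨u, p, hp, fun a b hab => ?_⟩
  have h1 : ∃ c, G.Adj u c := by
    cases p with
    | nil =>
      have := hmax a b (SimpleGraph.Walk.cons hab SimpleGraph.Walk.nil) (by simp)
      simp at this
    | cons h q => exact ⟨_, h⟩
  obtain ⟨c, hc⟩ := h1
  exact hsup a b (hstep u a ((hconn _ _ hc).symm.trans (hconn _ _ hab)) (by simp)) hab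

theorem exists_bicoloring {U : Type} [Fintype U] (s t : U → U) (hs : ∀ x, s (s x) = x)
    (ht : ∀ x, t (t x) = x) (hs' : ∀ x, s x ≠ x) (ht' : ∀ x, t x ≠ x) :
    ∃ X : Set U, ∀ x, (s x ∈ X ↔ x ∉ X) ∧ (t x ∈ X ↔ x ∉ X) := by
  classical
  let σ : Equiv.Perm U := ⟨s, s, hs, hs⟩
  let τ : Equiv.Perm U := ⟨t, t, ht, ht⟩
  have hσ : σ * σ = 1 := by ext x; exact hs x
  have hτ : τ * τ = 1 := by ext x; exact ht x
  have hσi : σ⁻¹ = σ := inv_eq_of_mul_eq_one_left hσ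
  have hτi : τ⁻¹ = τ := inv_eq_of_mul_eq_one_left hτ
  let π := σ * τ
  have hc : σ * π * σ⁻¹ = π⁻¹ := by
    simp only [π, mul_inv_rev, hσi, hτi]
    rw [← mul_assoc, hσ, one_mul]
  have hck : ∀ k : ℤ, σ * π ^ k = π ^ (-k) * σ := by
    intro k
    have : σ * π ^ k * σ⁻¹ = π ^ (-k) := by
      rw [← conj_zpow, hc, inv_zpow, zpow_neg]
    rw [← this]; group
  have hπτ : σ * π = τ := by simp only [π]; rw [← mul_assoc, hσ, one_mul]
  have key : ∀ x, ¬ π.SameCycle x (s x) := by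
    rintro x ⟨k, hk⟩
    have hk' : (σ * π ^ k) x = x := by
      rw [Equiv.Perm.mul_apply, hk]; exact hs x
    rcases Int.even_or_odd' k with ⟨m, rfl | rfl⟩
    · apply hs' ((π ^ m) x)
      have h2 : σ * π ^ (2 * m) = π ^ (-m) * (σ * π ^ m) := by
        rw [hck m, hck, ← mul_assoc, ← zpow_add]; congr 2; ring
      rw [h2, Equiv.Perm.mul_apply, zpow_neg, Equiv.Perm.inv_eq_iff_eq] at hk'
      exact hk'
    · apply ht' ((π ^ m) x)
      have h2 : σ * π ^ (2 * m + 1) = π ^ (-m) * (τ * π ^ m) := by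
        rw [← hπτ, mul_assoc, ← zpow_one_add, hck, hck, ← mul_assoc, ← zpow_add]; congr 2; ring
      rw [h2, Equiv.Perm.mul_apply, zpow_neg, Equiv.Perm.inv_eq_iff_eq] at hk'
      exact hk'
  let Q := Quotient (Equiv.Perm.SameCycle.setoid π)
  let e : Q ≃ Fin (Fintype.card Q) := Fintype.equivFin Q
  let c : U → Fin (Fintype.card Q) := fun x => e (Quotient.mk _ x)
  have c_eq : ∀ x y, c x = c y ↔ π.SameCycle x y := by
    intro x y
    simp only [c, e.apply_eq_iff_eq]
    exact Quotient.eq (r := Equiv.Perm.SameCycle.setoid π)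
  have h1 : ∀ x, c x ≠ c (s x) := fun x h => key x ((c_eq _ _).1 h)
  have h2 : ∀ x, c (t x) = c (s x) := by
    intro x
    rw [c_eq]
    refine ⟨1, ?_⟩
    change (π ^ (1:ℤ) * τ) x = σ x
    rw [zpow_one]; simp only [π]; rw [mul_assoc, hτ, mul_one]
  have h3 : ∀ x, c (s (t x)) = c x := by
    intro x
    rw [eq_comm, c_eq]
    exact ⟨1, by simp [π, σ, τ]⟩
  refine ⟨{x | c x < c (s x)}, fun x => ?_⟩
  have := h1 x
  simp only [Set.mem_ofPred_eq, hs, h2, h3]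
  constructor <;> constructor <;> intro h <;> omega

structure Stq (V : Type) [DecidableEq V] where
  B : Finset (Finset V)
  t : V → V → V
  mem : ∀ u v, u ≠ v → ({u, v, t u v} : Finset V) ∈ B
  ne1 : ∀ u v, u ≠ v → t u v ≠ u
  ne2 : ∀ u v, u ≠ v → t u v ≠ v
  uniq : ∀ b ∈ B, ∀ u ∈ b, ∀ v ∈ b, u ≠ v → b = {u, v, t u v}
  two : ∀ b ∈ B, ∀ u ∈ b, ∃ v ∈ b, u ≠ v
  non : ∀ b ∈ B, b.Nonempty

namespace Stq

variable {V : Type} [DecidableEq V] (S : Stq V)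

def blk (u v : V) : Finset V := {u, v, S.t u v}

theorem mem_blk {u v x : V} : x ∈ S.blk u v ↔ x = u ∨ x = v ∨ x = S.t u v := by
  simp [blk]

theorem blk_mem {u v : V} (h : u ≠ v) : S.blk u v ∈ S.B := S.mem u v h

theorem eq_blk {b : Finset V} (hb : b ∈ S.B) {u v : V} (hu : u ∈ b) (hv : v ∈ b) (h : u ≠ v) :
    b = S.blk u v := S.uniq b hb u hu v hv h

theorem left_mem (u v : V) : u ∈ S.blk u v := by simp [blk]
theorem right_mem (u v : V) : v ∈ S.blk u v := by simp [blk]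
theorem t_mem (u v : V) : S.t u v ∈ S.blk u v := by simp [blk]

theorem t_eq {b : Finset V} (hb : b ∈ S.B) {u v x : V} (hu : u ∈ b) (hv : v ∈ b) (hx : x ∈ b)
    (h : u ≠ v) (h1 : x ≠ u) (h2 : x ≠ v) : S.t u v = x := by
  have := S.eq_blk hb hu hv h
  rw [this, mem_blk] at hx
  tauto

theorem blk_comm {u v : V} (h : u ≠ v) : S.blk u v = S.blk v u :=
  S.eq_blk (S.blk_mem h) (S.right_mem u v) (S.left_mem u v) h.symm

theorem t_comm {u v : V} (h : u ≠ v) : S.t u v = S.t v u :=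
  S.t_eq (S.blk_mem h.symm) (S.right_mem _ _) (S.left_mem _ _) (S.t_mem _ _) h
    (S.ne2 _ _ h.symm) (S.ne1 _ _ h.symm)

theorem t_t {u v : V} (h : u ≠ v) : S.t u (S.t u v) = v :=
  S.t_eq (S.blk_mem h) (S.left_mem _ _) (S.t_mem _ _) (S.right_mem _ _) (S.ne1 _ _ h).symm
    h.symm (S.ne2 _ _ h).symm

theorem blk_t {u v : V} (h : u ≠ v) : S.blk u (S.t u v) = S.blk u v :=
  (S.eq_blk (S.blk_mem h) (S.left_mem _ _) (S.t_mem _ _) (S.ne1 _ _ h).symm).symm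

/-- The graph of selected pairs, `h b` being the omitted vertex of block `b`. -/
def gr (h : Finset V → V) : SimpleGraph V where
  Adj u v := u ≠ v ∧ h (S.blk u v) = S.t u v
  symm := ⟨by
    rintro u v ⟨h1, h2⟩
    exact ⟨h1.symm, by rw [S.blk_comm h1.symm, h2, S.t_comm h1]⟩⟩
  loopless := ⟨fun u hu => hu.1 rfl⟩

theorem gr_adj {h : Finset V → V} {u v : V} :
    (S.gr h).Adj u v ↔ u ≠ v ∧ h (S.blk u v) = S.t u v := Iff.rfl

instance (h : Finset V → V) : DecidableRel (S.gr h).Adj := fun u v =>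
  decidable_of_iff (u ≠ v ∧ h (S.blk u v) = S.t u v) Iff.rfl

theorem degree_gr [Fintype V] {h : Finset V → V} (hh : ∀ b ∈ S.B, h b ∈ b) (v : V) :
    (S.gr h).degree v = (S.B.filter fun b => v ∈ b ∧ h b ≠ v).card := by
  rw [← SimpleGraph.card_neighborFinset_eq_degree]
  refine Finset.card_bij (fun x _ => S.blk v x) ?_ ?_ ?_
  · intro x hx
    rw [SimpleGraph.mem_neighborFinset, gr_adj] at hx
    simp only [Finset.mem_filter]
    exact ⟨S.blk_mem hx.1, S.left_mem _ _, by rw [hx.2]; exact S.ne1 _ _ hx.1⟩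
  · intro x hx y hy hxy
    rw [SimpleGraph.mem_neighborFinset, gr_adj] at hx hy
    rw [← S.t_t hx.1, ← S.t_t hy.1, ← hx.2, ← hy.2]
    rw [hxy]
  · intro b hb
    simp only [Finset.mem_filter] at hb
    obtain ⟨hb, hv, hne⟩ := hb
    have e := S.eq_blk hb hv (hh b hb) hne.symm
    have e2 : S.blk v (S.t v (h b)) = b := by rw [S.blk_t hne.symm]; exact e.symm
    refine ⟨S.t v (h b), ?_, e2⟩
    rw [SimpleGraph.mem_neighborFinset, gr_adj, e2, S.t_t hne.symm]
    exact ⟨(S.ne1 _ _ hne.symm).symm, rfl⟩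

theorem eulerian_of [Fintype V] {h : Finset V → V} (hh : ∀ b ∈ S.B, h b ∈ b)
    (r : V) (hev : ∀ v, Even ((S.gr h).degree v))
    (hconn : ∀ x y, (S.gr h).Adj x y → (S.gr h).Reachable r x) : IsEulerian S.B.val := by
  obtain ⟨u, p, hp, hall⟩ := exists_euler_tour (S.gr h) r hev hconn
  refine ⟨p.length, fun i => p.getVert i, fun i => S.blk (p.getVert i) (p.getVert (i + 1)),
    ⟨by simp, ?_⟩, ?_⟩
  · intro i
    have := p.adj_getVert_succ i.2
    simp only [Fin.val_castSucc, Fin.val_succ]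
    exact ⟨this.ne, S.left_mem _ _, S.right_mem _ _⟩
  · have hnd : (List.ofFn fun i : Fin p.length =>
        S.blk (p.getVert i) (p.getVert (i + 1))).Nodup := by
      rw [List.nodup_ofFn]
      intro i j hij
      simp only at hij
      have hi := p.adj_getVert_succ i.2
      have hj := p.adj_getVert_succ j.2
      have h1 := hi.2
      have h2 := hj.2
      rw [hij, h2] at h1
      have hs : s(p.getVert i, p.getVert (i + 1)) = s(p.getVert j, p.getVert (j + 1)) := by
        have a1 := S.left_mem (p.getVert i) (p.getVert (i + 1))
        have a2 := S.right_mem (p.getVert i) (p.getVert (i + 1))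
        rw [hij, mem_blk, h1] at a1 a2
        have b1 := S.ne1 _ _ hi.1
        have b2 := S.ne2 _ _ hi.1
        have b3 := hi.1
        rw [Sym2.eq_iff]
        grind
      have e1 : p.edges[(i : ℕ)]'(by simp) = s(p.getVert i, p.getVert (i + 1)) := by
        rw [SimpleGraph.Walk.getElem_edges]
      have e2 : p.edges[(j : ℕ)]'(by simp) = s(p.getVert j, p.getVert (j + 1)) := by
        rw [SimpleGraph.Walk.getElem_edges]
      rw [← e1, ← e2, hp.edges_nodup.getElem_inj_iff] at hs
      exact Fin.ext hs
    unfold walkEdges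
    rw [Multiset.Nodup.ext (Multiset.coe_nodup.2 hnd) S.B.nodup]
    intro b
    simp only [Multiset.mem_coe, List.mem_ofFn, Finset.mem_val]
    constructor
    · rintro ⟨i, rfl⟩
      exact S.blk_mem (p.adj_getVert_succ i.2).1
    · intro hb
      obtain ⟨v, hv, hne⟩ := S.two b hb _ (hh b hb)
      have e := S.eq_blk hb hv (hh b hb) hne.symm
      have e2 : S.blk v (S.t v (h b)) = b := by rw [S.blk_t hne.symm]; exact e.symm
      have hadj : (S.gr h).Adj v (S.t v (h b)) := by
        rw [gr_adj, e2, S.t_t hne.symm]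
        exact ⟨(S.ne1 _ _ hne.symm).symm, rfl⟩
      obtain ⟨i, hi, hie⟩ := List.mem_iff_getElem.1 (hall _ _ hadj)
      rw [SimpleGraph.Walk.length_edges] at hi
      refine ⟨⟨i, hi⟩, ?_⟩
      rw [SimpleGraph.Walk.getElem_edges, Sym2.eq_iff] at hie
      simp only
      rcases hie with ⟨h1, h2⟩ | ⟨h1, h2⟩
      · rw [h1, h2, e2]
      · rw [h1, h2, S.blk_comm hadj.1.symm, e2]

end Stq

theorem exists_stq {V : Type} [DecidableEq V] (E : Multiset (Finset V))
    (hH : IsTripleSystem E 1) : ∃ S : Stq V, S.B.val = E := by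
  classical
  obtain ⟨-, h3, hp⟩ := hH
  have huniq : ∀ u v, u ≠ v → ∀ b ∈ E, ∀ c ∈ E, u ∈ b → v ∈ b → u ∈ c → v ∈ c → b = c := by
    intro u v huv b hb c hc h1 h2 h3 h4
    obtain ⟨d, hd⟩ := Multiset.card_eq_one.1 (hp u v huv)
    have hb' : b ∈ E.filter fun f => u ∈ f ∧ v ∈ f := Multiset.mem_filter.2 ⟨hb, h1, h2⟩
    have hc' : c ∈ E.filter fun f => u ∈ f ∧ v ∈ f := Multiset.mem_filter.2 ⟨hc, h3, h4⟩
    rw [hd, Multiset.mem_singleton] at hb' hc'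
    rw [hb', hc']
  have hnd : E.Nodup := by
    rw [Multiset.nodup_iff_count_le_one]
    intro b
    by_cases hb : b ∈ E
    · obtain ⟨x, y, z, hxy, -, -, rfl⟩ := Finset.card_eq_three.1 (h3 b hb)
      rw [← hp x y hxy, ← Multiset.count_filter_of_pos (p := fun f => x ∈ f ∧ y ∈ f) (by simp)]
      exact Multiset.count_le_card _ _
    · rw [Multiset.count_eq_zero_of_notMem hb]; exact Nat.zero_le _
  have hex : ∀ u v, ∃ w, u ≠ v → ({u, v, w} : Finset V) ∈ E ∧ w ≠ u ∧ w ≠ v := by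
    intro u v
    by_cases huv : u = v
    · exact ⟨u, fun h => (h huv).elim⟩
    obtain ⟨d, hd⟩ := Multiset.card_eq_one.1 (hp u v huv)
    have hd' : d ∈ E.filter fun f => u ∈ f ∧ v ∈ f := by rw [hd]; simp
    obtain ⟨hd1, hu, hv⟩ := Multiset.mem_filter.1 hd'
    have hsub : ({u, v} : Finset V) ⊆ d := by
      intro x; simp only [Finset.mem_insert, Finset.mem_singleton]; rintro (rfl | rfl) <;> assumption
    have hc : (d \ {u, v}).card = 1 := by
      rw [Finset.card_sdiff_of_subset hsub, h3 d hd1, Finset.card_pair huv]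
    obtain ⟨w, hw⟩ := Finset.card_eq_one.1 hc
    have hwm : w ∈ d \ {u, v} := by rw [hw]; simp
    refine ⟨w, fun _ => ?_⟩
    have : ({u, v, w} : Finset V) = d := by
      ext x
      have := Finset.ext_iff.1 hw x
      simp at this hwm ⊢
      grind
    rw [this]
    simp at hwm
    tauto
  choose t ht using hex
  refine ⟨⟨⟨E, hnd⟩, t, fun u v h => (ht u v h).1, fun u v h => (ht u v h).2.1,
    fun u v h => (ht u v h).2.2, ?_, ?_, ?_⟩, rfl⟩
  · intro b hb u hu v hv huv
    exact huniq u v huv b hb _ (ht u v huv).1 hu hv (by simp) (by simp)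
  · intro b hb u hu
    obtain ⟨v, hv, h⟩ := Finset.exists_mem_ne (s := b) (by rw [h3 b hb]; norm_num) u
    exact ⟨v, hv, h.symm⟩
  · intro b hb
    rw [← Finset.card_pos, h3 b hb]; norm_num

namespace Stq

variable {V : Type} [DecidableEq V] (S : Stq V)

/-- Parity of the degree of `v` in the graph selected from the blocks avoiding `z`. -/
def D (z : V) (f : Finset V → V) (v : V) : ZMod 2 :=
  ∑ b ∈ S.B.filter (fun b => z ∉ b), if v ∈ b ∧ f b ≠ v then 1 else 0

theorem toggle (z : V) (f : Finset V → V) (hf : ∀ b ∈ S.B, f b ∈ b) {a x : V} (hax : a ≠ x)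
    (hz : z ∉ S.blk a x) (hfa : f (S.blk a x) = a ∨ f (S.blk a x) = x) :
    ∃ f' : Finset V → V, (∀ b ∈ S.B, f' b ∈ b) ∧ (∀ c, c ≠ S.blk a x → f' c = f c) ∧
      (f' (S.blk a x) = a ∨ f' (S.blk a x) = x) ∧ ∀ v, S.D z f' v = S.D z f v + if v = a ∨ v = x then 1 else 0 := by
  have e11 : (1 : ZMod 2) + 1 = 0 := by decide
  refine ⟨Function.update f (S.blk a x) (if f (S.blk a x) = a then x else a), ?_, ?_, ?_, ?_⟩
  · intro b hb
    by_cases h : b = S.blk a x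
    · subst h
      rw [Function.update_self]
      split_ifs
      · exact S.right_mem _ _
      · exact S.left_mem _ _
    · rw [Function.update_of_ne h]; exact hf b hb
  · intro c hc
    rw [Function.update_of_ne hc]
  · rw [Function.update_self]; split_ifs <;> simp
  · intro v
    have h1 : (if v = a ∨ v = x then (1 : ZMod 2) else 0) =
        ∑ b ∈ S.B.filter (fun b => z ∉ b),
          if b = S.blk a x then (if v = a ∨ v = x then (1 : ZMod 2) else 0) else 0 := by
      rw [Finset.sum_ite_eq']
      exact (if_pos (Finset.mem_filter.2 ⟨S.blk_mem hax, hz⟩)).symm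
    rw [h1, D, D, ← Finset.sum_add_distrib]
    refine Finset.sum_congr rfl fun b _ => ?_
    by_cases h : b = S.blk a x
    · subst h
      rw [Function.update_self]
      have m1 := S.left_mem a x
      have m2 := S.right_mem a x
      grind
    · rw [Function.update_of_ne h]
      simp [h]

theorem not_mem_blk {a x u : V} (hau : a ≠ u) (hax : a ≠ x) (h1 : x ≠ u) (h2 : x ≠ S.t a u) :
    u ∉ S.blk a x := by
  rw [mem_blk]
  rintro (h | h | h)
  · exact hau h.symm
  · exact h1 h.symm
  · apply h2; rw [h, S.t_t hax]

variable [Fintype V]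

def Nb (z y : V) (D0 : Finset V) (f : Finset V → V) (a : V) : Finset V :=
  Finset.univ.filter fun x => x ≠ a ∧ z ∉ S.blk a x ∧ y ∉ S.blk a x ∧ S.t z y ∉ S.blk a x ∧
    S.blk a x ≠ D0 ∧ (f (S.blk a x) = a ∨ f (S.blk a x) = x)

theorem card_Nb (z y : V) (D0 : Finset V) (hD0 : D0.card ≤ 3)
    (f : Finset V → V) (hf : ∀ b ∈ S.B, f b ∈ b) (a : V) (haz : a ≠ z) (hay : a ≠ y)
    (haw : a ≠ S.t z y) :
    Fintype.card V ≤ 7 + 2 * (S.Nb z y D0 f a).card + if a ∈ D0 then 2 else 0 := by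
  set w := S.t z y
  set T : Finset V := {a, z, S.t a z, y, S.t a y, w, S.t a w}
  have hT : T.card ≤ 7 := by
    simp only [T]
    have h6 : ({z, S.t a z, y, S.t a y, w, S.t a w} : Finset V).card ≤ 6 := Finset.card_le_six
    have := Finset.card_insert_le a ({z, S.t a z, y, S.t a y, w, S.t a w} : Finset V)
    omega
  set F : Finset V := if a ∈ D0 then D0.erase a else ∅
  have hF : F.card ≤ if a ∈ D0 then 2 else 0 := by
    simp only [F]
    split_ifs with h
    · rw [Finset.card_erase_of_mem h]; omega
    · simp
  have hcov : (Finset.univ : Finset V) ⊆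
      ((T ∪ F) ∪ S.Nb z y D0 f a) ∪ (S.Nb z y D0 f a).image (S.t a) := by
    intro x _
    by_contra hx
    simp only [Finset.mem_union, not_or] at hx
    obtain ⟨⟨⟨hxT, hxF⟩, hxN⟩, hxI⟩ := hx
    simp only [T, Finset.mem_insert, Finset.mem_singleton, not_or] at hxT
    obtain ⟨x1, x2, x3, x4, x5, x6, x7⟩ := hxT
    have hax : a ≠ x := Ne.symm x1
    have n1 := S.not_mem_blk haz hax x2 x3
    have n2 := S.not_mem_blk hay hax x4 x5
    have n3 := S.not_mem_blk haw hax x6 x7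
    have n4 : S.blk a x ≠ D0 := by
      intro h
      apply hxF
      have : a ∈ D0 := by rw [← h]; exact S.left_mem _ _
      simp only [F, if_pos this]
      rw [Finset.mem_erase, ← h]
      exact ⟨x1, S.right_mem _ _⟩
    have hm := hf _ (S.blk_mem hax)
    rw [mem_blk] at hm
    rcases hm with hm | hm | hm
    · exact hxN (by simp only [Nb, Finset.mem_filter]; exact ⟨by simp, x1, n1, n2, n3, n4, Or.inl hm⟩)
    · exact hxN (by simp only [Nb, Finset.mem_filter]; exact ⟨by simp, x1, n1, n2, n3, n4, Or.inr hm⟩)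
    · apply hxI
      rw [Finset.mem_image]
      refine ⟨S.t a x, ?_, S.t_t hax⟩
      simp only [Nb, Finset.mem_filter, S.blk_t hax]
      exact ⟨by simp, S.ne1 _ _ hax, n1, n2, n3, n4, Or.inr hm⟩
  have c1 := Finset.card_le_card hcov
  have c2 := Finset.card_union_le ((T ∪ F) ∪ S.Nb z y D0 f a) ((S.Nb z y D0 f a).image (S.t a))
  have c3 := Finset.card_union_le (T ∪ F) (S.Nb z y D0 f a)
  have c4 := Finset.card_union_le T F
  have c5 := Finset.card_image_le (s := S.Nb z y D0 f a) (f := S.t a)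
  rw [Finset.card_univ] at c1
  omega

def bad (z y : V) (f : Finset V → V) : Finset V :=
  Finset.univ.filter fun v => (v ≠ z ∧ v ≠ y ∧ v ≠ S.t z y) ∧ S.D z f v = 0 ∧ S.D z f (S.t z v) = 0

theorem zmod_cases (a : ZMod 2) : a = 0 ∨ a = 1 := by
  revert a; decide

theorem step1 (z y : V) (D0 : Finset V) (f : Finset V → V)
    (hf : ∀ b ∈ S.B, f b ∈ b) (a : V) (ha : a ∈ S.bad z y f) (x : V) (hx : x ∈ S.Nb z y D0 f a)
    (hc : S.D z f x = 0 ∨ S.D z f (S.t z x) = 1) :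
    ∃ f' : Finset V → V, (∀ b ∈ S.B, f' b ∈ b) ∧
      (∀ b ∈ S.B, (y ∈ b ∨ S.t z y ∈ b ∨ b = D0) → f' b = f b) ∧
      (S.bad z y f').card < (S.bad z y f).card := by
  simp only [Nb, Finset.mem_filter] at hx
  obtain ⟨-, hxa, n1, n2, n3, n4, hfx⟩ := hx
  obtain ⟨f', h1, h2, -, h3⟩ := S.toggle z f hf hxa.symm n1 hfx
  refine ⟨f', h1, ?_, ?_⟩
  · intro b _ h
    apply h2
    rintro rfl
    rcases h with h | h | h <;> contradiction
  · have e11 : (1 : ZMod 2) + 1 = 0 := by decide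
    have e01 : (0 : ZMod 2) ≠ 1 := by decide
    simp only [bad, Finset.mem_filter] at ha
    obtain ⟨-, ⟨a1, a2, a3⟩, a4, a5⟩ := ha
    apply Finset.card_lt_card
    rw [Finset.ssubset_iff_of_subset]
    · refine ⟨a, by simp [bad, *], ?_⟩
      simp [bad, h3, a4]
    · intro v hv
      simp only [bad, Finset.mem_filter] at hv ⊢
      obtain ⟨-, ⟨v1, v2, v3⟩, v4, v5⟩ := hv
      rw [h3] at v4 v5
      have z1 : x ≠ z := by rintro rfl; exact n1 (S.right_mem _ _)
      have k1 := S.t_t v1.symm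
      have k2 := S.t_t z1.symm
      have k3 := S.ne2 z x z1.symm
      have k4 : S.t z x ≠ a := by
        intro h
        apply n1
        have := S.t_mem x z
        rw [← S.t_comm z1.symm, h] at this
        have e := S.eq_blk (S.blk_mem z1) this (S.left_mem _ _) hxa.symm
        rw [← e]; exact S.right_mem _ _
      have := zmod_cases (S.D z f x)
      refine ⟨Finset.mem_univ _, ⟨v1, v2, v3⟩, ?_⟩
      have k5 := S.t_t a1.symm
      grind

theorem step2 (z y : V) (D0 : Finset V) (f : Finset V → V)
    (hf : ∀ b ∈ S.B, f b ∈ b) (a : V) (ha : a ∈ S.bad z y f) (x : V) (hx : x ∈ S.Nb z y D0 f a)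
    (hx' : x ∈ S.Nb z y D0 f (S.t z a)) :
    ∃ f' : Finset V → V, (∀ b ∈ S.B, f' b ∈ b) ∧
      (∀ b ∈ S.B, (y ∈ b ∨ S.t z y ∈ b ∨ b = D0) → f' b = f b) ∧
      (S.bad z y f').card < (S.bad z y f).card := by
  simp only [bad, Finset.mem_filter] at ha
  obtain ⟨-, ⟨a1, a2, a3⟩, a4, a5⟩ := ha
  simp only [Nb, Finset.mem_filter] at hx hx'
  obtain ⟨-, hxa, n1, n2, n3, n4, hfx⟩ := hx
  obtain ⟨-, hxb, m1, m2, m3, m4, hfx'⟩ := hx'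
  obtain ⟨f', h1, h2, -, h3⟩ := S.toggle z f hf hxa.symm n1 hfx
  have hab : S.t z a ≠ a := S.ne2 _ _ a1.symm
  have hne : S.blk (S.t z a) x ≠ S.blk a x := by
    intro h
    have e : S.t z a ∈ S.blk a x := by rw [← h]; exact S.left_mem _ _
    have e2 := S.eq_blk (S.blk_mem hxa.symm) (S.left_mem _ _) e hab.symm
    apply n1
    rw [e2, ← S.eq_blk (S.blk_mem a1.symm) (S.right_mem _ _) (S.t_mem _ _) hab.symm]
    exact S.left_mem _ _
  obtain ⟨f'', g1, g2, -, g3⟩ := S.toggle z f' h1 hxb.symm m1 (by rwa [h2 _ hne])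
  refine ⟨f'', g1, ?_, ?_⟩
  · intro b _ h
    rw [g2, h2]
    · rintro rfl
      rcases h with h | h | h <;> contradiction
    · rintro rfl
      rcases h with h | h | h <;> contradiction
  · have e11 : (1 : ZMod 2) + 1 = 0 := by decide
    have e01 : (0 : ZMod 2) ≠ 1 := by decide
    apply Finset.card_lt_card
    rw [Finset.ssubset_iff_of_subset]
    · refine ⟨a, by simp [bad, *], ?_⟩
      simp [bad, h3, g3, a4, hab.symm, hxa.symm]
    · intro v hv
      simp only [bad, Finset.mem_filter] at hv ⊢
      obtain ⟨-, ⟨v1, v2, v3⟩, v4, v5⟩ := hv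
      rw [g3, h3] at v4 v5
      have k1 := S.t_t v1.symm
      refine ⟨Finset.mem_univ _, ⟨v1, v2, v3⟩, ?_⟩
      grind

theorem step (hn : 13 ≤ Fintype.card V) (z y : V) (hzy : z ≠ y) (D0 : Finset V) (hD : D0 ∈ S.B)
    (hzD : z ∉ D0) (hD3 : D0.card ≤ 3)
    (f : Finset V → V) (hf : ∀ b ∈ S.B, f b ∈ b) (a : V) (ha : a ∈ S.bad z y f) :
    ∃ f' : Finset V → V, (∀ b ∈ S.B, f' b ∈ b) ∧
      (∀ b ∈ S.B, (y ∈ b ∨ S.t z y ∈ b ∨ b = D0) → f' b = f b) ∧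
      (S.bad z y f').card < (S.bad z y f).card := by
  by_contra hcon
  have ha' := ha
  simp only [bad, Finset.mem_filter] at ha'
  obtain ⟨-, ⟨a1, a2, a3⟩, a4, a5⟩ := ha'
  set b := S.t z a with hb
  have hab : b ≠ a := S.ne2 _ _ a1.symm
  have b1 : b ≠ z := S.ne1 _ _ a1.symm
  have hba : S.t z b = a := S.t_t a1.symm
  have b2 : b ≠ y := by rintro h; rw [h] at hba; exact a3 hba.symm
  have b3 : b ≠ S.t z y := by
    rintro h; rw [h, S.t_t hzy] at hba; exact a2 hba.symm
  have hbbad : b ∈ S.bad z y f := by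
    simp [bad, b1, b2, b3, a5, hba, a4]
  set M := S.Nb z y D0 f a
  set M' := S.Nb z y D0 f b
  have hdis : Disjoint M M' := by
    rw [Finset.disjoint_left]
    intro x h1 h2
    exact hcon (S.step2 z y D0 f hf a ha x h1 h2)
  have crit : ∀ x ∈ M ∪ M', S.D z f x = 1 ∧ S.D z f (S.t z x) = 0 := by
    intro x hx
    have : ¬ (S.D z f x = 0 ∨ S.D z f (S.t z x) = 1) := by
      intro h
      rcases Finset.mem_union.1 hx with hx | hx
      · exact hcon (S.step1 z y D0 f hf a ha x hx h)
      · exact hcon (S.step1 z y D0 f hf b hbbad x hx h)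
    have q1 := zmod_cases (S.D z f x)
    have q2 := zmod_cases (S.D z f (S.t z x))
    tauto
  have avoid : ∀ x ∈ M ∪ M', x ≠ z ∧ x ≠ y ∧ x ≠ S.t z y := by
    intro x hx
    rcases Finset.mem_union.1 hx with hx | hx <;>
    · simp only [M, M', Nb, Finset.mem_filter] at hx
      obtain ⟨-, hxa, n1, n2, n3, n4, hfx⟩ := hx
      refine ⟨?_, ?_, ?_⟩ <;> rintro rfl
      · exact n1 (S.right_mem _ _)
      · exact n2 (S.right_mem _ _)
      · exact n3 (S.right_mem _ _)
  have avoid2 : ∀ x ∈ M ∪ M', x ≠ a ∧ x ≠ b := by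
    intro x hx
    have := (crit x hx).1
    constructor <;> rintro rfl
    · rw [a4] at this; exact absurd this (by decide)
    · rw [a5] at this; exact absurd this (by decide)
  have hdis2 : Disjoint (M ∪ M') ((M ∪ M').image (S.t z)) := by
    rw [Finset.disjoint_left]
    intro x h1 h2
    obtain ⟨u, hu, rfl⟩ := Finset.mem_image.1 h2
    have := (crit _ h1).1
    rw [(crit _ hu).2] at this
    exact absurd this (by decide)
  have hinj : ((M ∪ M').image (S.t z)).card = (M ∪ M').card := by
    apply Finset.card_image_of_injOn
    intro u hu v hv huv
    rw [← S.t_t (avoid u hu).1.symm, ← S.t_t (avoid v hv).1.symm]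
    exact congrArg _ huv
  set T : Finset V := {z, y, S.t z y, a, b}
  have hT : T.card = 5 := by
    simp only [T]
    have := S.ne1 z y hzy
    have := S.ne2 z y hzy
    rw [Finset.card_insert_of_notMem, Finset.card_insert_of_notMem, Finset.card_insert_of_notMem,
      Finset.card_pair hab.symm] <;> simp <;> grind
  have hdis3 : Disjoint T ((M ∪ M') ∪ (M ∪ M').image (S.t z)) := by
    rw [Finset.disjoint_right]
    intro x hx
    simp only [T, Finset.mem_insert, Finset.mem_singleton, not_or]
    rcases Finset.mem_union.1 hx with hx | hx
    · have := avoid x hx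
      have := avoid2 x hx
      tauto
    · obtain ⟨u, hu, rfl⟩ := Finset.mem_image.1 hx
      have q1 := avoid u hu
      have q2 := avoid2 u hu
      have q3 := S.t_t q1.1.symm
      have q4 := S.ne1 z u q1.1.symm
      have q5 := S.t_t hzy
      refine ⟨q4, ?_, ?_, ?_, ?_⟩ <;> intro h <;> rw [h] at q3 <;> grind
  have c1 := Finset.card_le_univ (T ∪ ((M ∪ M') ∪ (M ∪ M').image (S.t z)))
  rw [Finset.card_union_of_disjoint hdis3, Finset.card_union_of_disjoint hdis2, hinj,
    Finset.card_union_of_disjoint hdis, hT] at c1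
  have c2 := S.card_Nb z y D0 hD3 f hf a a1 a2 a3
  have c3 := S.card_Nb z y D0 hD3 f hf b b1 b2 b3
  have hnot : ¬ (a ∈ D0 ∧ b ∈ D0) := by
    rintro ⟨h1, h2⟩
    apply hzD
    rw [S.eq_blk hD h1 h2 hab.symm,
      ← S.eq_blk (S.blk_mem a1.symm) (S.right_mem _ _) (S.t_mem _ _) hab.symm]
    exact S.left_mem _ _
  change _ ≤ 7 + 2 * M.card + _ at c2
  change _ ≤ 7 + 2 * M'.card + _ at c3
  split_ifs at c2 c3
  · tauto
  all_goals omega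

theorem repair (hn : 13 ≤ Fintype.card V) (z y : V) (hzy : z ≠ y) (D0 : Finset V) (hD : D0 ∈ S.B)
    (hzD : z ∉ D0) (hD3 : D0.card ≤ 3) : ∀ (k : ℕ)
    (f : Finset V → V) (_ : ∀ b ∈ S.B, f b ∈ b) (_ : (S.bad z y f).card ≤ k),
    ∃ f' : Finset V → V, (∀ b ∈ S.B, f' b ∈ b) ∧
      (∀ b ∈ S.B, (y ∈ b ∨ S.t z y ∈ b ∨ b = D0) → f' b = f b) ∧
      S.bad z y f' = ∅ := by
  intro k
  induction k with
  | zero =>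
    intro f hf hk
    exact ⟨f, hf, fun _ _ _ => rfl, Finset.card_eq_zero.1 (by omega)⟩
  | succ k ih =>
    intro f hf hk
    rcases (S.bad z y f).eq_empty_or_nonempty with h | ⟨a, ha⟩
    · exact ⟨f, hf, fun _ _ _ => rfl, h⟩
    · obtain ⟨f1, h1, h2, h3⟩ := S.step hn z y hzy D0 hD hzD hD3 f hf a ha
      obtain ⟨f2, g1, g2, g3⟩ := ih f1 h1 (by omega)
      exact ⟨f2, g1, fun b hb h => (g2 b hb h).trans (h2 b hb h), g3⟩

end Stq

namespace Stq

variable {V : Type} [DecidableEq V] (S : Stq V)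

theorem D_congr (z : V) (f g : Finset V → V) (v : V)
    (h : ∀ b ∈ S.B, z ∉ b → v ∈ b → f b = g b) : S.D z f v = S.D z g v := by
  unfold D
  refine Finset.sum_congr rfl fun b hb => ?_
  rw [Finset.mem_filter] at hb
  by_cases hv : v ∈ b
  · rw [h b hb.1 hb.2 hv]
  · simp [hv]

theorem degree_cast [Fintype V] (z : V) {h : Finset V → V} (hh : ∀ b ∈ S.B, h b ∈ b) (v : V)
    (hv : v ≠ z) : ((S.gr h).degree v : ZMod 2) =
      S.D z h v + if h (S.blk z v) ≠ v then 1 else 0 := by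
  rw [S.degree_gr hh, Finset.card_filter, Nat.cast_sum,
    ← Finset.sum_filter_add_sum_filter_not S.B (fun b => z ∉ b)]
  congr 1
  · unfold D
    refine Finset.sum_congr rfl fun b _ => ?_
    split_ifs <;> simp
  · rw [Finset.sum_eq_single (S.blk z v)]
    · have := S.right_mem z v
      simp only [this, true_and]
      split_ifs <;> simp
    · intro b hb hne
      rw [Finset.mem_filter, not_not] at hb
      rw [if_neg, Nat.cast_zero]
      rintro ⟨h1, -⟩
      exact hne (S.eq_blk hb.1 hb.2 h1 hv.symm)
    · intro hb
      exact (hb (by rw [Finset.mem_filter, not_not]; exact ⟨S.blk_mem hv.symm, S.left_mem _ _⟩)).elim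

theorem exists_coloring [Fintype V] (z y : V) (hzy : z ≠ y) :
    ∃ P : V → Prop, ∀ v, v ≠ z → v ≠ y → v ≠ S.t z y →
      (P (S.t y v) ↔ ¬ P v) ∧ (P (S.t (S.t z y) v) ↔ ¬ P v) := by
  classical
  set w := S.t z y with hw
  have hwz : w ≠ z := S.ne1 _ _ hzy
  have hwy : w ≠ y := S.ne2 _ _ hzy
  have t1 : S.t y z = w := (S.t_comm hzy.symm)
  have t2 : S.t y w = z := by rw [← t1]; exact S.t_t hzy.symm
  have t3 : S.t w y = z := by rw [S.t_comm hwy, t2]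
  have t4 : S.t w z = y := by rw [← t3]; exact S.t_t hwy
  have cl1 : ∀ v, (v ≠ z ∧ v ≠ y ∧ v ≠ w) → (S.t y v ≠ z ∧ S.t y v ≠ y ∧ S.t y v ≠ w) := by
    rintro v ⟨h1, h2, h3⟩
    have := S.t_t h2.symm
    refine ⟨fun h => ?_, S.ne1 _ _ h2.symm, fun h => ?_⟩ <;> rw [h] at this
    · exact h3 (this.symm.trans t1)
    · exact h1 (this.symm.trans t2)
  have cl2 : ∀ v, (v ≠ z ∧ v ≠ y ∧ v ≠ w) → (S.t w v ≠ z ∧ S.t w v ≠ y ∧ S.t w v ≠ w) := by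
    rintro v ⟨h1, h2, h3⟩
    have := S.t_t h3.symm
    refine ⟨fun h => ?_, fun h => ?_, S.ne1 _ _ h3.symm⟩ <;> rw [h] at this
    · exact h2 (this.symm.trans t4)
    · exact h1 (this.symm.trans t3)
  obtain ⟨X, hX⟩ := exists_bicoloring (U := {v : V // v ≠ z ∧ v ≠ y ∧ v ≠ w})
    (fun v => ⟨S.t y v.1, cl1 _ v.2⟩) (fun v => ⟨S.t w v.1, cl2 _ v.2⟩)
    (fun v => Subtype.ext (S.t_t v.2.2.1.symm)) (fun v => Subtype.ext (S.t_t v.2.2.2.symm))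
    (fun v h => S.ne2 _ _ v.2.2.1.symm (congrArg Subtype.val h))
    (fun v h => S.ne2 _ _ v.2.2.2.symm (congrArg Subtype.val h))
  refine ⟨fun v => ∃ h, (⟨v, h⟩ : {v : V // v ≠ z ∧ v ≠ y ∧ v ≠ w}) ∈ X, fun v h1 h2 h3 => ?_⟩
  have hv : v ≠ z ∧ v ≠ y ∧ v ≠ w := ⟨h1, h2, h3⟩
  have := hX ⟨v, hv⟩
  have c1 := cl1 v hv
  have c2 := cl2 v hv
  constructor
  · beta_reduce; rw [exists_prop_of_true c1, exists_prop_of_true hv]; exact this.1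
  · beta_reduce; rw [exists_prop_of_true c2, exists_prop_of_true hv]; exact this.2

set_option maxHeartbeats 1000000 in
theorem eulerian [Fintype V] (hn : 13 ≤ Fintype.card V) : IsEulerian S.B.val := by
  classical
  obtain ⟨z, y, hzy⟩ := Fintype.one_lt_card_iff.1 (show 1 < Fintype.card V by omega)
  obtain ⟨P, hP⟩ := S.exists_coloring z y hzy
  have hwz : S.t z y ≠ z := S.ne1 _ _ hzy
  have hwy : S.t z y ≠ y := S.ne2 _ _ hzy
  have t1 : S.t y z = S.t z y := (S.t_comm hzy.symm)
  have t2 : S.t y (S.t z y) = z := by rw [← t1]; exact S.t_t hzy.symm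
  have t3 : S.t (S.t z y) y = z := by rw [S.t_comm hwy, t2]
  have t4 : S.t (S.t z y) z = y := by
    rw [S.t_comm hwz]; exact S.t_t hzy
  have t5 : S.t z (S.t z y) = y := S.t_t hzy
  set w := S.t z y with hw
  have cl1 : ∀ v, (v ≠ z ∧ v ≠ y ∧ v ≠ w) → (S.t y v ≠ z ∧ S.t y v ≠ y ∧ S.t y v ≠ w) := by
    rintro v ⟨h1, h2, h3⟩
    have := S.t_t h2.symm
    refine ⟨fun h => ?_, S.ne1 _ _ h2.symm, fun h => ?_⟩ <;> rw [h] at this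
    · exact h3 (this.symm.trans t1)
    · exact h1 (this.symm.trans t2)
  have cl2 : ∀ v, (v ≠ z ∧ v ≠ y ∧ v ≠ w) → (S.t w v ≠ z ∧ S.t w v ≠ y ∧ S.t w v ≠ w) := by
    rintro v ⟨h1, h2, h3⟩
    have := S.t_t h3.symm
    refine ⟨fun h => ?_, fun h => ?_, S.ne1 _ _ h3.symm⟩ <;> rw [h] at this
    · exact h2 (this.symm.trans t4)
    · exact h1 (this.symm.trans t3)
  have pick : ∀ T : Finset V, T.card < 13 → ∃ v, v ∉ T := by
    intro T hT
    by_contra hcon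
    push Not at hcon
    have := Finset.card_le_card (fun v _ => hcon v : (Finset.univ : Finset V) ⊆ T)
    rw [Finset.card_univ] at this
    omega
  -- the point x0
  obtain ⟨x, hxU, hxP⟩ : ∃ x, (x ≠ z ∧ x ≠ y ∧ x ≠ w) ∧ P x := by
    obtain ⟨v, hv⟩ := pick {z, y, w} (Finset.card_le_three.trans_lt (by norm_num))
    simp only [Finset.mem_insert, Finset.mem_singleton, not_or] at hv
    by_cases h : P v
    · exact ⟨v, hv, h⟩
    · exact ⟨S.t y v, cl1 v hv, ((hP v hv.1 hv.2.1 hv.2.2).1).2 h⟩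
  obtain ⟨x', hxU', hxP', hx1, hx2, hx3⟩ : ∃ x', (x' ≠ z ∧ x' ≠ y ∧ x' ≠ w) ∧ ¬ P x' ∧
      x' ≠ S.t y x ∧ x' ≠ S.t w x ∧ x' ≠ S.t z x := by
    obtain ⟨v, hv⟩ := pick ({z, y, w} ∪ {S.t y x, S.t w x, S.t z x} ∪
        {x, S.t y (S.t w x), S.t y (S.t z x)}) (by
      have h1 := Finset.card_union_le ({z, y, w} ∪ {S.t y x, S.t w x, S.t z x})
        {x, S.t y (S.t w x), S.t y (S.t z x)}
      have h2 := Finset.card_union_le {z, y, w} {S.t y x, S.t w x, S.t z x}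
      have h3 : ({z, y, w} : Finset V).card ≤ 3 := Finset.card_le_three
      have h4 : ({S.t y x, S.t w x, S.t z x} : Finset V).card ≤ 3 := Finset.card_le_three
      have h5 : ({x, S.t y (S.t w x), S.t y (S.t z x)} : Finset V).card ≤ 3 :=
        Finset.card_le_three
      omega)
    simp only [Finset.mem_union, Finset.mem_insert, Finset.mem_singleton, not_or] at hv
    obtain ⟨⟨hv, k1, k2, k3⟩, k4, k5, k6⟩ := hv
    by_cases h : P v
    · refine ⟨S.t y v, cl1 v hv, ?_, ?_, ?_, ?_⟩
      · rw [(hP v hv.1 hv.2.1 hv.2.2).1]; simpa using h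
      all_goals
        intro e
        have := S.t_t (Ne.symm hv.2.1)
        rw [e] at this
      · rw [S.t_t hxU.2.1.symm] at this; exact k4 this.symm
      · exact k5 this.symm
      · exact k6 this.symm
    · exact ⟨v, hv, h, k1, k2, k3⟩
  have hxx : x ≠ x' := by rintro rfl; exact hxP' hxP
  set D0 := S.blk x x' with hD0
  have hDB : D0 ∈ S.B := S.blk_mem hxx
  have hzD : z ∉ D0 := S.not_mem_blk hxU.1 hxx hxU'.1 (by rwa [S.t_comm hxU.1])
  have hyD : y ∉ D0 := S.not_mem_blk hxU.2.1 hxx hxU'.2.1 (by rwa [S.t_comm hxU.2.1])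
  have hwD : w ∉ D0 := S.not_mem_blk hxU.2.2 hxx hxU'.2.2 (by rwa [S.t_comm hxU.2.2])
  have hD3 : D0.card ≤ 3 := Finset.card_le_three
  have hzw : ∀ b ∈ S.B, z ∉ b → ¬ (y ∈ b ∧ w ∈ b) := by
    rintro b hb hz ⟨h1, h2⟩
    apply hz
    rw [S.eq_blk hb h1 h2 hwy.symm, ← t2]
    exact S.t_mem _ _
  -- initial selection
  have ex0 : ∀ b, ∃ e, b ∈ S.B → e ∈ b ∧ (b = D0 → e = S.t x x') ∧
      (y ∈ b → z ∉ b → (e ≠ z ∧ e ≠ y ∧ e ≠ w) ∧ ¬ P e) ∧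
      (w ∈ b → z ∉ b → (e ≠ z ∧ e ≠ y ∧ e ≠ w) ∧ P e) := by
    intro b
    by_cases hb : b ∈ S.B
    swap
    · exact ⟨z, fun h => (hb h).elim⟩
    by_cases hbD : b = D0
    · refine ⟨S.t x x', fun _ => ?_⟩
      rw [hbD]
      exact ⟨S.t_mem _ _, fun _ => rfl, fun h => (hyD h).elim, fun h => (hwD h).elim⟩
    by_cases hz : z ∈ b
    · exact ⟨z, fun _ => ⟨hz, fun h => (hbD h).elim, fun _ h => (h hz).elim,
        fun _ h => (h hz).elim⟩⟩
    have hyw := hzw b hb hz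
    by_cases hy : y ∈ b
    · obtain ⟨v, hv, hne⟩ := S.two b hb y hy
      have hvU : v ≠ z ∧ v ≠ y ∧ v ≠ w :=
        ⟨fun h => hz (h ▸ hv), hne.symm, fun h => hyw ⟨hy, h ▸ hv⟩⟩
      have hp := (hP v hvU.1 hvU.2.1 hvU.2.2).1
      by_cases h : P v
      · refine ⟨S.t y v, fun _ => ⟨?_, fun h => (hbD h).elim, fun _ _ => ⟨cl1 v hvU, fun hh => hp.1 hh h⟩,
          fun h' => (hyw ⟨hy, h'⟩).elim⟩⟩
        rw [S.eq_blk hb hy hv hne]; exact S.t_mem _ _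
      · exact ⟨v, fun _ => ⟨hv, fun h => (hbD h).elim, fun _ _ => ⟨hvU, h⟩,
          fun h' => (hyw ⟨hy, h'⟩).elim⟩⟩
    by_cases hw' : w ∈ b
    · obtain ⟨v, hv, hne⟩ := S.two b hb w hw'
      have hvU : v ≠ z ∧ v ≠ y ∧ v ≠ w :=
        ⟨fun h => hz (h ▸ hv), fun h => hyw ⟨h ▸ hv, hw'⟩, hne.symm⟩
      have hp := (hP v hvU.1 hvU.2.1 hvU.2.2).2
      by_cases h : P v
      · exact ⟨v, fun _ => ⟨hv, fun h => (hbD h).elim, fun h' => (hyw ⟨h', hw'⟩).elim,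
          fun _ _ => ⟨hvU, h⟩⟩⟩
      · refine ⟨S.t w v, fun _ => ⟨?_, fun h => (hbD h).elim, fun h' => (hyw ⟨h', hw'⟩).elim,
          fun _ _ => ⟨cl2 v hvU, hp.2 h⟩⟩⟩
        rw [S.eq_blk hb hw' hv hne]; exact S.t_mem _ _
    · obtain ⟨v, hv⟩ := S.non b hb
      exact ⟨v, fun _ => ⟨hv, fun h => (hbD h).elim, fun h => (hy h).elim, fun h => (hw' h).elim⟩⟩
  choose f0 hf0 using ex0
  have zy : ∀ v, (v ≠ z ∧ v ≠ y ∧ v ≠ w) → z ∉ S.blk y v := fun v hv =>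
    S.not_mem_blk hzy.symm hv.2.1.symm hv.1 (by rw [t1]; exact hv.2.2)
  have zw : ∀ v, (v ≠ z ∧ v ≠ y ∧ v ≠ w) → z ∉ S.blk w v := fun v hv =>
    S.not_mem_blk hwz hv.2.2.symm hv.1 (by rw [t4]; exact hv.2.1)
  have f0y : ∀ v, (v ≠ z ∧ v ≠ y ∧ v ≠ w) → P v → f0 (S.blk y v) = S.t y v := by
    intro v hv hp
    obtain ⟨h1, -, h2, -⟩ := hf0 _ (S.blk_mem hv.2.1.symm)
    obtain ⟨h3, h4⟩ := h2 (S.left_mem _ _) (zy v hv)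
    rw [mem_blk] at h1
    rcases h1 with h1 | h1 | h1
    · exact (h3.2.1 h1).elim
    · rw [h1] at h4; exact (h4 hp).elim
    · exact h1
  have f0w : ∀ v, (v ≠ z ∧ v ≠ y ∧ v ≠ w) → ¬ P v → f0 (S.blk w v) = S.t w v := by
    intro v hv hp
    obtain ⟨h1, -, -, h2⟩ := hf0 _ (S.blk_mem hv.2.2.symm)
    obtain ⟨h3, h4⟩ := h2 (S.left_mem _ _) (zw v hv)
    rw [mem_blk] at h1
    rcases h1 with h1 | h1 | h1
    · exact (h3.2.2 h1).elim
    · rw [h1] at h4; exact (hp h4).elim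
    · exact h1
  have f0D : f0 D0 = S.t x x' := (hf0 D0 hDB).2.1 rfl
  -- make one of y, w odd
  obtain ⟨f1, f1m, f1D, f1x, f1y, f1w, f1o⟩ : ∃ f1 : Finset V → V, (∀ b ∈ S.B, f1 b ∈ b) ∧
      f1 D0 = S.t x x' ∧ f1 (S.blk y x) = S.t y x ∧
      (∀ v, (v ≠ z ∧ v ≠ y ∧ v ≠ w) → P v → f1 (S.blk y v) = S.t y v ∨ f1 (S.blk y v) = y) ∧
      (∀ v, (v ≠ z ∧ v ≠ y ∧ v ≠ w) → ¬ P v → f1 (S.blk w v) = S.t w v) ∧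
      (S.D z f1 y = 1 ∨ S.D z f1 w = 1) := by
    by_cases hodd : S.D z f0 y = 1 ∨ S.D z f0 w = 1
    · exact ⟨f0, fun b hb => (hf0 b hb).1, f0D, f0y x hxU hxP, fun v hv hp => Or.inl (f0y v hv hp),
        f0w, hodd⟩
    have hy0 : S.D z f0 y = 0 := (zmod_cases _).resolve_right fun h => hodd (Or.inl h)
    have hcU := cl1 x' hxU'
    have hcP : P (S.t y x') := (hP x' hxU'.1 hxU'.2.1 hxU'.2.2).1.2 hxP'
    have hyx' : y ≠ x' := hxU'.2.1.symm
    have hfc : f0 (S.blk y x') = x' := by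
      have := f0y _ hcU hcP
      rwa [S.blk_t hyx', S.t_t hyx'] at this
    obtain ⟨f1, g1, g2, g3, g4⟩ := S.toggle z f0 (fun b hb => (hf0 b hb).1) hyx' (zy x' hxU')
      (Or.inr hfc)
    refine ⟨f1, g1, ?_, ?_, ?_, ?_, Or.inl ?_⟩
    · rw [g2 D0, f0D]
      intro h; apply hyD; rw [h]; exact S.left_mem _ _
    · rw [g2, f0y x hxU hxP]
      intro h
      have : x' ∈ S.blk y x := by rw [h]; exact S.right_mem _ _
      rw [mem_blk] at this
      rcases this with h | h | h
      · exact hyx' h.symm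
      · exact hxx h.symm
      · exact hx1 h
    · intro v hv hp
      by_cases h : S.blk y v = S.blk y x'
      · have hx'v : x' = S.t y v := by
          have : x' ∈ S.blk y v := by rw [h]; exact S.right_mem _ _
          rw [mem_blk] at this
          rcases this with h | h | h
          · exact (hyx' h.symm).elim
          · rw [h] at hxP'; exact (hxP' hp).elim
          · exact h
        rw [h, ← hx'v]; exact g3.symm
      · left; rw [g2 _ h, f0y v hv hp]
    · intro v hv hp
      rw [g2, f0w v hv hp]
      intro h
      refine hzw _ (S.blk_mem hv.2.2.symm) (zw v hv) ⟨?_, S.left_mem _ _⟩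
      rw [h]; exact S.left_mem _ _
    · rw [g4, hy0]; simp
  obtain ⟨f, fm, fag, fbad⟩ := S.repair hn z y hzy D0 hDB hzD hD3 _ f1 f1m le_rfl
  have fy : S.D z f y = S.D z f1 y := S.D_congr z _ _ _ fun b hb _ h => fag b hb (Or.inl h)
  have fw : S.D z f w = S.D z f1 w := S.D_congr z _ _ _ fun b hb _ h => fag b hb (Or.inr (Or.inl h))
  have good : ∀ v, v ≠ z → S.D z f v = 1 ∨ S.D z f (S.t z v) = 1 := by
    intro v hv
    by_cases h1 : v = y
    · rw [h1, ← hw, fy, fw]; exact f1o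
    by_cases h2 : v = w
    · rw [h2, t5, fy, fw]; exact f1o.symm
    by_contra hcon
    have q1 := zmod_cases (S.D z f v)
    have q2 := zmod_cases (S.D z f (S.t z v))
    have : v ∈ S.bad z y f := by
      simp only [bad, Finset.mem_filter]
      exact ⟨Finset.mem_univ _, ⟨hv, h1, h2⟩, q1.resolve_right fun h => hcon (Or.inl h),
        q2.resolve_right fun h => hcon (Or.inr h)⟩
    rw [fbad] at this
    simp at this
  have e11 : (1 : ZMod 2) + 1 = 0 := by decide
  have exh : ∀ b, ∃ e, b ∈ S.B → e ∈ b ∧ (z ∉ b → e = f b) ∧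
      (z ∈ b → ∀ v ∈ b, v ≠ z → S.D z f v + (if e ≠ v then 1 else 0) = 0) := by
    intro b
    by_cases hb : b ∈ S.B
    swap
    · exact ⟨z, fun h => (hb h).elim⟩
    by_cases hz : z ∈ b
    swap
    · exact ⟨f b, fun _ => ⟨fm b hb, fun _ => rfl, fun h => (hz h).elim⟩⟩
    obtain ⟨v, hv, hne⟩ := S.two b hb z hz
    have e := S.eq_blk hb hz hv hne
    have n1 := S.ne1 z v hne
    have n2 := S.ne2 z v hne
    have q1 := zmod_cases (S.D z f v)
    have q2 := zmod_cases (S.D z f (S.t z v))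
    have q3 := good v hne.symm
    have m1 := S.t_mem z v
    rw [← e] at m1
    have hall : ∀ u ∈ b, u ≠ z → u = v ∨ u = S.t z v := by
      intro u hu hu'
      rw [e, mem_blk] at hu
      exact hu.resolve_left hu'
    by_cases c1 : S.D z f v = 1
    · by_cases c2 : S.D z f (S.t z v) = 1
      · refine ⟨z, fun _ => ⟨hz, fun h => (h hz).elim, fun _ u hu hu' => ?_⟩⟩
        rcases hall u hu hu' with rfl | rfl
        · rw [c1, if_pos hne, e11]
        · rw [c2, if_pos n1.symm, e11]
      · refine ⟨S.t z v, fun _ => ⟨m1, fun h => (h hz).elim, fun _ u hu hu' => ?_⟩⟩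
        rcases hall u hu hu' with rfl | rfl
        · rw [c1, if_pos n2, e11]
        · rw [if_neg (by simp), add_zero]; exact q2.resolve_right c2
    · refine ⟨v, fun _ => ⟨hv, fun h => (h hz).elim, fun _ u hu hu' => ?_⟩⟩
      rcases hall u hu hu' with rfl | rfl
      · rw [if_neg (by simp), add_zero]; exact q1.resolve_right c1
      · have : S.D z f (S.t z v) = 1 := q3.resolve_left c1
        rw [this, if_pos n2.symm, e11]
  choose h hh using exh
  have hm : ∀ b ∈ S.B, h b ∈ b := fun b hb => (hh b hb).1
  have hf : ∀ b ∈ S.B, z ∉ b → h b = f b := fun b hb => (hh b hb).2.1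
  have hev : ∀ v, v ≠ z → Even ((S.gr h).degree v) := by
    intro v hv
    rw [← ZMod.natCast_eq_zero_iff_even, S.degree_cast z hm v hv,
      S.D_congr z h f v (fun b hb hz _ => hf b hb hz)]
    exact (hh _ (S.blk_mem hv.symm)).2.2 (S.left_mem _ _) v (S.right_mem _ _) hv
  have hev' : ∀ v, Even ((S.gr h).degree v) := by
    intro v
    by_cases hv : v = z
    swap
    · exact hev v hv
    subst hv
    by_contra hodd
    have h1 := (S.gr h).even_card_odd_degree_vertices
    have h2 : (Finset.univ.filter fun u => Odd ((S.gr h).degree u)) = {v} := by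
      ext u
      simp only [Finset.mem_filter, Finset.mem_univ, true_and, Finset.mem_singleton]
      constructor
      · intro ho
        by_contra hne
        exact (Nat.not_even_iff_odd.2 ho) (hev u hne)
      · rintro rfl; exact Nat.not_even_iff_odd.1 hodd
    have h3 : Even (Finset.univ.filter fun u => Odd ((S.gr h).degree u)).card := by
      convert h1
    rw [h2] at h3
    simp at h3
  have adjD : (S.gr h).Adj x x' := by
    refine ⟨hxx, ?_⟩
    rw [← hD0, hf D0 hDB hzD, fag D0 hDB (Or.inr (Or.inr rfl)), f1D]
  have hfy : ∀ v, (v ≠ z ∧ v ≠ y ∧ v ≠ w) → h (S.blk y v) = f1 (S.blk y v) := fun v hv => by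
    have hb := S.blk_mem hv.2.1.symm
    rw [hf _ hb (zy v hv), fag _ hb (Or.inl (S.left_mem _ _))]
  have adjy : (S.gr h).Adj y x := ⟨hxU.2.1.symm, by rw [hfy x hxU, f1x]⟩
  have adjw : ∀ v, (v ≠ z ∧ v ≠ y ∧ v ≠ w) → ¬ P v → (S.gr h).Adj w v := fun v hv hp => by
    have hb := S.blk_mem hv.2.2.symm
    exact ⟨hv.2.2.symm, by
      rw [hf _ hb (zw v hv), fag _ hb (Or.inr (Or.inl (S.left_mem _ _))), f1w v hv hp]⟩
  have rwy : (S.gr h).Reachable w y :=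
    (adjw x' hxU' hxP').reachable.trans (adjD.symm.reachable.trans adjy.symm.reachable)
  have rall : ∀ v, v ≠ z → (S.gr h).Reachable w v := by
    intro v hz
    by_cases h1 : v = y
    · rw [h1]; exact rwy
    by_cases h2 : v = w
    · rw [h2]
    have hv : v ≠ z ∧ v ≠ y ∧ v ≠ w := ⟨hz, h1, h2⟩
    by_cases hp : P v
    swap
    · exact (adjw v hv hp).reachable
    have hyv : y ≠ v := Ne.symm h1
    rcases f1y v hv hp with hq | hq
    · have : (S.gr h).Adj y v := ⟨hyv, by rw [hfy v hv, hq]⟩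
      exact rwy.trans this.reachable
    · have hb := S.blk_mem hyv
      have hne := (S.ne2 _ _ hyv).symm
      have hbe := S.eq_blk hb (S.right_mem _ _) (S.t_mem _ _) hne
      have : (S.gr h).Adj v (S.t y v) := by
        refine ⟨hne, ?_⟩
        rw [← hbe, hfy v hv, hq]
        exact (S.t_eq hb (S.right_mem _ _) (S.t_mem _ _) (S.left_mem _ _) hne hyv
          (S.ne1 _ _ hyv).symm).symm
      refine (adjw _ (cl1 v hv) ?_).reachable.trans this.symm.reachable
      rw [(hP v hv.1 hv.2.1 hv.2.2).1]; simpa using hp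
  refine S.eulerian_of hm w hev' fun a b hab => ?_
  by_cases ha : a = z
  · have hb : b ≠ z := by rw [← ha]; exact hab.1.symm
    exact (rall b hb).trans hab.symm.reachable
  · exact rall a ha

end Stq

/-- Every Steiner triple system of order `n ≥ 13` is eulerian. -/
theorem steinerTripleSystem_eulerian_of_card_ge_13 {V : Type} [Fintype V] [DecidableEq V]
    (hord : 13 ≤ Fintype.card V) (E : Multiset (Finset V))
    (hH : IsTripleSystem E 1) :
    IsEulerian E := by
  obtain ⟨S, rfl⟩ := exists_stq E hH
  exact S.eulerian hord
end
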